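/- arXiv:2505.14550 — 4 statements merged into one kernel-verified Lean document; each statement's English description precedes it below -/
import Mathlib

section
/- Step (ii) of the proof of the main theorem (vanishing of the Laplace transform): for every u in D(G), every x in E and every λ > 0, the function t ↦ 𝔄⁺Q(x,t) is Lebesgue integrable on (0,∞) against e^{−λt} dt, and ∫₀^∞ e^{−λt} 𝔄⁺Q(x,t) dt = 0. -/
open MeasureTheory Set Filter Topology
open scoped ZeroAtInfty

/-- The candidate solution `Q(t) = E^x[u(M_{D_t})]`. -/
noncomputable def cand {E : Type*} [TopologicalSpace E]
    (P : ℝ → C₀(E, ℝ) →L[ℝ] C₀(E, ℝ)) (ν : Measure ℝ) (uφ : ℝ → ℝ)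
    (u : C₀(E, ℝ)) (t : ℝ) : C₀(E, ℝ) :=
  if t = 0 then u
  else ∫ h in Set.Ioo 0 t, uφ h • (∫ r in Set.Ioi (t - h), P (r + h) u ∂ν)

/-- The coupled space-time nonlocal operator `𝔄⁺`, applied pointwise to a curve
`F : [0,∞) → C₀(E)`:  `𝔄⁺F(x,t) = ∫₀^∞ ((P_s F((t-s)∨0))(x) - F(t)(x)) ν(ds)`. -/
noncomputable def Aop {E : Type*} [TopologicalSpace E]
    (P : ℝ → C₀(E, ℝ) →L[ℝ] C₀(E, ℝ)) (ν : Measure ℝ)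
    (F : ℝ → C₀(E, ℝ)) (x : E) (t : ℝ) : ℝ :=
  ∫ s in Set.Ioi (0 : ℝ), ((P s (F (max (t - s) 0))) x - (F t) x) ∂ν

namespace Ctrw

/-- the region where `τ` is straddled by the jump from `p.1` to `p.1 + p.2`. -/
def Bs (τ : ℝ) : Set (ℝ × ℝ) := {p | p.1 < τ ∧ τ < p.1 + p.2}

lemma measurableSet_Bs (τ : ℝ) : MeasurableSet (Bs τ) := by
  apply MeasurableSet.inter
  · exact measurableSet_lt measurable_fst measurable_const
  · exact measurableSet_lt measurable_const (measurable_fst.add measurable_snd)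

set_option linter.unusedSectionVars false

variable {U ν : Measure ℝ} [SFinite U] [SFinite ν]

lemma prod_Bs_pos (hR : ∀ z : ℝ, 0 < z → ∫⁻ h in Iio z, ν (Ioi (z - h)) ∂U = 1)
    {τ : ℝ} (hτ : 0 < τ) : (U.prod ν) (Bs τ) = 1 := by
  rw [Measure.prod_apply (measurableSet_Bs τ), ← hR τ hτ, ← lintegral_indicator measurableSet_Iio]
  congr 1
  ext h
  by_cases hh : h < τ
  · rw [indicator_of_mem (by exact hh)]
    congr 1
    ext r
    simp only [Bs, mem_preimage, mem_ofPred_eq, mem_Ioi]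
    constructor
    · rintro ⟨_, h2⟩; linarith
    · intro h2; exact ⟨hh, by linarith⟩
  · rw [indicator_of_notMem (by exact hh)]
    convert measure_empty (μ := ν)
    ext r
    simp [Bs, hh]

lemma prod_Bs_nonpos (hU0 : ∀ᵐ h ∂U, 0 < h)
    {τ : ℝ} (hτ : τ ≤ 0) : (U.prod ν) (Bs τ) = 0 := by
  rw [Measure.prod_apply (measurableSet_Bs τ)]
  apply (lintegral_eq_zero_iff (measurable_measure_prodMk_left (measurableSet_Bs τ))).2
  filter_upwards [hU0] with h hh
  rw [Pi.zero_apply]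
  convert measure_empty (μ := ν)
  ext r
  simp only [Bs, mem_preimage, mem_ofPred_eq, mem_empty_iff_false, iff_false]
  intro h; linarith [h.1]

lemma prod_Bs_real (hU0 : ∀ᵐ h ∂U, 0 < h)
    (hR : ∀ z : ℝ, 0 < z → ∫⁻ h in Iio z, ν (Ioi (z - h)) ∂U = 1) (τ : ℝ) :
    (U.prod ν) (Bs τ) = (Ioi (0:ℝ)).indicator 1 τ := by
  by_cases h : 0 < τ
  · rw [prod_Bs_pos hR h, indicator_of_mem (by exact h)]; rfl
  · rw [prod_Bs_nonpos hU0 (not_lt.1 h), indicator_of_notMem (by exact h)]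

lemma measurableSet_S : MeasurableSet {q : (ℝ × ℝ) × ℝ | q.1 ∈ Bs q.2} := by
  apply MeasurableSet.inter
  · exact measurableSet_lt (measurable_fst.fst) measurable_snd
  · exact measurableSet_lt measurable_snd (measurable_fst.fst.add measurable_fst.snd)

/-- Tonelli with the renewal identity. -/
lemma lrenew (hU0 : ∀ᵐ h ∂U, 0 < h)
    (hR : ∀ z : ℝ, 0 < z → ∫⁻ h in Iio z, ν (Ioi (z - h)) ∂U = 1)
    (f : ℝ → ENNReal) (hf : Measurable f) :
    ∫⁻ p, (∫⁻ z in Ioo p.1 (p.1 + p.2), f z) ∂(U.prod ν) = ∫⁻ z in Ioi (0:ℝ), f z := by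
  set F : (ℝ × ℝ) × ℝ → ENNReal := {q : (ℝ × ℝ) × ℝ | q.1 ∈ Bs q.2}.indicator (fun q => f q.2)
    with hF
  have hFm : Measurable F := (hf.comp measurable_snd).indicator measurableSet_S
  have h1 : ∀ p : ℝ × ℝ, ∫⁻ z in Ioo p.1 (p.1 + p.2), f z = ∫⁻ z, F (p, z) := by
    intro p
    rw [← lintegral_indicator measurableSet_Ioo]
    rfl
  simp_rw [h1]
  rw [lintegral_lintegral_swap (f := fun p z => F (p, z)) hFm.aemeasurable,
    ← lintegral_indicator measurableSet_Ioi]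
  congr 1
  ext z
  have h2 : ∀ p, F (p, z) = (Bs z).indicator (fun _ => f z) p := fun p => rfl
  simp_rw [h2]
  rw [lintegral_indicator_const (measurableSet_Bs z), prod_Bs_real hU0 hR]
  by_cases h : z ∈ Ioi (0:ℝ) <;> simp [h]

lemma renewK (hU0 : ∀ᵐ h ∂U, 0 < h)
    (hR : ∀ z : ℝ, 0 < z → ∫⁻ h in Iio z, ν (Ioi (z - h)) ∂U = 1)
    (κ : ℝ → ℝ) (hκ : Measurable κ) (hi : IntegrableOn κ (Ioi 0)) :
    Integrable (fun p : ℝ × ℝ => ∫ z in Ioo p.1 (p.1 + p.2), κ z) (U.prod ν) ∧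
    ∫ p, (∫ z in Ioo p.1 (p.1 + p.2), κ z) ∂(U.prod ν) = ∫ z in Ioi (0:ℝ), κ z := by
  set F : (ℝ × ℝ) × ℝ → ℝ := {q : (ℝ × ℝ) × ℝ | q.1 ∈ Bs q.2}.indicator (fun q => κ q.2)
    with hF
  have hFm : StronglyMeasurable F :=
    ((hκ.comp measurable_snd).indicator measurableSet_S).stronglyMeasurable
  have h1 : ∀ p : ℝ × ℝ, ∫ z in Ioo p.1 (p.1 + p.2), κ z = ∫ z, F (p, z) := by
    intro p
    rw [← integral_indicator measurableSet_Ioo]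
    rfl
  have h2 : ∀ z p, F (p, z) = (Bs z).indicator (fun _ => κ z) p := fun z p => rfl
  have h3 : ∀ z, ∫ p, F (p, z) ∂(U.prod ν) = (Ioi (0:ℝ)).indicator κ z := by
    intro z
    simp_rw [h2]
    rw [integral_indicator_const _ (measurableSet_Bs z), Measure.real, prod_Bs_real hU0 hR]
    by_cases h : z ∈ Ioi (0:ℝ) <;> simp [h]
  have h3' : ∀ z, ∫ p, ‖F (p, z)‖ ∂(U.prod ν) = (Ioi (0:ℝ)).indicator (fun z => ‖κ z‖) z := by
    intro z
    simp_rw [h2, norm_indicator_eq_indicator_norm]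
    rw [integral_indicator_const _ (measurableSet_Bs z), Measure.real, prod_Bs_real hU0 hR]
    by_cases h : z ∈ Ioi (0:ℝ) <;> simp [h]
  have hFint : Integrable F ((U.prod ν).prod volume) := by
    rw [integrable_prod_iff' hFm.aestronglyMeasurable]
    constructor
    · refine Eventually.of_forall fun z => ?_
      simp_rw [h2]
      rw [integrable_indicator_iff (measurableSet_Bs z)]
      apply integrableOn_const
      · rw [prod_Bs_real hU0 hR]
        by_cases h : z ∈ Ioi (0:ℝ) <;> simp [h]
      · simp
    · simp_rw [h3']
      exact (integrable_indicator_iff measurableSet_Ioi).2 hi.norm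
  simp_rw [h1]
  refine ⟨hFint.integral_prod_left, ?_⟩
  rw [← integral_prod _ hFint, integral_prod_symm _ hFint]
  simp_rw [h3]
  rw [integral_indicator measurableSet_Ioi]

lemma lint_exp {l : ℝ} (hl : 0 < l) (a r : ℝ) (hr : 0 ≤ r) :
    ∫⁻ z in Ioo a (a + r), ENNReal.ofReal (Real.exp (-(l * z))) =
      ENNReal.ofReal (Real.exp (-(l * a)) * ((1 - Real.exp (-(l * r))) / l)) ∧
    ∫ z in Ioo a (a + r), Real.exp (-(l * z)) =
      Real.exp (-(l * a)) * ((1 - Real.exp (-(l * r))) / l) := by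
  have hc : Continuous fun z : ℝ => Real.exp (-(l * z)) := by fun_prop
  have h2 : ∫ z in Ioo a (a + r), Real.exp (-(l * z)) =
      Real.exp (-(l * a)) * ((1 - Real.exp (-(l * r))) / l) := by
    rw [← integral_Ioc_eq_integral_Ioo, ← intervalIntegral.integral_of_le (by linarith)]
    rw [intervalIntegral.integral_eq_sub_of_hasDerivAt (f := fun z => - Real.exp (-(l * z)) / l)
      (fun z _ => ?_) (hc.intervalIntegrable _ _)]
    · rw [show -(l * (a + r)) = -(l*a) + -(l*r) by ring, Real.exp_add]; field_simp; ring
    · have : HasDerivAt (fun z : ℝ => -(l * z)) (-l) z := by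
        have h := ((hasDerivAt_id z).const_mul (-l))
        simp only [id, mul_one] at h
        simpa only [neg_mul] using h
      have h3 := (this.exp.neg.div_const l)
      have h4 : -(Real.exp (-(l * z)) * -l) / l = Real.exp (-(l * z)) := by field_simp
      rw [h4] at h3
      exact h3
  refine ⟨?_, h2⟩
  rw [← h2, ofReal_integral_eq_lintegral_ofReal]
  · exact (hc.integrableOn_Icc).mono_set Ioo_subset_Icc_self
  · exact Eventually.of_forall fun z => (Real.exp_pos _).le

/-- the weight -/
noncomputable def rho (l r : ℝ) : ℝ := (1 - Real.exp (-(l * r))) / l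

lemma rho_nonneg {l : ℝ} (hl : 0 < l) {r : ℝ} (hr : 0 ≤ r) : 0 ≤ rho l r := by
  have : Real.exp (-(l * r)) ≤ 1 := Real.exp_le_one_iff.2 (by nlinarith)
  unfold rho
  apply div_nonneg <;> linarith

lemma rho_pos {l : ℝ} (hl : 0 < l) {r : ℝ} (hr : 0 < r) : 0 < rho l r := by
  have : Real.exp (-(l * r)) < 1 := by
    rw [← Real.exp_zero]; exact Real.exp_lt_exp.2 (by nlinarith)
  unfold rho
  apply div_pos <;> linarith

lemma rho_le {l : ℝ} (hl : 0 < l) {r : ℝ} (hr : 0 ≤ r) : rho l r ≤ (1 + 1/l) * min 1 r := by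
  have h1 := Real.add_one_le_exp (-(l * r))
  have h2 := Real.exp_pos (-(l * r))
  have hl' : 0 < 1 / l := by positivity
  unfold rho
  rcases le_total 1 r with h | h
  · rw [min_eq_left h, div_le_iff₀ hl]; field_simp; nlinarith
  · rw [min_eq_right h, div_le_iff₀ hl]; field_simp; nlinarith

lemma rho_cont (l : ℝ) : Continuous (rho l) := by unfold rho; fun_prop

end Ctrw

namespace Ctrw
set_option linter.unusedSectionVars false
variable {U ν : Measure ℝ} [SFinite U] [SFinite ν]

lemma ae_fst {p : ℝ → Prop} (h : ∀ᵐ x ∂U, p x) : ∀ᵐ q ∂(U.prod ν), p q.1 :=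
  Measure.quasiMeasurePreserving_fst.ae h

lemma ae_snd {p : ℝ → Prop} (h : ∀ᵐ x ∂ν, p x) : ∀ᵐ q ∂(U.prod ν), p q.2 :=
  Measure.quasiMeasurePreserving_snd.ae h

lemma int_exp_Ioi {l : ℝ} (hl : 0 < l) :
    IntegrableOn (fun z : ℝ => Real.exp (-(l * z))) (Ioi 0) ∧
    ∫⁻ z in Ioi (0:ℝ), ENNReal.ofReal (Real.exp (-(l * z))) ≠ ⊤ := by
  have h : IntegrableOn (fun z : ℝ => Real.exp (-(l * z))) (Ioi 0) := by
    simpa only [neg_mul] using integrableOn_exp_mul_Ioi (neg_lt_zero.2 hl) 0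
  refine ⟨h, ?_⟩
  have := h.lintegral_lt_top
  exact this.ne

lemma laplaceU (hU0 : ∀ᵐ h ∂U, 0 < h) (hν0 : ∀ᵐ r ∂ν, 0 < r) (hνne : ν ≠ 0)
    (hR : ∀ z : ℝ, 0 < z → ∫⁻ h in Iio z, ν (Ioi (z - h)) ∂U = 1) {l : ℝ} (hl : 0 < l) :
    ∫⁻ h, ENNReal.ofReal (Real.exp (-(l * h))) ∂U ≠ ⊤ := by
  have h1 := lrenew hU0 hR (fun z => ENNReal.ofReal (Real.exp (-(l * z)))) (by fun_prop)
  have h2 : ∫⁻ p, (∫⁻ z in Ioo p.1 (p.1 + p.2), ENNReal.ofReal (Real.exp (-(l * z)))) ∂(U.prod ν)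
      = ∫⁻ p, ENNReal.ofReal (Real.exp (-(l * p.1))) * ENNReal.ofReal (rho l p.2) ∂(U.prod ν) := by
    apply lintegral_congr_ae
    filter_upwards [ae_snd hν0] with p hp
    rw [(lint_exp hl p.1 p.2 hp.le).1, ENNReal.ofReal_mul (Real.exp_pos _).le]
    rfl
  have hrm : Measurable fun r => ENNReal.ofReal (rho l r) := (rho_cont l).measurable.ennreal_ofReal
  rw [h2, lintegral_prod_mul (f := fun h => ENNReal.ofReal (Real.exp (-(l * h))))
    (g := fun r => ENNReal.ofReal (rho l r)) (by fun_prop) hrm.aemeasurable] at h1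
  intro htop
  rw [htop, ENNReal.top_mul] at h1
  · exact (int_exp_Ioi hl).2 h1.symm
  · intro h0
    rw [lintegral_eq_zero_iff hrm] at h0
    apply hνne
    rw [← ae_eq_bot]
    apply Filter.empty_mem_iff_bot.1
    filter_upwards [h0, hν0] with r h1 h2
    simp only [Pi.zero_apply, ENNReal.ofReal_eq_zero] at h1
    exact absurd (rho_pos hl h2) (not_lt.2 h1)

lemma rho_integrable (hν0 : ∀ᵐ r ∂ν, 0 < r)
    (hν1 : ∫⁻ s, ENNReal.ofReal (min 1 s) ∂ν ≠ ⊤) {l : ℝ} (hl : 0 < l) :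
    Integrable (rho l) ν := by
  have h1 : Integrable (fun s => min 1 s) ν := by
    refine ⟨by fun_prop, ?_⟩
    rw [hasFiniteIntegral_iff_ofReal]
    · exact hν1.lt_top
    · filter_upwards [hν0] with r hr
      exact le_min zero_le_one hr.le
  refine (h1.const_mul (1 + 1/l)).mono' (rho_cont l).aestronglyMeasurable ?_
  filter_upwards [hν0] with r hr
  rw [Real.norm_of_nonneg (rho_nonneg hl hr.le)]
  exact rho_le hl hr.le

/-- expectation of `g` at the overshoot, shifted by `s`. -/
noncomputable def qf (U ν : Measure ℝ) (g : ℝ → ℝ) (τ s : ℝ) : ℝ :=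
  if τ ≤ 0 then g s else ∫ p in Bs τ, g (p.1 + p.2 + s) ∂(U.prod ν)

/-- regularity package -/
structure Reg (g g' : ℝ → ℝ) (L K : ℝ) : Prop where
  d : ∀ y, HasDerivAt g (g' y) y
  c : Continuous g'
  hL : ∀ y, |g' y| ≤ L
  hK : ∀ y, 0 ≤ y → |g y| ≤ K

namespace Reg
variable {g g' : ℝ → ℝ} {L K : ℝ}

lemma cont (H : Reg g g' L K) : Continuous g :=
  continuous_iff_continuousAt.2 fun y => (H.d y).continuousAt

lemma L0 (H : Reg g g' L K) : 0 ≤ L := (abs_nonneg _).trans (H.hL 0)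
lemma K0 (H : Reg g g' L K) : 0 ≤ K := (abs_nonneg _).trans (H.hK 0 le_rfl)

lemma lip (H : Reg g g' L K) (a b : ℝ) : |g b - g a| ≤ L * |b - a| := by
  have := convex_univ.norm_image_sub_le_of_norm_hasDerivWithin_le
    (f := g) (f' := g') (C := L) (x := a) (y := b) (fun y _ => (H.d y).hasDerivWithinAt)
    (fun y _ => H.hL y) (mem_univ a) (mem_univ b)
  simpa using this

lemma lip2 (H : Reg g g' L K) {a b : ℝ} (ha : 0 ≤ a) (hab : a ≤ b) :
    |g b - g a| ≤ (L + 2 * K) * min 1 (b - a) := by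
  have h1 := H.lip a b
  have h2 : |g b - g a| ≤ K + K := (abs_sub _ _).trans (add_le_add (H.hK b (ha.trans hab)) (H.hK a ha))
  have h3 := H.L0
  have h4 := H.K0
  rw [abs_of_nonneg (sub_nonneg.2 hab)] at h1
  rcases le_total 1 (b - a) with h | h
  · rw [min_eq_left h]; linarith
  · rw [min_eq_right h]; nlinarith [mul_nonneg h4 (sub_nonneg.2 hab)]

lemma ftc (H : Reg g g' L K) {a b s : ℝ} (hab : a ≤ b) :
    ∫ z in Ioo a b, g' (z + s) = g (b + s) - g (a + s) := by
  have hc := H.c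
  rw [← integral_Ioc_eq_integral_Ioo, ← intervalIntegral.integral_of_le hab]
  rw [intervalIntegral.integral_eq_sub_of_hasDerivAt (f := fun z => g (z + s))
      (fun z _ => ?_) ((by fun_prop : Continuous fun z => g' (z + s)).intervalIntegrable _ _)]
  exact (H.d (z + s)).comp_add_const z s

end Reg

variable {g g' : ℝ → ℝ} {L K : ℝ}

lemma intOn_Bs (hU0 : ∀ᵐ h ∂U, 0 < h) (hν0 : ∀ᵐ r ∂ν, 0 < r)
    (hR : ∀ z : ℝ, 0 < z → ∫⁻ h in Iio z, ν (Ioi (z - h)) ∂U = 1)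
    (H : Reg g g' L K) {τ s : ℝ} (hτ : 0 < τ) (hs : 0 ≤ s) :
    IntegrableOn (fun p : ℝ × ℝ => g (p.1 + p.2 + s)) (Bs τ) (U.prod ν) ∧
    ∀ᵐ p ∂((U.prod ν).restrict (Bs τ)), ‖g (p.1 + p.2 + s)‖ ≤ K := by
  have hc := H.cont
  have hb : ∀ᵐ p ∂((U.prod ν).restrict (Bs τ)), ‖g (p.1 + p.2 + s)‖ ≤ K := by
    filter_upwards [ae_restrict_of_ae (ae_fst hU0), ae_restrict_of_ae (ae_snd hν0)] with p h1 h2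
    exact H.hK _ (by linarith)
  refine ⟨?_, hb⟩
  have : IsFiniteMeasure ((U.prod ν).restrict (Bs τ)) :=
    ⟨by rw [Measure.restrict_apply_univ, prod_Bs_pos hR hτ]; simp⟩
  exact Integrable.of_bound (by fun_prop) K hb

lemma qf_bound (hU0 : ∀ᵐ h ∂U, 0 < h) (hν0 : ∀ᵐ r ∂ν, 0 < r)
    (hR : ∀ z : ℝ, 0 < z → ∫⁻ h in Iio z, ν (Ioi (z - h)) ∂U = 1)
    (H : Reg g g' L K) (τ : ℝ) {s : ℝ} (hs : 0 ≤ s) : |qf U ν g τ s| ≤ K := by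
  unfold qf
  split_ifs with h
  · exact H.hK s hs
  · have hτ : 0 < τ := not_le.1 h
    have : IsFiniteMeasure ((U.prod ν).restrict (Bs τ)) :=
      ⟨by rw [Measure.restrict_apply_univ, prod_Bs_pos hR hτ]; simp⟩
    have := norm_integral_le_of_norm_le_const (intOn_Bs hU0 hν0 hR H hτ hs).2
    simpa [Measure.real, prod_Bs_pos hR hτ] using this

lemma qf_lip (hU0 : ∀ᵐ h ∂U, 0 < h) (hν0 : ∀ᵐ r ∂ν, 0 < r)
    (hR : ∀ z : ℝ, 0 < z → ∫⁻ h in Iio z, ν (Ioi (z - h)) ∂U = 1)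
    (H : Reg g g' L K) {τ s : ℝ} (hτ : 0 < τ) (hs : 0 ≤ s) :
    |qf U ν g τ s - qf U ν g τ 0| ≤ L * s := by
  unfold qf
  rw [if_neg (not_le.2 hτ), if_neg (not_le.2 hτ),
    ← integral_sub (intOn_Bs hU0 hν0 hR H hτ hs).1 (intOn_Bs hU0 hν0 hR H hτ le_rfl).1]
  have : IsFiniteMeasure ((U.prod ν).restrict (Bs τ)) :=
    ⟨by rw [Measure.restrict_apply_univ, prod_Bs_pos hR hτ]; simp⟩
  have := norm_integral_le_of_norm_le_const (μ := (U.prod ν).restrict (Bs τ)) (C := L * s)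
    (f := fun p : ℝ × ℝ => g (p.1 + p.2 + s) - g (p.1 + p.2 + 0))
    (Eventually.of_forall fun p => by
      have := H.lip (p.1 + p.2 + 0) (p.1 + p.2 + s)
      rw [show p.1 + p.2 + s - (p.1 + p.2 + 0) = s by ring, abs_of_nonneg hs] at this
      exact this)
  simpa [Measure.real, prod_Bs_pos hR hτ] using this

/-- Dynkin formula. -/
lemma dynkin (hU0 : ∀ᵐ h ∂U, 0 < h) (hν0 : ∀ᵐ r ∂ν, 0 < r)
    (hR : ∀ z : ℝ, 0 < z → ∫⁻ h in Iio z, ν (Ioi (z - h)) ∂U = 1)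
    (H : Reg g g' L K) (τ : ℝ) {s : ℝ} (hs : 0 ≤ s) :
    Integrable (fun p : ℝ × ℝ => if p.1 < τ then g (p.1 + p.2 + s) - g (p.1 + s) else 0)
      (U.prod ν) ∧
    ∫ p, (if p.1 < τ then g (p.1 + p.2 + s) - g (p.1 + s) else 0) ∂(U.prod ν)
      = qf U ν g τ s - g s := by
  rcases le_or_gt τ 0 with hτ | hτ
  · have : (fun p : ℝ × ℝ => if p.1 < τ then g (p.1 + p.2 + s) - g (p.1 + s) else 0)
      =ᵐ[U.prod ν] 0 := by
      filter_upwards [ae_fst hU0] with p hp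
      rw [if_neg (by linarith)]; rfl
    refine ⟨(integrable_congr this).2 (integrable_zero _ _ _), ?_⟩
    rw [integral_congr_ae this]
    simp [qf, hτ]
  have hc := H.c
  have hgc := H.cont
  set κ : ℝ → ℝ := (Iio τ).indicator (fun z => g' (z + s)) with hκ
  have hκm : Measurable κ :=
    (by fun_prop : Continuous fun z => g' (z + s)).measurable.indicator measurableSet_Iio
  have hκi : IntegrableOn κ (Ioi 0) := by
    rw [IntegrableOn, hκ, integrable_indicator_iff measurableSet_Iio, IntegrableOn,
      Measure.restrict_restrict measurableSet_Iio]
    exact ((by fun_prop : Continuous fun z => g' (z + s)).integrableOn_Icc (a := 0) (b := τ)).mono_set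
      (fun z hz => ⟨(hz.2 : 0 < z).le, (hz.1 : z < τ).le⟩)
  have hκint : ∫ z in Ioi (0:ℝ), κ z = g (τ + s) - g s := by
    rw [hκ, integral_indicator measurableSet_Iio, Measure.restrict_restrict measurableSet_Iio,
      inter_comm, Ioi_inter_Iio, H.ftc hτ.le, zero_add]
  obtain ⟨k1, k2⟩ := renewK (U := U) (ν := ν) hU0 hR κ hκm hκi
  have b1 := (intOn_Bs hU0 hν0 hR H hτ hs).1
  have b2 : IntegrableOn (fun p : ℝ × ℝ => g (τ + s)) (Bs τ) (U.prod ν) :=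
    integrableOn_const (by rw [prod_Bs_pos hR hτ]; simp)
  have b3 := b1.sub b2
  have b4 := (integrable_indicator_iff (measurableSet_Bs τ)).2 b3
  have hae : (fun p : ℝ × ℝ => if p.1 < τ then g (p.1 + p.2 + s) - g (p.1 + s) else 0)
      =ᵐ[U.prod ν] fun p => (Bs τ).indicator ((fun p : ℝ × ℝ => g (p.1 + p.2 + s)) -
        fun _ => g (τ + s)) p + ∫ z in Ioo p.1 (p.1 + p.2), κ z := by
    filter_upwards [ae_snd hν0] with p hp
    have hI : ∫ z in Ioo p.1 (p.1 + p.2), κ z = ∫ z in Ioo p.1 (min (p.1 + p.2) τ), g' (z + s) := by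
      rw [hκ, integral_indicator measurableSet_Iio, Measure.restrict_restrict measurableSet_Iio,
        inter_comm, Ioo_inter_Iio]
    rw [hI]
    by_cases h1 : p.1 < τ
    · rw [if_pos h1, H.ftc (le_min (by linarith) h1.le)]
      by_cases h2 : τ < p.1 + p.2
      · rw [indicator_of_mem (by exact ⟨h1, h2⟩), min_eq_right h2.le]
        simp
      · rw [indicator_of_notMem (by exact fun h => h2 h.2), min_eq_left (not_lt.1 h2)]
        simp
    · rw [if_neg h1, indicator_of_notMem (by exact fun h => h1 h.1), Ioo_eq_empty]
      · simp
      · intro h; exact h1 (h.trans_le (min_le_right _ _))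
  refine ⟨(integrable_congr hae).2 (b4.add k1), ?_⟩
  rw [integral_congr_ae hae, integral_add b4 k1, k2, hκint,
    integral_indicator (measurableSet_Bs τ)]
  simp only [Pi.sub_apply]
  rw [integral_sub b1 b2]
  simp only [qf, if_neg (not_le.2 hτ), integral_const, Measure.real, Measure.restrict_apply_univ,
    prod_Bs_pos hR hτ]
  simp

lemma qf_diff (hU0 : ∀ᵐ h ∂U, 0 < h) (hν0 : ∀ᵐ r ∂ν, 0 < r)
    (hR : ∀ z : ℝ, 0 < z → ∫⁻ h in Iio z, ν (Ioi (z - h)) ∂U = 1)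
    (H : Reg g g' L K) {τ τ' : ℝ} (hττ : τ' ≤ τ) {s : ℝ} (hs : 0 ≤ s) :
    ‖qf U ν g τ' s - qf U ν g τ s‖ₑ ≤
      U (Ico τ' τ) * ∫⁻ r, ENNReal.ofReal ((L + 2 * K) * min 1 r) ∂ν := by
  obtain ⟨d1, d2⟩ := dynkin hU0 hν0 hR H τ hs
  obtain ⟨e1, e2⟩ := dynkin hU0 hν0 hR H τ' hs
  rw [show qf U ν g τ' s - qf U ν g τ s = (qf U ν g τ' s - g s) - (qf U ν g τ s - g s) by ring,
    ← d2, ← e2, ← integral_sub e1 d1]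
  refine (enorm_integral_le_lintegral_enorm _).trans ?_
  rw [← lintegral_indicator_one measurableSet_Ico, ← lintegral_prod_mul
    (f := (Ico τ' τ).indicator 1) (g := fun r => ENNReal.ofReal ((L + 2 * K) * min 1 r))
    ((measurable_one.indicator measurableSet_Ico).aemeasurable) (by fun_prop)]
  apply lintegral_mono_ae
  filter_upwards [ae_snd hν0, ae_fst hU0] with p hp hp1
  by_cases h1 : p.1 < τ'
  · rw [if_pos h1, if_pos (h1.trans_le hττ)]; simp
  by_cases h2 : p.1 < τ
  · rw [if_neg h1, if_pos h2, indicator_of_mem (by exact ⟨not_lt.1 h1, h2⟩)]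
    rw [zero_sub, enorm_neg, Pi.one_apply, one_mul, Real.enorm_eq_ofReal_abs]
    apply ENNReal.ofReal_le_ofReal
    have := H.lip2 (a := p.1 + s) (b := p.1 + p.2 + s) (by linarith) (by linarith)
    rwa [show p.1 + p.2 + s - (p.1 + s) = p.2 by ring] at this
  · rw [if_neg h1, if_neg h2]; simp

end Ctrw

namespace Ctrw
set_option linter.unusedSectionVars false
variable {U ν : Measure ℝ} [SFinite U] [SFinite ν]
variable {g g' : ℝ → ℝ} {L K : ℝ}

lemma qf_meas (hg : Continuous g) : Measurable (fun z : ℝ × ℝ => qf U ν g z.1 z.2) := by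
  unfold qf
  refine Measurable.ite (measurableSet_le measurable_fst measurable_const)
    (hg.measurable.comp measurable_snd) ?_
  have h1 : ∀ z : ℝ × ℝ, ∫ p in Bs z.1, g (p.1 + p.2 + z.2) ∂(U.prod ν) =
      ∫ p, {w : (ℝ × ℝ) × (ℝ × ℝ) | w.2 ∈ Bs w.1.1}.indicator
        (fun w => g (w.2.1 + w.2.2 + w.1.2)) (z, p) ∂(U.prod ν) := by
    intro z
    rw [← integral_indicator (measurableSet_Bs _)]
    rfl
  simp_rw [h1]
  apply StronglyMeasurable.measurable
  apply StronglyMeasurable.integral_prod_right'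
  apply Measurable.stronglyMeasurable
  apply Measurable.indicator (by fun_prop)
  apply MeasurableSet.inter
  · exact measurableSet_lt measurable_snd.fst measurable_fst.fst
  · exact measurableSet_lt measurable_fst.fst (measurable_snd.fst.add measurable_snd.snd)

lemma lint_shift {l : ℝ} (hl : 0 < l) (s : ℝ) :
    ∫⁻ t, ENNReal.ofReal (Real.exp (-(l * t))) * U (Ico (t - s) t) ≤
      (∫⁻ h, ENNReal.ofReal (Real.exp (-(l * h))) ∂U) * ENNReal.ofReal s := by
  set A : Set (ℝ × ℝ) := {w | w.1 - s ≤ w.2 ∧ w.2 < w.1} with hA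
  have hAm : MeasurableSet A :=
    (measurableSet_le (measurable_fst.sub_const s) measurable_snd).inter
      (measurableSet_lt measurable_snd measurable_fst)
  set F : ℝ × ℝ → ENNReal := A.indicator fun w => ENNReal.ofReal (Real.exp (-(l * w.1))) with hF
  have hFm : Measurable F := Measurable.indicator (by fun_prop) hAm
  have h1 : ∀ t, ENNReal.ofReal (Real.exp (-(l * t))) * U (Ico (t - s) t) = ∫⁻ h, F (t, h) ∂U := by
    intro t
    rw [← lintegral_indicator_const measurableSet_Ico]
    rfl
  simp_rw [h1]
  rw [lintegral_lintegral_swap (f := fun t h => F (t, h)) hFm.aemeasurable,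
    ← lintegral_mul_const _ (by fun_prop)]
  apply lintegral_mono
  intro h
  have h2 : ∀ t, F (t, h) ≤ (Ioc h (h + s)).indicator
      (fun _ => ENNReal.ofReal (Real.exp (-(l * h)))) t := by
    intro t
    by_cases ht : (t, h) ∈ A
    · have h3 : t - s ≤ h := ht.1
      have h4 : h < t := ht.2
      rw [hF, indicator_of_mem ht, indicator_of_mem (by constructor <;> linarith)]
      apply ENNReal.ofReal_le_ofReal
      apply Real.exp_le_exp.2
      dsimp only
      nlinarith
    · rw [hF, indicator_of_notMem ht]; exact zero_le
  refine (lintegral_mono h2).trans ?_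
  rw [lintegral_indicator_const measurableSet_Ioc]
  simp

/-- the integrand -/
noncomputable def Ff (U ν : Measure ℝ) (g : ℝ → ℝ) (l t s : ℝ) : ℝ :=
  Real.exp (-(l * t)) * (qf U ν g (t - s) s - qf U ν g t 0)

lemma Ff_bound (hU0 : ∀ᵐ h ∂U, 0 < h) (hν0 : ∀ᵐ r ∂ν, 0 < r) (hνne : ν ≠ 0)
    (hR : ∀ z : ℝ, 0 < z → ∫⁻ h in Iio z, ν (Ioi (z - h)) ∂U = 1)
    (hν1 : ∫⁻ s, ENNReal.ofReal (min 1 s) ∂ν ≠ ⊤)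
    (H : Reg g g' L K) {l : ℝ} (hl : 0 < l) :
    ∃ C : ENNReal, C ≠ ⊤ ∧ ∀ s, 0 < s →
      ∫⁻ t in Ioi (0:ℝ), ‖Ff U ν g l t s‖ₑ ≤ C * ENNReal.ofReal (min 1 s) := by
  have hU := laplaceU hU0 hν0 hνne hR hl
  have he := (int_exp_Ioi hl).2
  set e := ∫⁻ z in Ioi (0:ℝ), ENNReal.ofReal (Real.exp (-(l * z))) with hedef
  set u := ∫⁻ h, ENNReal.ofReal (Real.exp (-(l * h))) ∂U with hudef
  have hL0 := H.L0
  have hK0 := H.K0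
  have hc : ∫⁻ r, ENNReal.ofReal ((L + 2 * K) * min 1 r) ∂ν ≠ ⊤ := by
    simp_rw [ENNReal.ofReal_mul (show 0 ≤ L + 2 * K by positivity)]
    rw [lintegral_const_mul _ (by fun_prop)]
    exact ENNReal.mul_ne_top ENNReal.ofReal_ne_top hν1
  set c := ∫⁻ r, ENNReal.ofReal ((L + 2 * K) * min 1 r) ∂ν with hcdef
  refine ⟨u * c + e * ENNReal.ofReal L + e * ENNReal.ofReal (2 * K), ?_, ?_⟩
  · simp only [ne_eq, ENNReal.add_eq_top, not_or]
    exact ⟨⟨ENNReal.mul_ne_top hU hc, ENNReal.mul_ne_top he ENNReal.ofReal_ne_top⟩,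
      ENNReal.mul_ne_top he ENNReal.ofReal_ne_top⟩
  intro s hs
  have hnorm : ∀ t, ‖Ff U ν g l t s‖ₑ = ENNReal.ofReal (Real.exp (-(l * t))) *
      ‖qf U ν g (t - s) s - qf U ν g t 0‖ₑ := by
    intro t
    rw [Ff, enorm_mul, Real.enorm_eq_ofReal (Real.exp_pos _).le]
  simp_rw [hnorm]
  rcases le_total 1 s with h1 | h1
  · rw [min_eq_left h1, ENNReal.ofReal_one, mul_one]
    refine le_trans ?_ (le_add_of_nonneg_left zero_le)
    rw [hedef, ← lintegral_mul_const _ (by fun_prop)]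
    apply lintegral_mono
    intro t
    dsimp only
    gcongr
    rw [Real.enorm_eq_ofReal_abs]
    apply ENNReal.ofReal_le_ofReal
    have a1 := qf_bound hU0 hν0 hR H (t - s) hs.le
    have a2 := qf_bound hU0 hν0 hR H t le_rfl
    have a3 := abs_sub (qf U ν g (t - s) s) (qf U ν g t 0)
    linarith
  · rw [min_eq_right h1]
    have hb : ∀ t ∈ Ioi (0:ℝ), ENNReal.ofReal (Real.exp (-(l * t))) *
      ‖qf U ν g (t - s) s - qf U ν g t 0‖ₑ ≤
      ENNReal.ofReal (Real.exp (-(l * t))) * U (Ico (t - s) t) * c +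
       ENNReal.ofReal (Real.exp (-(l * t))) * ENNReal.ofReal (L * s) := by
      intro t ht
      rw [mul_assoc, ← mul_add]
      gcongr
      rw [show qf U ν g (t - s) s - qf U ν g t 0 =
        (qf U ν g (t - s) s - qf U ν g t s) + (qf U ν g t s - qf U ν g t 0) by ring]
      refine (enorm_add_le _ _).trans ?_
      refine add_le_add (qf_diff hU0 hν0 hR H (by linarith) hs.le) ?_
      rw [Real.enorm_eq_ofReal_abs]
      exact ENNReal.ofReal_le_ofReal (qf_lip hU0 hν0 hR H ht hs.le)
    refine (setLIntegral_mono' measurableSet_Ioi hb).trans ?_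
    rw [lintegral_add_right _ (by fun_prop), lintegral_mul_const' _ _ hc,
      lintegral_mul_const _ (by fun_prop), ENNReal.ofReal_mul hL0]
    have hsh := (setLIntegral_le_lintegral (Ioi (0:ℝ)) _).trans (lint_shift (U := U) hl s)
    calc _ ≤ (u * ENNReal.ofReal s) * c + e * (ENNReal.ofReal L * ENNReal.ofReal s) := by gcongr
      _ = (u * c + e * ENNReal.ofReal L) * ENNReal.ofReal s := by ring
      _ ≤ _ := mul_le_mul_left (le_add_of_nonneg_right zero_le) _

lemma Ff_meas (hg : Continuous g) (l : ℝ) : Measurable fun z : ℝ × ℝ => Ff U ν g l z.1 z.2 := by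
  unfold Ff
  have h := qf_meas (U := U) (ν := ν) hg
  have h1 : Measurable fun z : ℝ × ℝ => qf U ν g (z.1 - z.2) z.2 :=
    h.comp ((measurable_fst.sub measurable_snd).prodMk measurable_snd)
  have h2 : Measurable fun z : ℝ × ℝ => qf U ν g z.1 0 :=
    h.comp (measurable_fst.prodMk measurable_const)
  exact Measurable.mul (by fun_prop) (h1.sub h2)

lemma Ff_int (hU0 : ∀ᵐ h ∂U, 0 < h) (hν0 : ∀ᵐ r ∂ν, 0 < r) (hνne : ν ≠ 0)
    (hR : ∀ z : ℝ, 0 < z → ∫⁻ h in Iio z, ν (Ioi (z - h)) ∂U = 1)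
    (hν1 : ∫⁻ s, ENNReal.ofReal (min 1 s) ∂ν ≠ ⊤)
    (H : Reg g g' L K) {l : ℝ} (hl : 0 < l) :
    Integrable (fun z : ℝ × ℝ => Ff U ν g l z.1 z.2) ((volume.restrict (Ioi 0)).prod ν) := by
  have hm := Ff_meas (U := U) (ν := ν) H.cont l
  refine ⟨hm.aestronglyMeasurable, ?_⟩
  obtain ⟨C, hC, hb⟩ := Ff_bound hU0 hν0 hνne hR hν1 H hl
  rw [HasFiniteIntegral, lintegral_prod_symm _ hm.enorm.aemeasurable]
  calc _ ≤ ∫⁻ s, C * ENNReal.ofReal (min 1 s) ∂ν := by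
        apply lintegral_mono_ae
        filter_upwards [hν0] with s hs using hb s hs
    _ = C * ∫⁻ s, ENNReal.ofReal (min 1 s) ∂ν := lintegral_const_mul _ (by fun_prop)
    _ < ⊤ := (ENNReal.mul_ne_top hC hν1).lt_top

lemma qhat (hU0 : ∀ᵐ h ∂U, 0 < h) (hν0 : ∀ᵐ r ∂ν, 0 < r) (hνne : ν ≠ 0)
    (hR : ∀ z : ℝ, 0 < z → ∫⁻ h in Iio z, ν (Ioi (z - h)) ∂U = 1)
    (H : Reg g g' L K) {l : ℝ} (hl : 0 < l) {s : ℝ} (hs : 0 ≤ s) :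
    IntegrableOn (fun t => Real.exp (-(l * t)) * qf U ν g t s) (Ioi 0) ∧
    Integrable (fun p : ℝ × ℝ => Real.exp (-(l * p.1)) * rho l p.2 * g (p.1 + p.2 + s))
      (U.prod ν) ∧
    ∫ t in Ioi (0:ℝ), Real.exp (-(l * t)) * qf U ν g t s =
      ∫ p, Real.exp (-(l * p.1)) * rho l p.2 * g (p.1 + p.2 + s) ∂(U.prod ν) := by
  have hgc := H.cont
  set F : ℝ × (ℝ × ℝ) → ℝ := {q | q.2 ∈ Bs q.1}.indicator
    (fun q => Real.exp (-(l * q.1)) * g (q.2.1 + q.2.2 + s)) with hF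
  have hSm : MeasurableSet {q : ℝ × (ℝ × ℝ) | q.2 ∈ Bs q.1} := by
    apply MeasurableSet.inter
    · exact measurableSet_lt measurable_snd.fst measurable_fst
    · exact measurableSet_lt measurable_fst (measurable_snd.fst.add measurable_snd.snd)
  have hFm : Measurable F := Measurable.indicator (by fun_prop) hSm
  have h2 : ∀ t p, F (t, p) = (Bs t).indicator
    (fun p => Real.exp (-(l * t)) * g (p.1 + p.2 + s)) p := fun t p => rfl
  have h1 : ∀ t ∈ Ioi (0:ℝ), ∫ p, F (t, p) ∂(U.prod ν) = Real.exp (-(l * t)) * qf U ν g t s := by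
    intro t ht
    simp_rw [h2]
    rw [integral_indicator (measurableSet_Bs t), integral_const_mul, qf, if_neg (not_le.2 ht)]
  have hFint : Integrable F ((volume.restrict (Ioi 0)).prod (U.prod ν)) := by
    rw [integrable_prod_iff hFm.aestronglyMeasurable]
    constructor
    · filter_upwards [ae_restrict_mem measurableSet_Ioi] with t ht
      simp_rw [h2]
      rw [integrable_indicator_iff (measurableSet_Bs t)]
      exact (intOn_Bs hU0 hν0 hR H ht hs).1.const_mul _
    · refine Integrable.mono' ((int_exp_Ioi hl).1.mul_const K)
        (hFm.norm.stronglyMeasurable.integral_prod_right').aestronglyMeasurable ?_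
      filter_upwards [ae_restrict_mem measurableSet_Ioi] with t ht
      rw [Real.norm_of_nonneg (integral_nonneg fun p => norm_nonneg _)]
      simp_rw [h2, norm_indicator_eq_indicator_norm]
      rw [integral_indicator (measurableSet_Bs t)]
      simp_rw [norm_mul]
      rw [integral_const_mul, Real.norm_of_nonneg (Real.exp_pos _).le]
      gcongr
      have : IsFiniteMeasure ((U.prod ν).restrict (Bs t)) :=
        ⟨by rw [Measure.restrict_apply_univ, prod_Bs_pos hR ht]; simp⟩
      have := integral_mono_ae (intOn_Bs hU0 hν0 hR H ht hs).1.norm (integrable_const K)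
        (intOn_Bs hU0 hν0 hR H ht hs).2
      simpa [Measure.real, prod_Bs_pos hR ht] using this
  have h4 : ∀ᵐ p ∂(U.prod ν), ∫ t in Ioi (0:ℝ), F (t, p) =
      Real.exp (-(l * p.1)) * rho l p.2 * g (p.1 + p.2 + s) := by
    filter_upwards [ae_fst hU0, ae_snd hν0] with p hp1 hp2
    have h5 : ∀ t, F (t, p) = (Ioo p.1 (p.1 + p.2)).indicator
      (fun t => Real.exp (-(l * t)) * g (p.1 + p.2 + s)) t := fun t => rfl
    simp_rw [h5]
    rw [integral_indicator measurableSet_Ioo, Measure.restrict_restrict measurableSet_Ioo,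
      inter_eq_left.2 (show Ioo p.1 (p.1 + p.2) ⊆ Ioi 0 from fun t ht => hp1.trans ht.1), integral_mul_const, (lint_exp hl _ _ hp2.le).2]
    rfl
  have i1 := hFint.integral_prod_left
  have i2 := hFint.integral_prod_right
  refine ⟨?_, (integrable_congr h4).1 i2, ?_⟩
  · refine (integrable_congr ?_).1 i1
    filter_upwards [ae_restrict_mem measurableSet_Ioi] with t ht using h1 t ht
  · rw [← setIntegral_congr_fun measurableSet_Ioi h1, ← integral_congr_ae h4,
      ← integral_prod _ hFint, ← integral_prod_symm _ hFint]

end Ctrw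

namespace Ctrw
set_option linter.unusedSectionVars false
variable {U ν : Measure ℝ} [SFinite U] [SFinite ν]
variable {g g' : ℝ → ℝ} {L K : ℝ}

lemma shift_Ioi (f : ℝ → ℝ) (hf : IntegrableOn f (Ioi 0)) (s : ℝ) :
    IntegrableOn (fun t => f (t - s)) (Ioi s) ∧
    ∫ t in Ioi s, f (t - s) = ∫ t in Ioi (0:ℝ), f t := by
  have h1 : ∀ t, (Ioi s).indicator (fun t => f (t - s)) t = (Ioi (0:ℝ)).indicator f (t - s) := by
    intro t
    by_cases h : s < t
    · rw [indicator_of_mem (by exact h), indicator_of_mem (by exact sub_pos.2 h)]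
    · rw [indicator_of_notMem (by exact h), indicator_of_notMem]
      intro h'; exact h (sub_pos.1 h')
  constructor
  · rw [← integrable_indicator_iff measurableSet_Ioi]
    refine (integrable_congr (Eventually.of_forall h1)).2 ?_
    exact ((integrable_indicator_iff measurableSet_Ioi).2 hf).comp_sub_right s
  · rw [← integral_indicator measurableSet_Ioi, ← integral_indicator measurableSet_Ioi]
    simp_rw [h1]
    exact integral_sub_right_eq_self _ s

lemma Ff_laplace (hU0 : ∀ᵐ h ∂U, 0 < h) (hν0 : ∀ᵐ r ∂ν, 0 < r) (hνne : ν ≠ 0)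
    (hR : ∀ z : ℝ, 0 < z → ∫⁻ h in Iio z, ν (Ioi (z - h)) ∂U = 1)
    (H : Reg g g' L K) {l : ℝ} (hl : 0 < l) {s : ℝ} (hs : 0 < s) :
    ∫ t in Ioi (0:ℝ), Ff U ν g l t s = rho l s * g s +
      (Real.exp (-(l * s)) * (∫ p, Real.exp (-(l * p.1)) * rho l p.2 * g (p.1 + p.2 + s) ∂(U.prod ν))
      - ∫ p, Real.exp (-(l * p.1)) * rho l p.2 * g (p.1 + p.2 + 0) ∂(U.prod ν)) := by
  obtain ⟨a1, -, a3⟩ := qhat hU0 hν0 hνne hR H hl hs.le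
  obtain ⟨b1, -, b3⟩ := qhat hU0 hν0 hνne hR H hl (le_refl (0:ℝ))
  obtain ⟨c1, c2⟩ := shift_Ioi _ a1 s
  rw [← a3, ← b3]
  have e1 : ∀ t, Real.exp (-(l * t)) * qf U ν g (t - s) s =
      Real.exp (-(l * s)) * (Real.exp (-(l * (t - s))) * qf U ν g (t - s) s) := by
    intro t
    rw [← mul_assoc, ← Real.exp_add]; congr 2; ring
  have d1 : IntegrableOn (fun t => Real.exp (-(l * t)) * qf U ν g (t - s) s) (Ioi s) := by
    simp_rw [e1]; exact c1.const_mul _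
  have e2 : ∀ t ∈ Ioc 0 s, Real.exp (-(l * t)) * qf U ν g (t - s) s =
      Real.exp (-(l * t)) * g s := by
    intro t ht
    rw [qf, if_pos (by linarith [ht.2])]
  have d2 : IntegrableOn (fun t => Real.exp (-(l * t)) * qf U ν g (t - s) s) (Ioc 0 s) := by
    rw [integrableOn_congr_fun e2 measurableSet_Ioc]
    exact ((by fun_prop : Continuous fun t => Real.exp (-(l * t)) * g s).integrableOn_Icc).mono_set
      Ioc_subset_Icc_self
  have d3 : IntegrableOn (fun t => Real.exp (-(l * t)) * qf U ν g (t - s) s) (Ioi 0) := by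
    rw [← Ioc_union_Ioi_eq_Ioi hs.le]; exact d2.union d1
  have d4 : ∫ t in Ioi (0:ℝ), Real.exp (-(l * t)) * qf U ν g (t - s) s = rho l s * g s +
      Real.exp (-(l * s)) * ∫ t in Ioi (0:ℝ), Real.exp (-(l * t)) * qf U ν g t s := by
    rw [← Ioc_union_Ioi_eq_Ioi hs.le, setIntegral_union Ioc_disjoint_Ioi_same measurableSet_Ioi d2 d1,
      Ioc_union_Ioi_eq_Ioi hs.le, ← c2, ← integral_const_mul]
    congr 1
    · rw [setIntegral_congr_fun measurableSet_Ioc e2, integral_mul_const,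
        integral_Ioc_eq_integral_Ioo]
      have := (lint_exp hl 0 s hs.le).2
      rw [zero_add] at this
      rw [this]; simp [rho]
    · simp_rw [e1]
  unfold Ff
  simp_rw [mul_sub]
  rw [integral_sub d3 b1, d4]
  ring

/-- smoothed function -/
noncomputable def wf (ν : Measure ℝ) (l : ℝ) (g : ℝ → ℝ) (y : ℝ) : ℝ :=
  ∫ r, rho l r * g (y + r) ∂ν

lemma wf_reg (hν0 : ∀ᵐ r ∂ν, 0 < r)
    (hν1 : ∫⁻ s, ENNReal.ofReal (min 1 s) ∂ν ≠ ⊤)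
    (H : Reg g g' L K) {l : ℝ} (hl : 0 < l) :
    (∀ y, Integrable (fun r => rho l r * g (y + r)) ν) ∧
    Reg (wf ν l g) (wf ν l g') (L * ∫ r, rho l r ∂ν) (K * ∫ r, rho l r ∂ν) := by
  have hρ := rho_integrable hν0 hν1 hl
  have hρc := rho_cont l
  have hgc := H.cont
  have hg'c := H.c
  have hnn : ∀ᵐ r ∂ν, ‖rho l r‖ = rho l r := by
    filter_upwards [hν0] with r hr using Real.norm_of_nonneg (rho_nonneg hl hr.le)
  have hFint : ∀ y, Integrable (fun r => rho l r * g (y + r)) ν := by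
    intro y
    refine (hρ.mul_const (K + L * |y|)).mono' (by fun_prop) ?_
    filter_upwards [hν0, hnn] with r hr h1
    rw [norm_mul, h1]
    have := rho_nonneg hl hr.le
    gcongr
    have h2 := H.lip r (y + r)
    rw [show y + r - r = y by ring] at h2
    have h3 := H.hK r hr.le
    rw [Real.norm_eq_abs]
    have := abs_sub_abs_le_abs_sub (g (y + r)) (g r)
    linarith
  have hb : ∀ y, ∀ᵐ r ∂ν, ‖rho l r * g' (y + r)‖ ≤ L * rho l r := by
    intro y
    filter_upwards [hν0, hnn] with r hr h1
    rw [norm_mul, h1, mul_comm L]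
    have := rho_nonneg hl hr.le
    gcongr
    exact H.hL _
  refine ⟨hFint, ⟨?_, ?_, ?_, ?_⟩⟩
  · intro y
    refine (hasDerivAt_integral_of_dominated_loc_of_deriv_le (μ := ν) (x₀ := y) (s := univ)
      (F := fun y r => rho l r * g (y + r)) (F' := fun y r => rho l r * g' (y + r))
      (bound := fun r => L * rho l r) univ_mem
      (Eventually.of_forall fun z => by fun_prop) (hFint y) (by fun_prop) ?_ (hρ.const_mul L) ?_).2
    · filter_upwards [hν0, hnn] with r hr h1 z _
      rw [norm_mul, h1, mul_comm L]
      have := rho_nonneg hl hr.le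
      gcongr
      exact H.hL _
    · refine Eventually.of_forall fun r z _ => ?_
      exact ((H.d (z + r)).comp_add_const z r).const_mul _
  · exact continuous_of_dominated (fun y => by fun_prop) hb (hρ.const_mul L)
      (Eventually.of_forall fun r => by fun_prop)
  · intro y
    refine (norm_integral_le_of_norm_le (hρ.const_mul L) (hb y)).trans ?_
    rw [integral_const_mul]
  · intro y hy
    refine (norm_integral_le_of_norm_le (f := fun r => rho l r * g (y + r)) (hρ.const_mul K) ?_).trans ?_
    · filter_upwards [hν0, hnn] with r hr h1
      rw [norm_mul, h1, mul_comm K]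
      have := rho_nonneg hl hr.le
      gcongr
      exact H.hK _ (by linarith)
    · rw [integral_const_mul]

lemma kf_deriv {w w' : ℝ → ℝ} {L K : ℝ} (H : Reg w w' L K) (l y : ℝ) :
    HasDerivAt (fun y => Real.exp (-(l * y)) * w y)
      (Real.exp (-(l * y)) * (w' y - l * w y)) y := by
  have h1 : HasDerivAt (fun z : ℝ => -(l * z)) (-l) y := by
    have h := ((hasDerivAt_id y).const_mul (-l))
    simp only [id, mul_one] at h
    simpa only [neg_mul] using h
  have h2 := h1.exp.mul (H.d y)
  have h3 : Real.exp (-(l * y)) * (w' y - l * w y) =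
    Real.exp (-(l * y)) * -l * w y + Real.exp (-(l * y)) * w' y := by ring
  rw [h3]; exact h2

lemma kf_renew (hU0 : ∀ᵐ h ∂U, 0 < h) (hν0 : ∀ᵐ r ∂ν, 0 < r)
    (hR : ∀ z : ℝ, 0 < z → ∫⁻ h in Iio z, ν (Ioi (z - h)) ∂U = 1)
    {w w' : ℝ → ℝ} {L K : ℝ} (H : Reg w w' L K) {l : ℝ} (hl : 0 < l) :
    Integrable (fun p : ℝ × ℝ => Real.exp (-(l * (p.1 + p.2))) * w (p.1 + p.2) -
      Real.exp (-(l * p.1)) * w p.1) (U.prod ν) ∧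
    ∫ p, (Real.exp (-(l * (p.1 + p.2))) * w (p.1 + p.2) -
      Real.exp (-(l * p.1)) * w p.1) ∂(U.prod ν) = - w 0 := by
  have hw := H.cont
  have hw' := H.c
  set κ : ℝ → ℝ := fun y => Real.exp (-(l * y)) * (w' y - l * w y) with hκ
  have hκc : Continuous κ := by fun_prop
  have hκi : IntegrableOn κ (Ioi 0) := by
    refine Integrable.mono' ((int_exp_Ioi hl).1.mul_const (L + l * K)) hκc.aestronglyMeasurable ?_
    filter_upwards [ae_restrict_mem measurableSet_Ioi] with y hy
    rw [hκ, norm_mul, Real.norm_of_nonneg (Real.exp_pos _).le]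
    gcongr
    refine (norm_sub_le _ _).trans ?_
    rw [norm_mul, Real.norm_of_nonneg hl.le]
    have h1 := H.hL y
    have h2 := H.hK y (le_of_lt hy)
    rw [Real.norm_eq_abs, Real.norm_eq_abs]
    gcongr
  obtain ⟨k1, k2⟩ := renewK (U := U) (ν := ν) hU0 hR κ hκc.measurable hκi
  have hae : (fun p : ℝ × ℝ => ∫ z in Ioo p.1 (p.1 + p.2), κ z) =ᵐ[U.prod ν]
    (fun p : ℝ × ℝ => Real.exp (-(l * (p.1 + p.2))) * w (p.1 + p.2) -
      Real.exp (-(l * p.1)) * w p.1) := by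
    filter_upwards [ae_snd hν0] with p hp
    rw [← integral_Ioc_eq_integral_Ioo, ← intervalIntegral.integral_of_le (by linarith)]
    exact intervalIntegral.integral_eq_sub_of_hasDerivAt
      (fun z _ => kf_deriv H l z) (hκc.intervalIntegrable _ _)
  refine ⟨(integrable_congr hae).1 k1, ?_⟩
  rw [← integral_congr_ae hae, k2]
  have hlim : Tendsto (fun y => Real.exp (-(l * y)) * w y) atTop (𝓝 0) := by
    have h0 : Tendsto (fun y => Real.exp (-(l * y)) * K) atTop (𝓝 0) := by
      rw [← zero_mul K]
      refine Tendsto.mul_const K ?_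
      exact Real.tendsto_exp_neg_atTop_nhds_zero.comp (tendsto_id.const_mul_atTop hl)
    refine squeeze_zero_norm' ?_ h0
    filter_upwards [eventually_ge_atTop 0] with y hy
    rw [norm_mul, Real.norm_of_nonneg (Real.exp_pos _).le]
    gcongr
    exact H.hK y hy
  rw [integral_Ioi_of_hasDerivAt_of_tendsto' (fun z _ => kf_deriv H l z) hκi hlim]
  simp

theorem scalar_main (hU0 : ∀ᵐ h ∂U, 0 < h) (hν0 : ∀ᵐ r ∂ν, 0 < r) (hνne : ν ≠ 0)
    (hR : ∀ z : ℝ, 0 < z → ∫⁻ h in Iio z, ν (Ioi (z - h)) ∂U = 1)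
    (hν1 : ∫⁻ s, ENNReal.ofReal (min 1 s) ∂ν ≠ ⊤)
    (H : Reg g g' L K) {l : ℝ} (hl : 0 < l) :
    IntegrableOn (fun t => Real.exp (-(l * t)) * ∫ s, (qf U ν g (t - s) s - qf U ν g t 0) ∂ν)
      (Ioi 0) ∧
    ∫ t in Ioi (0:ℝ), Real.exp (-(l * t)) * ∫ s, (qf U ν g (t - s) s - qf U ν g t 0) ∂ν = 0 := by
  have hF := Ff_int hU0 hν0 hνne hR hν1 H hl
  have h1 : ∀ t, Real.exp (-(l * t)) * ∫ s, (qf U ν g (t - s) s - qf U ν g t 0) ∂ν =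
      ∫ s, Ff U ν g l t s ∂ν := fun t => (integral_const_mul _ _).symm
  simp_rw [h1]
  refine ⟨hF.integral_prod_left, ?_⟩
  obtain ⟨hwi, hwr⟩ := wf_reg hν0 hν1 H hl
  obtain ⟨k1, k2⟩ := kf_renew hU0 hν0 hR hwr hl
  rw [integral_integral_swap hF]
  have key : ∀ᵐ s ∂ν, ∫ t in Ioi (0:ℝ), Ff U ν g l t s = rho l s * g (0 + s) +
      ∫ h, (Real.exp (-(l * (h + s))) * wf ν l g (h + s) - Real.exp (-(l * h)) * wf ν l g h) ∂U := by
    filter_upwards [hν0] with s hs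
    rw [Ff_laplace hU0 hν0 hνne hR H hl hs, zero_add]
    congr 1
    have a2 := (qhat hU0 hν0 hνne hR H hl hs.le).2.1
    have b2 := (qhat hU0 hν0 hνne hR H hl (le_refl (0:ℝ))).2.1
    rw [← integral_const_mul, ← integral_sub (a2.const_mul _) b2]
    refine (integral_prod _ ((a2.const_mul _).sub b2)).trans ?_
    congr 1
    ext h
    unfold wf
    rw [← integral_const_mul, ← integral_const_mul,
      ← integral_sub ((hwi _).const_mul _) ((hwi _).const_mul _)]
    congr 1
    ext r
    simp only [Pi.sub_apply]
    rw [show -(l * (h + s)) = -(l * s) + -(l * h) by ring, Real.exp_add,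
      show h + r + s = h + s + r by ring, add_zero]
    ring
  rw [integral_congr_ae key, integral_add (hwi 0) k1.integral_prod_right,
    ← integral_prod_symm _ k1, k2]
  simp [wf]

end Ctrw

namespace Ctrw
lemma sfinite_nu (ν : Measure ℝ)
    (hν1 : ∫⁻ s in Set.Ioi (0 : ℝ), ENNReal.ofReal (min 1 s) ∂ν ≠ ⊤) :
    SFinite (ν.restrict (Ioi 0)) := by
  have hm : Measurable (fun s : ℝ => ENNReal.ofReal (min 1 s)) := by fun_prop
  rw [← withDensity_inv_same (μ := ν.restrict (Ioi 0)) hm ?_ ?_]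
  · have : IsFiniteMeasure ((ν.restrict (Ioi 0)).withDensity
      (fun s : ℝ => ENNReal.ofReal (min 1 s))) := isFiniteMeasure_withDensity hν1
    infer_instance
  · filter_upwards [ae_restrict_mem measurableSet_Ioi] with s hs
    have hs : 0 < s := hs
    simp [hs]
  · filter_upwards with s
    simp

lemma measurable_tail (ν : Measure ℝ) (z : ℝ) : Measurable (fun h : ℝ => ν (Ioi (z - h))) := by
  apply Monotone.measurable
  intro a b hab
  exact measure_mono (Ioi_subset_Ioi (by linarith))

/-- The renewal measure with density `uφ`. -/
noncomputable def UU (uφ : ℝ → ℝ) : Measure ℝ :=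
  (volume.restrict (Ioi 0)).withDensity (fun h => ENNReal.ofReal (uφ h))

instance (uφ : ℝ → ℝ) : SFinite (UU uφ) := by unfold UU; infer_instance

lemma UU_pos (uφ : ℝ → ℝ) : ∀ᵐ h ∂(UU uφ), 0 < h := by
  apply (withDensity_absolutelyContinuous _ _).ae_le
  exact ae_restrict_mem measurableSet_Ioi

lemma UU_renew (ν : Measure ℝ) (uφ : ℝ → ℝ) (huφm : Measurable uφ)
    (hrenew : ∀ t : ℝ, 0 < t →
      ∫⁻ h in Set.Ioo 0 t, ν (Set.Ioi (t - h)) * ENNReal.ofReal (uφ h) = 1) (z : ℝ) (hz : 0 < z) :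
    ∫⁻ h in Iio z, (ν.restrict (Ioi 0)) (Ioi (z - h)) ∂(UU uφ) = 1 := by
  unfold UU
  rw [restrict_withDensity measurableSet_Iio, Measure.restrict_restrict measurableSet_Iio,
    lintegral_withDensity_eq_lintegral_mul _ (by fun_prop) (measurable_tail _ z), inter_comm,
    Ioi_inter_Iio, ← hrenew z hz]
  apply setLIntegral_congr_fun measurableSet_Ioo
  intro h hh
  simp only [Pi.mul_apply]
  rw [mul_comm, Measure.restrict_apply measurableSet_Ioi, inter_eq_left.2]
  exact Ioi_subset_Ioi (by linarith [hh.2])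

section semi
variable {E : Type*} [MetricSpace E]

/-- Evaluation at a point. -/
noncomputable def ev (x : E) : C₀(E, ℝ) →L[ℝ] ℝ :=
  LinearMap.mkContinuous
    { toFun := fun f => f x, map_add' := fun _ _ => rfl, map_smul' := fun _ _ => rfl } 1
    (fun f => by
      rw [one_mul, ← ZeroAtInftyContinuousMap.norm_toBCF_eq_norm]
      exact f.toBCF.norm_coe_le_norm x)

@[simp] lemma ev_apply (x : E) (f : C₀(E, ℝ)) : ev x f = f x := rfl

lemma abs_le_norm (f : C₀(E, ℝ)) (x : E) : |f x| ≤ ‖f‖ := by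
  rw [← ZeroAtInftyContinuousMap.norm_toBCF_eq_norm]
  exact f.toBCF.norm_coe_le_norm x

variable (P : ℝ → C₀(E, ℝ) →L[ℝ] C₀(E, ℝ))

lemma semi_diff
    (hPsg : ∀ s t : ℝ, 0 ≤ s → 0 ≤ t → P (s + t) = (P s).comp (P t))
    (hPcon : ∀ t : ℝ, 0 ≤ t → ∀ f : C₀(E, ℝ), ‖P t f‖ ≤ ‖f‖)
    (f : C₀(E, ℝ)) {s t : ℝ} (hs : 0 ≤ s) (ht : 0 ≤ t) :
    ‖P t f - P s f‖ ≤ ‖P |t - s| f - f‖ := by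
  wlog h : s ≤ t generalizing s t
  · rw [norm_sub_rev, abs_sub_comm]
    exact this ht hs (le_of_not_ge h)
  · rw [abs_of_nonneg (sub_nonneg.2 h)]
    have h1 : P t f = P s (P (t - s) f) := by
      have := hPsg s (t - s) hs (sub_nonneg.2 h)
      rw [add_sub_cancel] at this
      rw [this]; rfl
    rw [h1, ← map_sub]
    exact hPcon s hs _

lemma semi_cont
    (hPsg : ∀ s t : ℝ, 0 ≤ s → 0 ≤ t → P (s + t) = (P s).comp (P t))
    (hPcon : ∀ t : ℝ, 0 ≤ t → ∀ f : C₀(E, ℝ), ‖P t f‖ ≤ ‖f‖)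
    (hPsc : ∀ f : C₀(E, ℝ), Tendsto (fun t => P t f) (𝓝[≥] (0 : ℝ)) (𝓝 f))
    (f : C₀(E, ℝ)) : Continuous (fun y : ℝ => P (max y 0) f) := by
  rw [continuous_iff_continuousAt]
  intro y
  rw [ContinuousAt, tendsto_iff_norm_sub_tendsto_zero]
  have h1 : Tendsto (fun z : ℝ => |max z 0 - max y 0|) (𝓝 y) (𝓝[≥] 0) := by
    rw [tendsto_nhdsWithin_iff]
    refine ⟨?_, Eventually.of_forall fun z => mem_Ici.2 (abs_nonneg _)⟩
    have : Continuous (fun z : ℝ => |max z 0 - max y 0|) := by fun_prop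
    simpa using this.tendsto y
  have h2 := (tendsto_iff_norm_sub_tendsto_zero.1 ((hPsc f).comp h1))
  exact squeeze_zero (fun _ => norm_nonneg _)
    (fun z => semi_diff P hPsg hPcon f (le_max_right _ _) (le_max_right _ _)) h2

/-- Derivative of the orbit at `x`. -/
noncomputable def gd (Gu : C₀(E, ℝ)) (x : E) (y : ℝ) : ℝ := (P (max y 0) Gu) x

/-- `C¹` extension of the orbit of `u` at `x`. -/
noncomputable def gg (u Gu : C₀(E, ℝ)) (x : E) (y : ℝ) : ℝ := u x + ∫ z in (0:ℝ)..y, gd P Gu x z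

lemma gd_cont
    (hPsg : ∀ s t : ℝ, 0 ≤ s → 0 ≤ t → P (s + t) = (P s).comp (P t))
    (hPcon : ∀ t : ℝ, 0 ≤ t → ∀ f : C₀(E, ℝ), ‖P t f‖ ≤ ‖f‖)
    (hPsc : ∀ f : C₀(E, ℝ), Tendsto (fun t => P t f) (𝓝[≥] (0 : ℝ)) (𝓝 f))
    (Gu : C₀(E, ℝ)) (x : E) : Continuous (gd P Gu x) :=
  (ev x).continuous.comp (semi_cont P hPsg hPcon hPsc Gu)

lemma gg_deriv
    (hPsg : ∀ s t : ℝ, 0 ≤ s → 0 ≤ t → P (s + t) = (P s).comp (P t))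
    (hPcon : ∀ t : ℝ, 0 ≤ t → ∀ f : C₀(E, ℝ), ‖P t f‖ ≤ ‖f‖)
    (hPsc : ∀ f : C₀(E, ℝ), Tendsto (fun t => P t f) (𝓝[≥] (0 : ℝ)) (𝓝 f))
    (u Gu : C₀(E, ℝ)) (x : E) (y : ℝ) : HasDerivAt (gg P u Gu x) (gd P Gu x y) y := by
  have hc := gd_cont P hPsg hPcon hPsc Gu x
  have := intervalIntegral.integral_hasDerivAt_right (hc.intervalIntegrable 0 y)
    hc.aestronglyMeasurable.stronglyMeasurableAtFilter hc.continuousAt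
  exact this.const_add (u x)

lemma gg_eq
    (hP0 : P 0 = ContinuousLinearMap.id ℝ C₀(E, ℝ))
    (hPsg : ∀ s t : ℝ, 0 ≤ s → 0 ≤ t → P (s + t) = (P s).comp (P t))
    (hPcon : ∀ t : ℝ, 0 ≤ t → ∀ f : C₀(E, ℝ), ‖P t f‖ ≤ ‖f‖)
    (hPsc : ∀ f : C₀(E, ℝ), Tendsto (fun t => P t f) (𝓝[≥] (0 : ℝ)) (𝓝 f))
    (u Gu : C₀(E, ℝ)) (x : E)
    (hu : Tendsto (fun h : ℝ => h⁻¹ • (P h u - u)) (𝓝[>] (0 : ℝ)) (𝓝 Gu)) {y : ℝ} (hy : 0 ≤ y) :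
    gg P u Gu x y = (P y u) x := by
  have hcont : Continuous (fun y : ℝ => (P (max y 0) u) x) :=
    (ev x).continuous.comp (semi_cont P hPsg hPcon hPsc u)
  have key := eq_of_has_deriv_right_eq (f := gg P u Gu x) (g := fun y => (P (max y 0) u) x)
    (f' := gd P Gu x) (a := 0) (b := y)
    (fun t _ => (gg_deriv P hPsg hPcon hPsc u Gu x t).hasDerivWithinAt) ?_
    (fun t _ => (gg_deriv P hPsg hPcon hPsc u Gu x t).continuousAt.continuousWithinAt)
    hcont.continuousOn ?_ y ⟨hy, le_rfl⟩
  · rw [key]; simp only [max_eq_left hy]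
  · intro t ht
    have ht0 : 0 ≤ t := ht.1
    rw [← hasDerivWithinAt_Ioi_iff_Ici, hasDerivWithinAt_iff_tendsto_slope' (by simp)]
    have h1 : Tendsto (fun z : ℝ => z - t) (𝓝[>] t) (𝓝[>] 0) := by
      rw [tendsto_nhdsWithin_iff]
      refine ⟨?_, ?_⟩
      · have : Continuous (fun z : ℝ => z - t) := by fun_prop
        simpa using (this.tendsto t).mono_left nhdsWithin_le_nhds
      · filter_upwards [self_mem_nhdsWithin] with z hz
        exact mem_Ioi.2 (sub_pos.2 (mem_Ioi.1 hz))
    have h2 := (((ev x).comp (P t)).continuous.tendsto Gu).comp (hu.comp h1)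
    have e : gd P Gu x t = ((ev x).comp (P t)) Gu := by
      simp [gd, max_eq_left ht0]
    rw [e]
    refine h2.congr' ?_
    filter_upwards [self_mem_nhdsWithin] with z hz
    have hz : t < z := hz
    have e2 := hPsg t (z - t) ht0 (sub_pos.2 hz).le
    rw [add_sub_cancel] at e2
    simp only [Function.comp, slope_def_field, max_eq_left ht0, max_eq_left (ht0.trans hz.le)]
    rw [e2, map_smul, map_sub]
    simp
    rw [div_eq_inv_mul]
  · simp [gg, hP0]

lemma gg_reg
    (hP0 : P 0 = ContinuousLinearMap.id ℝ C₀(E, ℝ))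
    (hPsg : ∀ s t : ℝ, 0 ≤ s → 0 ≤ t → P (s + t) = (P s).comp (P t))
    (hPcon : ∀ t : ℝ, 0 ≤ t → ∀ f : C₀(E, ℝ), ‖P t f‖ ≤ ‖f‖)
    (hPsc : ∀ f : C₀(E, ℝ), Tendsto (fun t => P t f) (𝓝[≥] (0 : ℝ)) (𝓝 f))
    (u Gu : C₀(E, ℝ)) (x : E)
    (hu : Tendsto (fun h : ℝ => h⁻¹ • (P h u - u)) (𝓝[>] (0 : ℝ)) (𝓝 Gu)) :
    Reg (gg P u Gu x) (gd P Gu x) ‖Gu‖ ‖u‖ where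
  d := gg_deriv P hPsg hPcon hPsc u Gu x
  c := gd_cont P hPsg hPcon hPsc Gu x
  hL := fun y => (abs_le_norm _ x).trans (hPcon _ (le_max_right _ _) _)
  hK := fun y hy => by
    rw [gg_eq P hP0 hPsg hPcon hPsc u Gu x hu hy]
    exact (abs_le_norm _ x).trans (hPcon _ hy _)

lemma orb_integrable
    (hPsg : ∀ s t : ℝ, 0 ≤ s → 0 ≤ t → P (s + t) = (P s).comp (P t))
    (hPcon : ∀ t : ℝ, 0 ≤ t → ∀ f : C₀(E, ℝ), ‖P t f‖ ≤ ‖f‖)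
    (hPsc : ∀ f : C₀(E, ℝ), Tendsto (fun t => P t f) (𝓝[≥] (0 : ℝ)) (𝓝 f))
    {U ν : Measure ℝ} [SFinite U] [SFinite ν]
    (u : C₀(E, ℝ)) {τ : ℝ} (h1 : (U.prod ν) (Bs τ) = 1) :
    IntegrableOn (fun p : ℝ × ℝ => P (max (p.1 + p.2) 0) u) (Bs τ) (U.prod ν) := by
  have hc : Continuous (fun p : ℝ × ℝ => P (max (p.1 + p.2) 0) u) :=
    (semi_cont P hPsg hPcon hPsc u).comp (continuous_fst.add continuous_snd)
  refine IntegrableOn.of_bound (by rw [h1]; simp)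
    hc.aestronglyMeasurable ‖u‖ ?_
  filter_upwards with p
  exact hPcon _ (le_max_right _ _) _

lemma cand_eq
    (hPsg : ∀ s t : ℝ, 0 ≤ s → 0 ≤ t → P (s + t) = (P s).comp (P t))
    (hPcon : ∀ t : ℝ, 0 ≤ t → ∀ f : C₀(E, ℝ), ‖P t f‖ ≤ ‖f‖)
    (hPsc : ∀ f : C₀(E, ℝ), Tendsto (fun t => P t f) (𝓝[≥] (0 : ℝ)) (𝓝 f))
    {ν : Measure ℝ} [SFinite (ν.restrict (Ioi 0))] (uφ : ℝ → ℝ) (huφm : Measurable uφ)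
    (huφ0 : ∀ t : ℝ, 0 < t → 0 ≤ uφ t) (u : C₀(E, ℝ)) {τ : ℝ} (hτ : 0 < τ)
    (h1 : ((UU uφ).prod (ν.restrict (Ioi 0))) (Bs τ) = 1) :
    cand P ν uφ u τ =
      ∫ p in Bs τ, P (max (p.1 + p.2) 0) u ∂((UU uφ).prod (ν.restrict (Ioi 0))) := by
  have hi := orb_integrable P hPsg hPcon hPsc u h1
  rw [← integral_indicator (measurableSet_Bs τ), integral_prod _
    ((integrable_indicator_iff (measurableSet_Bs τ)).2 hi)]
  rw [cand, if_neg hτ.ne']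
  conv_rhs => rw [UU]
  rw [integral_withDensity_eq_integral_toReal_smul (by fun_prop) (by simp)]
  have hsub : Ioo 0 τ = Ioi 0 ∩ Iio τ := Ioi_inter_Iio.symm
  rw [hsub, inter_comm, ← Measure.restrict_restrict measurableSet_Iio,
    ← integral_indicator measurableSet_Iio]
  apply setIntegral_congr_fun measurableSet_Ioi
  intro h hh
  have hh : 0 < h := hh
  dsimp only
  by_cases hlt : h < τ
  · rw [indicator_of_mem (by exact hlt), ENNReal.toReal_ofReal (huφ0 h hh)]
    congr 1
    have e : ∀ r, (Bs τ).indicator (fun p : ℝ × ℝ => P (max (p.1 + p.2) 0) u) (h, r)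
        = (Ioi (τ - h)).indicator (fun r => P (max (h + r) 0) u) r := by
      intro r
      by_cases hr : τ - h < r
      · rw [indicator_of_mem (by exact ⟨hlt, by dsimp only; linarith⟩),
          indicator_of_mem (by exact hr)]
      · rw [indicator_of_notMem, indicator_of_notMem (by exact hr)]
        rintro ⟨_, h4⟩
        dsimp only at h4
        exact hr (by linarith)
    simp_rw [e]
    rw [integral_indicator measurableSet_Ioi, Measure.restrict_restrict measurableSet_Ioi,
      inter_eq_left.2 (Ioi_subset_Ioi (by linarith))]
    apply setIntegral_congr_fun measurableSet_Ioi
    intro r hr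
    have hr : τ - h < r := hr
    dsimp only
    rw [max_eq_left (by linarith), add_comm]
  · rw [indicator_of_notMem (by exact hlt)]
    have e : ∀ r, (Bs τ).indicator (fun p : ℝ × ℝ => P (max (p.1 + p.2) 0) u) (h, r) = 0 := by
      intro r
      apply indicator_of_notMem
      exact fun h4 => hlt h4.1
    simp [e]

lemma cand_qf
    (hP0 : P 0 = ContinuousLinearMap.id ℝ C₀(E, ℝ))
    (hPsg : ∀ s t : ℝ, 0 ≤ s → 0 ≤ t → P (s + t) = (P s).comp (P t))
    (hPcon : ∀ t : ℝ, 0 ≤ t → ∀ f : C₀(E, ℝ), ‖P t f‖ ≤ ‖f‖)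
    (hPsc : ∀ f : C₀(E, ℝ), Tendsto (fun t => P t f) (𝓝[≥] (0 : ℝ)) (𝓝 f))
    {ν : Measure ℝ} [SFinite (ν.restrict (Ioi 0))] (uφ : ℝ → ℝ) (huφm : Measurable uφ)
    (huφ0 : ∀ t : ℝ, 0 < t → 0 ≤ uφ t)
    (hR : ∀ z : ℝ, 0 < z → ∫⁻ h in Iio z, (ν.restrict (Ioi 0)) (Ioi (z - h)) ∂(UU uφ) = 1)
    (u Gu : C₀(E, ℝ)) (x : E)
    (hu : Tendsto (fun h : ℝ => h⁻¹ • (P h u - u)) (𝓝[>] (0 : ℝ)) (𝓝 Gu))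
    (τ : ℝ) {s : ℝ} (hs : 0 ≤ s) :
    (P s (cand P ν uφ u (max τ 0))) x
      = qf (UU uφ) (ν.restrict (Ioi 0)) (gg P u Gu x) τ s := by
  unfold qf
  split_ifs with hτ
  · rw [max_eq_right hτ, cand, if_pos rfl, gg_eq P hP0 hPsg hPcon hPsc u Gu x hu hs]
  · have hτ : 0 < τ := not_le.1 hτ
    have h1 := prod_Bs_pos hR hτ
    rw [max_eq_left hτ.le, cand_eq P hPsg hPcon hPsc uφ huφm huφ0 u hτ h1]
    change ((ev x).comp (P s)) _ = _
    rw [← ContinuousLinearMap.integral_comp_comm _ (orb_integrable P hPsg hPcon hPsc u h1)]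
    apply integral_congr_ae
    filter_upwards [ae_restrict_of_ae (ae_fst (UU_pos uφ)),
      ae_restrict_of_ae (ae_snd (ae_restrict_mem (μ := ν) measurableSet_Ioi))] with p hp1 hp2
    have hp2 : 0 < p.2 := hp2
    have hp : 0 ≤ p.1 + p.2 := by linarith
    rw [gg_eq P hP0 hPsg hPcon hPsc u Gu x hu (add_nonneg hp hs), max_eq_left hp,
      add_comm _ s, hPsg s _ hs hp]
    rfl
end semi
end Ctrw

/-- Step (ii): for every `u ∈ D(G)`, `x ∈ E` and `λ > 0`, the function `t ↦ 𝔄⁺Q(x,t)` is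
Lebesgue integrable on `(0,∞)` against `e^{-λt} dt` and its Laplace transform vanishes. -/
theorem ctrw_overshoot_step_ii
    {E : Type*} [MetricSpace E] [TopologicalSpace.SeparableSpace E] [LocallyCompactSpace E]
    (P : ℝ → C₀(E, ℝ) →L[ℝ] C₀(E, ℝ))
    (hP0 : P 0 = ContinuousLinearMap.id ℝ C₀(E, ℝ))
    (hPsg : ∀ s t : ℝ, 0 ≤ s → 0 ≤ t → P (s + t) = (P s).comp (P t))
    (hPpos : ∀ t : ℝ, 0 ≤ t → ∀ f : C₀(E, ℝ), (∀ x, 0 ≤ f x) → ∀ x, 0 ≤ P t f x)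
    (hPcon : ∀ t : ℝ, 0 ≤ t → ∀ f : C₀(E, ℝ), ‖P t f‖ ≤ ‖f‖)
    (hPsc : ∀ f : C₀(E, ℝ), Tendsto (fun t => P t f) (𝓝[≥] (0 : ℝ)) (𝓝 f))
    (ν : Measure ℝ)
    (hν1 : ∫⁻ s in Set.Ioi (0 : ℝ), ENNReal.ofReal (min 1 s) ∂ν ≠ ⊤)
    (hνinf : ν (Set.Ioi (0 : ℝ)) = ⊤)
    (hνpos : ∀ t : ℝ, 0 < t → 0 < ν (Set.Ioi t))
    (uφ : ℝ → ℝ) (huφm : Measurable uφ)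
    (huφ0 : ∀ t : ℝ, 0 < t → 0 ≤ uφ t)
    (huφmono : ∀ s t : ℝ, 0 < s → s ≤ t → uφ t ≤ uφ s)
    (hrenew : ∀ t : ℝ, 0 < t →
      ∫⁻ h in Set.Ioo 0 t, ν (Set.Ioi (t - h)) * ENNReal.ofReal (uφ h) = 1)
    (hlog : ∫⁻ t in Set.Ioo (0 : ℝ) 1, ENNReal.ofReal (|Real.log t| * uφ t) ≠ ⊤)
    (u Gu : C₀(E, ℝ))
    (hu : Tendsto (fun h : ℝ => h⁻¹ • (P h u - u)) (𝓝[>] (0 : ℝ)) (𝓝 Gu)) :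
    ∀ (x : E) (l : ℝ), 0 < l →
      IntegrableOn (fun t : ℝ => Real.exp (-(l * t)) * Aop P ν (cand P ν uφ u) x t)
        (Set.Ioi 0) volume ∧
      ∫ t in Set.Ioi (0 : ℝ), Real.exp (-(l * t)) * Aop P ν (cand P ν uφ u) x t = 0 := by
  intro x l hl
  have hsf := Ctrw.sfinite_nu ν hν1
  have hR := Ctrw.UU_renew ν uφ huφm hrenew
  have hne : ν.restrict (Ioi 0) ≠ 0 := by
    intro h
    have h2 : (ν.restrict (Ioi 0)) univ = 0 := by rw [h]; simp
    rw [Measure.restrict_apply_univ, hνinf] at h2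
    exact ENNReal.top_ne_zero h2
  have hν0 : ∀ᵐ r ∂(ν.restrict (Ioi 0)), (0:ℝ) < r := ae_restrict_mem measurableSet_Ioi
  have main := Ctrw.scalar_main (Ctrw.UU_pos uφ) hν0 hne hR hν1
    (Ctrw.gg_reg P hP0 hPsg hPcon hPsc u Gu x hu) hl
  have key : ∀ t ∈ Ioi (0:ℝ), Real.exp (-(l * t)) * Aop P ν (cand P ν uφ u) x t
      = Real.exp (-(l * t)) * ∫ s, (Ctrw.qf (Ctrw.UU uφ) (ν.restrict (Ioi 0))
          (Ctrw.gg P u Gu x) (t - s) s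
          - Ctrw.qf (Ctrw.UU uφ) (ν.restrict (Ioi 0)) (Ctrw.gg P u Gu x) t 0)
          ∂(ν.restrict (Ioi 0)) := by
    intro t ht
    have ht : 0 < t := ht
    congr 1
    unfold Aop
    apply setIntegral_congr_fun measurableSet_Ioi
    intro s hs
    have hs : 0 < s := hs
    have e1 := Ctrw.cand_qf P hP0 hPsg hPcon hPsc uφ huφm huφ0 hR u Gu x hu (t - s) hs.le
    have e2 := Ctrw.cand_qf P hP0 hPsg hPcon hPsc uφ huφm huφ0 hR u Gu x hu t le_rfl
    rw [hP0, max_eq_left ht.le] at e2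
    dsimp only
    rw [e1, ← e2]
    rfl
  refine ⟨(integrableOn_congr_fun key measurableSet_Ioi).2 main.1, ?_⟩
  rw [setIntegral_congr_fun measurableSet_Ioi key]
  exact main.2
end

section
/- Main theorem, existence part: for every u in D(G), the function q(x,t) := Q(t)(x) solves the generalized harmonic problem for the coupled space-time nonlocal operator, i.e. for every (x,t) in E × (0,∞) the integral 𝔄⁺Q(x,t) = ∫₀^∞ ((P_s Q((t−s)∨0))(x) − Q(t)(x)) ν(ds) converges absolutely and equals 0, and the initial condition Q(0) = u holds. -/
open MeasureTheory Set Filter Topology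
open scoped ZeroAtInfty

lemma renew_swap (μ ν : Measure ℝ) [SFinite μ] [SFinite ν] (h : ℝ) :
    ∫⁻ s, μ (Ioo (h - s) h) ∂ν = ∫⁻ h' in Iio h, ν (Ioi (h - h')) ∂μ := by
  have e1 : ∀ s, μ (Ioo (h - s) h) = ∫⁻ h' in Iio h, (Ioi (h - h')).indicator 1 s ∂μ := by
    intro s
    have : ∀ h', (Ioi (h - h')).indicator (1 : ℝ → ENNReal) s = (Ioi (h - s)).indicator 1 h' := by
      intro h'
      simp only [indicator, mem_Ioi, Pi.one_apply]
      congr 1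
      exact propext ⟨fun _ => by linarith, fun _ => by linarith⟩
    simp_rw [this]
    rw [lintegral_indicator_one measurableSet_Ioi, Measure.restrict_apply measurableSet_Ioi]
    rfl
  simp_rw [e1]
  rw [lintegral_lintegral_swap]
  · refine lintegral_congr fun h' => ?_
    rw [lintegral_indicator_one measurableSet_Ioi]
  · have : MeasurableSet {p : ℝ × ℝ | h - p.2 < p.1} :=
      measurableSet_lt (by fun_prop) (by fun_prop)
    have : Measurable (indicator _ _) := (measurable_const (a := (1 : ENNReal))).indicator this
    exact this.aemeasurable

lemma core (μ ν : Measure ℝ) [IsFiniteMeasure μ] [NullSingletonClass μ] [SFinite ν] (t : ℝ) (ht : 0 < t)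
    (hμ : ∀ᵐ h ∂μ, h ∈ Ioo 0 t) (hν : ∀ᵐ r ∂ν, 0 < r)
    (hK : ∫⁻ s, ENNReal.ofReal (min 1 s) ∂ν ≠ ⊤)
    (hren : ∀ h, 0 < h → h ≤ t → ∫⁻ h' in Iio h, ν (Ioi (h - h')) ∂μ = 1)
    (g k : ℝ → ℝ) (hgc : Measurable g) (hkm : Measurable k) (C : ℝ) (hC : 0 ≤ C)
    (hg : ∀ z, |g z| ≤ C * min 1 (max z 0))
    (hk : ∀ z, |k z| ≤ if 0 < z then C else 0)
    (hgk : ∀ a b, a ≤ b → g b - g a = ∫ z in Ioc a b, k z)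
    (w : ℝ → ℝ) (hw : w = fun h => ∫ r, g (r + h - t) ∂ν) :
    Integrable (fun s => g (s - t) + ∫ h in Iio (t - s), w (h + s) ∂μ - ∫ h, w h ∂μ) ν ∧
    ∫ s, (g (s - t) + ∫ h in Iio (t - s), w (h + s) ∂μ - ∫ h, w h ∂μ) ∂ν = 0 := by
  have hmin : Integrable (fun s => min 1 s) ν := by
    refine ⟨by fun_prop, ?_⟩
    rw [hasFiniteIntegral_iff_norm]
    refine lt_of_le_of_lt (le_of_eq ?_) hK.lt_top
    refine lintegral_congr_ae ?_
    filter_upwards [hν] with s hs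
    rw [Real.norm_of_nonneg (le_min zero_le_one hs.le)]
  -- integrability of g
  have hgb : ∀ h ≤ t, ∀ r, 0 < r → |g (r + h - t)| ≤ C * min 1 r := by
    intro h hh r hr
    refine (hg _).trans (mul_le_mul_of_nonneg_left ?_ hC)
    exact min_le_min_left _ (max_le (by linarith) hr.le)
  have hgi : ∀ h ≤ t, Integrable (fun r => g (r + h - t)) ν := by
    intro h hh
    refine (hmin.const_mul C).mono' (Measurable.aestronglyMeasurable (by fun_prop)) ?_
    filter_upwards [hν] with r hr
    exact hgb h hh r hr
  have hwb : ∀ h ≤ t, ‖w h‖ ≤ ∫ r, C * min 1 r ∂ν := by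
    intro h hh
    rw [hw]
    refine norm_integral_le_of_norm_le (hmin.const_mul C) ?_
    filter_upwards [hν] with r hr
    exact hgb h hh r hr
  have hwm : StronglyMeasurable w := by
    rw [hw]
    apply StronglyMeasurable.integral_prod_right (f := fun h r => g (r + h - t))
    apply Measurable.stronglyMeasurable
    simp only [Function.uncurry_def]
    fun_prop
  -- v
  set lam : Measure ℝ := volume.restrict (Ioo 0 t) with hlam
  have hkint : Integrable (fun p : ℝ × ℝ => k (p.1 + p.2 - t)) (ν.prod lam) := by
    refine ⟨Measurable.aestronglyMeasurable (by fun_prop), ?_⟩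
    rw [hasFiniteIntegral_iff_norm]
    have : ∀ p : ℝ × ℝ, ENNReal.ofReal ‖k (p.1 + p.2 - t)‖ ≤
        ENNReal.ofReal C * (Ioi (t - p.1)).indicator 1 p.2 := by
      intro p
      have := hk (p.1 + p.2 - t)
      rw [Real.norm_eq_abs]
      by_cases h : t - p.1 < p.2
      · rw [if_pos (by linarith)] at this
        simp only [indicator, mem_Ioi, h, if_true, Pi.one_apply, mul_one]
        exact ENNReal.ofReal_le_ofReal this
      · rw [if_neg (by intro _; apply h; linarith)] at this
        rw [ENNReal.ofReal_of_nonpos this]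
        exact zero_le
    refine lt_of_le_of_lt (lintegral_mono this) ?_
    rw [lintegral_prod]
    swap
    · have : MeasurableSet {p : ℝ × ℝ | t - p.1 < p.2} :=
        measurableSet_lt (by fun_prop) (by fun_prop)
      have : Measurable (indicator _ _) := (measurable_const (a := (1 : ENNReal))).indicator this
      exact (this.const_mul _).aemeasurable
    have : ∀ᵐ r ∂ν, ∫⁻ y, ENNReal.ofReal C * (Ioi (t - r)).indicator 1 y ∂lam ≤
        ENNReal.ofReal (C * max 1 t) * ENNReal.ofReal (min 1 r) := by
      filter_upwards [hν] with r hr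
      rw [lintegral_const_mul _ (measurable_one.indicator measurableSet_Ioi),
        lintegral_indicator_one measurableSet_Ioi, ENNReal.ofReal_mul hC, mul_assoc]
      gcongr
      rw [← ENNReal.ofReal_mul (by positivity), hlam, Measure.restrict_apply measurableSet_Ioi]
      have h1 : volume (Ioi (t - r) ∩ Ioo 0 t) ≤ ENNReal.ofReal (min t r) := by
        rw [ENNReal.ofReal_min]
        refine le_min ?_ ?_
        · refine (measure_mono inter_subset_right).trans ?_
          simp
        · refine (measure_mono (t := Ioo (t - r) t) ?_).trans ?_
          · rintro x ⟨h1, h2⟩; exact ⟨h1, h2.2⟩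
          · simp
      refine h1.trans (ENNReal.ofReal_le_ofReal ?_)
      rcases le_total 1 r with h | h
      · rw [min_eq_left h, mul_one]; exact (min_le_left _ _).trans (le_max_right _ _)
      · rw [min_eq_right h]
        refine (min_le_right _ _).trans ?_
        nlinarith [le_max_left 1 t]
    refine lt_of_le_of_lt (lintegral_mono_ae this) ?_
    rw [lintegral_const_mul _ (by fun_prop)]
    exact ENNReal.mul_lt_top ENNReal.ofReal_lt_top hK.lt_top
  set v : ℝ → ℝ := fun h => ∫ r, k (r + h - t) ∂ν with hv
  have hvi : Integrable v lam := hkint.integral_prod_right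
  have hwv : ∀ a b, 0 ≤ a → a ≤ b → b ≤ t → w b - w a = ∫ h, (Ioo a b).indicator v h ∂lam := by
    intro a b ha hab hb
    rw [hw]
    simp only
    rw [← integral_sub (hgi b hb) (hgi a (hab.trans hb))]
    have e1 : ∀ r, g (r + b - t) - g (r + a - t) = ∫ h in Ioo a b, k (r + h - t) ∂lam := by
      intro r
      rw [hgk _ _ (by linarith), hlam, Measure.restrict_restrict measurableSet_Ioo]
      have : Ioo a b ∩ Ioo 0 t = Ioo a b := inter_eq_left.2 (Ioo_subset_Ioo ha hb)
      rw [this, ← integral_Ioc_eq_integral_Ioo, ← intervalIntegral.integral_of_le hab,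
        ← intervalIntegral.integral_of_le (by linarith)]
      have := intervalIntegral.integral_comp_add_right (a := a) (b := b) k (r - t)
      rw [show a + (r - t) = r + a - t by ring, show b + (r - t) = r + b - t by ring] at this
      rw [← this]
      congr 1; ext x; congr 1; ring
    simp_rw [e1]
    rw [integral_indicator measurableSet_Ioo]
    rw [integral_integral_swap]
    refine hkint.mono_measure ?_
    exact Measure.prod_mono le_rfl Measure.restrict_le_self
  -- s-integral of the measure
  have hmeas : Measurable fun p : ℝ × ℝ => μ (Ioo (p.2 - p.1) p.2) := by
    have : MeasurableSet {q : (ℝ × ℝ) × ℝ | q.1.2 - q.1.1 < q.2 ∧ q.2 < q.1.2} :=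
      (measurableSet_lt (f := fun q : (ℝ × ℝ) × ℝ => q.1.2 - q.1.1) (g := fun q => q.2)
        (by fun_prop) (by fun_prop)).inter
        (measurableSet_lt (f := fun q : (ℝ × ℝ) × ℝ => q.2) (g := fun q => q.1.2)
          (by fun_prop) (by fun_prop))
    exact measurable_measure_prodMk_left (ν := μ) this
  have hmeasr : Measurable fun p : ℝ × ℝ => μ.real (Ioo (p.2 - p.1) p.2) := hmeas.ennreal_toReal
  have hmi : ∀ h, 0 < h → h ≤ t → Integrable (fun s => μ.real (Ioo (h - s) h)) ν ∧
      ∫ s, μ.real (Ioo (h - s) h) ∂ν = 1 := by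
    intro h h0 h1
    have hm : Measurable fun s => μ (Ioo (h - s) h) := hmeas.comp (measurable_id.prodMk measurable_const)
    have hl : ∫⁻ s, μ (Ioo (h - s) h) ∂ν = 1 := by rw [renew_swap, hren h h0 h1]
    constructor
    · exact integrable_toReal_of_lintegral_ne_top hm.aemeasurable (by simp [hl])
    · simp only [Measure.real]
      rw [integral_toReal hm.aemeasurable (by simp), hl]; simp
  -- third term
  have hlamm : ∀ᵐ h ∂lam, h ∈ Ioo 0 t := ae_restrict_mem measurableSet_Ioo
  have hT : Integrable (fun p : ℝ × ℝ => v p.2 * μ.real (Ioo (p.2 - p.1) p.2)) (ν.prod lam) := by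
    rw [integrable_prod_iff']
    · constructor
      · filter_upwards [hlamm] with h hh
        exact (hmi h hh.1 hh.2.le).1.const_mul _
      · refine hvi.norm.congr ?_
        filter_upwards [hlamm] with h hh
        simp only [norm_mul]
        rw [integral_const_mul]
        have : ∀ s, ‖μ.real (Ioo (h - s) h)‖ = μ.real (Ioo (h - s) h) :=
          fun s => Real.norm_of_nonneg measureReal_nonneg
        simp_rw [this]
        rw [(hmi h hh.1 hh.2.le).2, mul_one]
    · exact (hvi.aestronglyMeasurable.comp_snd).mul hmeasr.aestronglyMeasurable
  -- identity
  have hD : ∀ᵐ s ∂ν, g (s - t) + ∫ h in Iio (t - s), w (h + s) ∂μ - ∫ h, w h ∂μ =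
      g (s - t) - μ.real (Ioo (t - s) t) * w t + ∫ h, v h * μ.real (Ioo (h - s) h) ∂lam := by
    filter_upwards [hν] with s hs
    have e1 : ∀ h, v h * μ.real (Ioo (h - s) h) = ∫ h', (Ioo h' (h' + s)).indicator v h ∂μ := by
      intro h
      have : ∀ h', (Ioo h' (h' + s)).indicator v h = (Ioo (h - s) h).indicator (fun _ => v h) h' := by
        intro h'
        simp only [indicator, mem_Ioo]
        congr 1
        exact propext ⟨fun ⟨_, _⟩ => ⟨by linarith, by linarith⟩, fun ⟨_, _⟩ => ⟨by linarith, by linarith⟩⟩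
      simp_rw [this]
      rw [integral_indicator measurableSet_Ioo]
      simp [mul_comm]
    simp_rw [e1]
    rw [integral_integral_swap]
    swap
    · have hS : MeasurableSet {p : ℝ × ℝ | p.2 < p.1 ∧ p.1 < p.2 + s} :=
        (measurableSet_lt (f := fun q : ℝ × ℝ => q.2) (g := fun q => q.1)
          (by fun_prop) (by fun_prop)).inter
          (measurableSet_lt (f := fun q : ℝ × ℝ => q.1) (g := fun q => q.2 + s)
            (by fun_prop) (by fun_prop))
      have := (hvi.comp_fst μ).indicator hS
      exact this
    have e2 : ∀ᵐ h' ∂μ, ∫ h, (Ioo h' (h' + s)).indicator v h ∂lam =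
        ((Iio (t - s)).indicator (fun h' => w (h' + s)) h' + (Ici (t - s)).indicator (fun _ => w t) h') - w h' := by
      filter_upwards [hμ] with a ha
      by_cases h : a < t - s
      · rw [← hwv _ _ ha.1.le (by linarith) (by linarith)]
        have h' : ¬ t ≤ a + s := by linarith
        simp [indicator, h, h']
      · have hx : ∫ h, (Ioo a (a + s)).indicator v h ∂lam = ∫ h, (Ioo a t).indicator v h ∂lam := by
          refine integral_congr_ae ?_
          filter_upwards [hlamm] with y hy
          simp only [indicator, mem_Ioo]
          congr 1
          exact propext ⟨fun ⟨_, _⟩ => ⟨by linarith, hy.2⟩, fun ⟨_, _⟩ => ⟨by linarith, by linarith⟩⟩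
        rw [hx, ← hwv _ _ ha.1.le ha.2.le le_rfl]
        simp [indicator, h, not_lt.1 h]
    rw [integral_congr_ae e2]
    have i1 : Integrable ((Iio (t - s)).indicator (fun h' => w (h' + s))) μ := by
      refine (integrable_const (∫ r, C * min 1 r ∂ν)).mono'
        (((hwm.comp_measurable (measurable_id.add_const s)).indicator measurableSet_Iio).aestronglyMeasurable) ?_
      refine Eventually.of_forall fun a => ?_
      by_cases h : a < t - s
      · simp only [indicator, mem_Iio, h, if_true]
        exact hwb _ (by linarith)
      · simp only [indicator, mem_Iio, h, if_false, norm_zero]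
        exact (norm_nonneg _).trans (hwb t le_rfl)
    have i2 : Integrable ((Ici (t - s)).indicator (fun _ => w t)) μ :=
      (integrable_const _).indicator measurableSet_Ici
    have i3 : Integrable w μ := by
      refine (integrable_const (∫ r, C * min 1 r ∂ν)).mono' hwm.aestronglyMeasurable ?_
      filter_upwards [hμ] with a ha
      exact hwb _ ha.2.le
    rw [integral_sub (by exact i1.add i2) i3, integral_add i1 i2, integral_indicator measurableSet_Iio,
      integral_indicator measurableSet_Ici]
    have e3 : μ.real (Ioo (t - s) t) = μ.real (Ici (t - s)) := by
      simp only [Measure.real]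
      congr 1
      rw [← measure_congr (Ioi_ae_eq_Ici (μ := μ))]
      refine measure_congr ?_
      filter_upwards [hμ] with a ha
      refine propext ⟨fun h => h.1, fun h => ⟨h, ha.2⟩⟩
    rw [e3]
    simp
    ring
  have hg1 : Integrable (fun s => g (s - t)) ν := by simpa using hgi 0 ht.le
  have hm1 := hmi t ht le_rfl
  have hT1 : Integrable (fun s => ∫ h, v h * μ.real (Ioo (h - s) h) ∂lam) ν := hT.integral_prod_left
  have hsum := (hg1.sub (hm1.1.mul_const (w t))).add hT1
  refine ⟨hsum.congr (hD.mono fun s hs => hs.symm), ?_⟩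
  rw [integral_congr_ae hD, integral_add (by exact hg1.sub (hm1.1.mul_const (w t))) hT1,
    integral_sub hg1 (hm1.1.mul_const (w t)), integral_mul_const, hm1.2,
    integral_integral_swap hT]
  have e4 : ∫ h, ∫ s, v h * μ.real (Ioo (h - s) h) ∂ν ∂lam = w t - w 0 := by
    rw [hwv 0 t le_rfl ht.le le_rfl]
    refine integral_congr_ae ?_
    filter_upwards [hlamm] with h hh
    rw [integral_const_mul, (hmi h hh.1 hh.2.le).2, mul_one, indicator_of_mem hh]
  rw [e4]
  have : w 0 = ∫ s, g (s - t) ∂ν := by rw [hw]; simp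
  rw [this]
  ring

lemma nu_Ioi_lt_top (ν : Measure ℝ)
    (hν1 : ∫⁻ s in Set.Ioi (0 : ℝ), ENNReal.ofReal (min 1 s) ∂ν ≠ ⊤) (e : ℝ) (he : 0 < e) :
    ν (Ioi e) < ⊤ := by
  have h1 := mul_meas_ge_le_lintegral (μ := ν.restrict (Ioi 0))
    (f := fun s => ENNReal.ofReal (min 1 s)) (by fun_prop) (ENNReal.ofReal (min 1 e))
  have h2 : ν (Ioi e) ≤ (ν.restrict (Ioi 0))
      {x | ENNReal.ofReal (min 1 e) ≤ ENNReal.ofReal (min 1 x)} := by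
    have : ν (Ioi e) = ν.restrict (Ioi 0) (Ioi e) := by
      rw [Measure.restrict_apply measurableSet_Ioi, inter_eq_left.2 (Ioi_subset_Ioi he.le)]
    rw [this]
    refine measure_mono fun x hx => ?_
    exact ENNReal.ofReal_le_ofReal (min_le_min_left _ (le_of_lt hx))
  have h3 : ENNReal.ofReal (min 1 e) ≠ 0 := by
    simp [he]
  refine lt_of_le_of_lt h2 (lt_top_iff_ne_top.2 fun h => ?_)
  rw [h, ENNReal.mul_top h3] at h1
  exact hν1 (top_le_iff.1 h1)

lemma nu_sigmaFinite (ν : Measure ℝ)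
    (hν1 : ∫⁻ s in Set.Ioi (0 : ℝ), ENNReal.ofReal (min 1 s) ∂ν ≠ ⊤) :
    SigmaFinite (ν.restrict (Ioi 0)) := by
  refine ⟨⟨⟨fun n => Iic 0 ∪ Ioi (1 / ((n : ℝ) + 1)), fun _ => trivial, fun n => ?_, ?_⟩⟩⟩
  · refine (measure_union_le _ _).trans_lt ?_
    have h1 : ν.restrict (Ioi 0) (Iic 0) = 0 := by
      rw [Measure.restrict_apply measurableSet_Iic]
      have : Iic (0 : ℝ) ∩ Ioi 0 = ∅ := by ext x; simp
      simp [this]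
    rw [h1, zero_add]
    exact (Measure.restrict_apply_le _ _).trans_lt (nu_Ioi_lt_top ν hν1 _ (by positivity))
  · refine eq_univ_of_forall fun x => ?_
    rcases le_or_gt x 0 with h | h
    · exact mem_iUnion.2 ⟨0, Or.inl h⟩
    · obtain ⟨n, hn⟩ := exists_nat_one_div_lt h
      exact mem_iUnion.2 ⟨n, Or.inr hn⟩

/-- evaluation at a point as a continuous linear functional -/
noncomputable def evalC {E : Type*} [TopologicalSpace E] (x : E) : C₀(E, ℝ) →L[ℝ] ℝ :=
  LinearMap.mkContinuous
    { toFun := fun f => f x, map_add' := fun _ _ => rfl, map_smul' := fun _ _ => rfl } 1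
    (fun f => by
      rw [one_mul]
      have := BoundedContinuousFunction.norm_coe_le_norm f.toBCF x
      rwa [ZeroAtInftyContinuousMap.norm_toBCF_eq_norm] at this)

lemma evalC_apply {E : Type*} [TopologicalSpace E] (x : E) (f : C₀(E, ℝ)) : evalC x f = f x := rfl

lemma abs_apply_le {E : Type*} [TopologicalSpace E] (x : E) (f : C₀(E, ℝ)) : |f x| ≤ ‖f‖ := by
  have := BoundedContinuousFunction.norm_coe_le_norm f.toBCF x
  rwa [ZeroAtInftyContinuousMap.norm_toBCF_eq_norm] at this

lemma sg_cont {B : Type*} [NormedAddCommGroup B] [NormedSpace ℝ B]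
    (P : ℝ → B →L[ℝ] B)
    (hPsg : ∀ s t : ℝ, 0 ≤ s → 0 ≤ t → P (s + t) = (P s).comp (P t))
    (hPcon : ∀ t : ℝ, 0 ≤ t → ∀ f : B, ‖P t f‖ ≤ ‖f‖)
    (hPsc : ∀ f : B, Tendsto (fun t => P t f) (𝓝[≥] (0 : ℝ)) (𝓝 f))
    (u : B) : Continuous (fun r => P (max r 0) u) := by
  have key : ∀ a b, 0 ≤ a → a ≤ b → ‖P b u - P a u‖ ≤ ‖P (b - a) u - u‖ := by
    intro a b ha hab
    have : P b u = P a (P (b - a) u) := by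
      rw [← ContinuousLinearMap.comp_apply, ← hPsg a (b - a) ha (by linarith)]
      congr 2; ring
    rw [this, ← map_sub]
    exact hPcon a ha _
  have key2 : ∀ a b, 0 ≤ a → 0 ≤ b → ‖P b u - P a u‖ ≤ ‖P |b - a| u - u‖ := by
    intro a b ha hb
    rcases le_total a b with h | h
    · rw [abs_of_nonneg (by linarith)]; exact key a b ha h
    · rw [abs_of_nonpos (by linarith), norm_sub_rev, neg_sub]; exact key b a hb h
  rw [continuous_iff_continuousAt]
  intro r
  rw [ContinuousAt, tendsto_iff_norm_sub_tendsto_zero]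
  have h1 : Tendsto (fun y => |max y 0 - max r 0|) (𝓝 r) (𝓝[≥] 0) := by
    refine tendsto_nhdsWithin_iff.2 ⟨?_, Eventually.of_forall fun y => mem_Ici.2 (abs_nonneg _)⟩
    have : Continuous (fun y : ℝ => |max y 0 - max r 0|) := by fun_prop
    simpa using this.tendsto r
  have h2 := tendsto_iff_norm_sub_tendsto_zero.1 ((hPsc u).comp h1)
  refine squeeze_zero (fun _ => norm_nonneg _) (fun y => ?_) h2
  exact key2 _ _ (le_max_right _ _) (le_max_right _ _)

lemma sg_ftc {B : Type*} [NormedAddCommGroup B] [NormedSpace ℝ B]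
    (P : ℝ → B →L[ℝ] B)
    (hPsg : ∀ s t : ℝ, 0 ≤ s → 0 ≤ t → P (s + t) = (P s).comp (P t))
    (hPcon : ∀ t : ℝ, 0 ≤ t → ∀ f : B, ‖P t f‖ ≤ ‖f‖)
    (hPsc : ∀ f : B, Tendsto (fun t => P t f) (𝓝[≥] (0 : ℝ)) (𝓝 f))
    (u Gu : B)
    (hu : Tendsto (fun h : ℝ => h⁻¹ • (P h u - u)) (𝓝[>] (0 : ℝ)) (𝓝 Gu))
    (L : B →L[ℝ] ℝ) (a b : ℝ) (ha : 0 ≤ a) (hab : a ≤ b) :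
    L (P b u) - L (P a u) = ∫ y in a..b, L (P (max y 0) Gu) := by
  have c1 := sg_cont P hPsg hPcon hPsc u
  have c2 := sg_cont P hPsg hPcon hPsc Gu
  have := intervalIntegral.integral_eq_sub_of_hasDeriv_right_of_le (a := a) (b := b)
    (f := fun y => L (P (max y 0) u)) (f' := fun y => L (P (max y 0) Gu)) hab
    (L.continuous.comp c1).continuousOn ?_ ((L.continuous.comp c2).intervalIntegrable _ _)
  · rw [this]
    simp [max_eq_left ha, max_eq_left (ha.trans hab)]
  · intro y hy
    have hy0 : 0 < y := ha.trans_lt hy.1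
    have : HasDerivWithinAt (fun y => P (max y 0) u) (P (max y 0) Gu) (Ioi y) y := by
      rw [hasDerivWithinAt_iff_tendsto_slope' (by simp)]
      have t1 : Tendsto (fun z => z - y) (𝓝[>] y) (𝓝[>] 0) := by
        refine tendsto_nhdsWithin_iff.2 ⟨?_, ?_⟩
        · have : Continuous (fun z : ℝ => z - y) := by fun_prop
          simpa using (this.tendsto y).mono_left nhdsWithin_le_nhds
        · filter_upwards [self_mem_nhdsWithin] with z hz
          exact mem_Ioi.2 (sub_pos.2 (mem_Ioi.1 hz))
      have t2 := ((P y).continuous.tendsto Gu).comp (hu.comp t1)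
      rw [max_eq_left hy0.le]
      refine t2.congr' ?_
      filter_upwards [self_mem_nhdsWithin] with z hz
      have hz' : y < z := hz
      simp only [Function.comp, slope_def_module, map_smul, map_sub]
      rw [max_eq_left hy0.le, max_eq_left (hy0.le.trans hz'.le),
        ← ContinuousLinearMap.comp_apply, ← hPsg y (z - y) hy0.le (by linarith)]
      congr 4; ring
    exact L.hasFDerivAt.comp_hasDerivWithinAt y this

lemma inner_int {B : Type*} [NormedAddCommGroup B] (ν : Measure ℝ)
    (hν1 : ∫⁻ s in Set.Ioi (0 : ℝ), ENNReal.ofReal (min 1 s) ∂ν ≠ ⊤)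
    (F : ℝ → B) (hF : Continuous F) (C : ℝ) (hFC : ∀ r, ‖F r‖ ≤ C) (e h : ℝ) (he : 0 < e) :
    IntegrableOn (fun r => F (r + h)) (Ioi e) ν := by
  have : IsFiniteMeasure (ν.restrict (Ioi e)) :=
    ⟨by rw [Measure.restrict_apply_univ]; exact nu_Ioi_lt_top ν hν1 e he⟩
  exact (integrable_const C).mono' (by fun_prop) (Eventually.of_forall fun r => hFC _)

lemma renew_real (ν : Measure ℝ)
    (hν1 : ∫⁻ s in Set.Ioi (0 : ℝ), ENNReal.ofReal (min 1 s) ∂ν ≠ ⊤)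
    (uφ : ℝ → ℝ) (huφm : Measurable uφ)
    (huφ0 : ∀ t : ℝ, 0 < t → 0 ≤ uφ t)
    (t : ℝ) (hrenew : 
      ∫⁻ h in Set.Ioo 0 t, ν (Set.Ioi (t - h)) * ENNReal.ofReal (uφ h) = 1) :
    IntegrableOn (fun h => uφ h * ν.real (Ioi (t - h))) (Ioo 0 t) ∧
    ∫ h in Ioo 0 t, uφ h * ν.real (Ioi (t - h)) = 1 := by
  have hm : Measurable fun h => ν (Ioi (t - h)) := by
    apply Monotone.measurable
    intro a b hab
    exact measure_mono (Ioi_subset_Ioi (by linarith))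
  have hm2 : AEMeasurable (fun h => ν (Set.Ioi (t - h)) * ENNReal.ofReal (uφ h))
    (volume.restrict (Ioo 0 t)) := (hm.mul (by fun_prop)).aemeasurable
  have e : ∀ᵐ h ∂(volume.restrict (Ioo 0 t)),
      (ν (Set.Ioi (t - h)) * ENNReal.ofReal (uφ h)).toReal = uφ h * ν.real (Ioi (t - h)) := by
    filter_upwards [ae_restrict_mem measurableSet_Ioo] with h hh
    rw [ENNReal.toReal_mul, ENNReal.toReal_ofReal (huφ0 h hh.1), mul_comm]; rfl
  constructor
  · exact (integrable_toReal_of_lintegral_ne_top hm2 (by simp [hrenew])).congr e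
  · rw [← integral_congr_ae e, integral_toReal hm2, hrenew]
    · simp
    · filter_upwards [ae_restrict_mem measurableSet_Ioo] with h hh
      exact ENNReal.mul_lt_top (nu_Ioi_lt_top ν hν1 _ (by linarith [hh.2])) ENNReal.ofReal_lt_top

lemma cand_func {E : Type*} [TopologicalSpace E]
    (P : ℝ → C₀(E, ℝ) →L[ℝ] C₀(E, ℝ))
    (ν : Measure ℝ)
    (hν1 : ∫⁻ s in Set.Ioi (0 : ℝ), ENNReal.ofReal (min 1 s) ∂ν ≠ ⊤)
    (uφ : ℝ → ℝ) (huφm : Measurable uφ)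
    (huφ0 : ∀ t : ℝ, 0 < t → 0 ≤ uφ t)
    (t : ℝ) (ht : 0 < t) (hrenew : 
      ∫⁻ h in Set.Ioo 0 t, ν (Set.Ioi (t - h)) * ENNReal.ofReal (uφ h) = 1)
    (u : C₀(E, ℝ)) (hF : Continuous fun r => P (max r 0) u)
    (hPcon : ∀ t : ℝ, 0 ≤ t → ∀ f : C₀(E, ℝ), ‖P t f‖ ≤ ‖f‖)
    (L : C₀(E, ℝ) →L[ℝ] ℝ) :
    IntegrableOn (fun h => uφ h * ∫ r in Ioi (t - h), L (P (max (r + h) 0) u) ∂ν) (Ioo 0 t) ∧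
    L (cand P ν uφ u t) =
      ∫ h in Ioo 0 t, uφ h * ∫ r in Ioi (t - h), L (P (max (r + h) 0) u) ∂ν := by
  have hFC : ∀ r, ‖P (max r 0) u‖ ≤ ‖u‖ := fun r => hPcon _ (le_max_right _ _) u
  have := nu_sigmaFinite ν hν1
  rw [cand, if_neg ht.ne']
  have e0 : ∫ h in Set.Ioo 0 t, uφ h • (∫ r in Set.Ioi (t - h), P (r + h) u ∂ν) =
      ∫ h in Set.Ioo 0 t, uφ h • (∫ r in Set.Ioi (t - h), P (max (r + h) 0) u ∂ν) := by
    refine setIntegral_congr_fun measurableSet_Ioo fun h hh => ?_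
    congr 1
    refine setIntegral_congr_fun measurableSet_Ioi fun r hr => ?_
    have hr' : t - h < r := hr
    rw [max_eq_left (by linarith)]
  have e1 : ∀ h ∈ Ioo 0 t, ∫ r in Set.Ioi (t - h), P (max (r + h) 0) u ∂ν =
      ∫ r, (Ioi (t - h)).indicator (fun r => P (max (r + h) 0) u) r ∂(ν.restrict (Ioi 0)) := by
    intro h hh
    rw [integral_indicator measurableSet_Ioi, Measure.restrict_restrict measurableSet_Ioi,
      inter_eq_left.2 (Ioi_subset_Ioi (by linarith [hh.2]))]
  have hsm : StronglyMeasurable fun h => 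
      ∫ r, (Ioi (t - h)).indicator (fun r => P (max (r + h) 0) u) r ∂(ν.restrict (Ioi 0)) := by
    apply StronglyMeasurable.integral_prod_right
      (f := fun h r => (Ioi (t - h)).indicator (fun r => P (max (r + h) 0) u) r)
    have hS : MeasurableSet {p : ℝ × ℝ | t - p.1 < p.2} :=
      measurableSet_lt (by fun_prop) (by fun_prop)
    have hc : Continuous fun p : ℝ × ℝ => P (max (p.2 + p.1) 0) u :=
      hF.comp (f := fun p : ℝ × ℝ => p.2 + p.1) (by fun_prop)
    exact hc.stronglyMeasurable.indicator hS
  have hout : IntegrableOn (fun h => uφ h • ∫ r in Set.Ioi (t - h), P (max (r + h) 0) u ∂ν)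
      (Ioo 0 t) := by
    refine ((renew_real ν hν1 uφ huφm huφ0 t hrenew).1.mul_const ‖u‖).mono' ?_ ?_
    · have : AEStronglyMeasurable (fun h => uφ h • 
        ∫ r, (Ioi (t - h)).indicator (fun r => P (max (r + h) 0) u) r ∂(ν.restrict (Ioi 0)))
        (volume.restrict (Ioo 0 t)) :=
        (huφm.stronglyMeasurable.smul hsm).aestronglyMeasurable
      refine this.congr ?_
      filter_upwards [ae_restrict_mem measurableSet_Ioo] with h hh
      rw [e1 h hh]
    · filter_upwards [ae_restrict_mem measurableSet_Ioo] with h hh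
      rw [norm_smul, Real.norm_of_nonneg (huφ0 h hh.1), mul_assoc]
      refine mul_le_mul_of_nonneg_left ?_ (huφ0 h hh.1)
      rw [mul_comm]
      exact norm_setIntegral_le_of_norm_le_const (nu_Ioi_lt_top ν hν1 _ (by linarith [hh.2]))
        fun r _ => hFC _
  have e2 : EqOn (fun h => L (uφ h • ∫ r in Set.Ioi (t - h), P (max (r + h) 0) u ∂ν))
      (fun h => uφ h * ∫ r in Ioi (t - h), L (P (max (r + h) 0) u) ∂ν) (Ioo 0 t) := by
    intro h hh
    simp only [map_smul, smul_eq_mul]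
    rw [← ContinuousLinearMap.integral_comp_comm L
      (inner_int ν hν1 (fun r => P (max r 0) u) hF ‖u‖ hFC _ _ (by linarith [hh.2]))]
  refine ⟨IntegrableOn.congr_fun (L.integrable_comp hout) e2 measurableSet_Ioo, ?_⟩
  rw [e0, ← ContinuousLinearMap.integral_comp_comm L hout]
  exact setIntegral_congr_fun measurableSet_Ioo e2

/-- Main theorem, existence part: `q(x,t) = Q(t)(x)` solves the generalized harmonic problem
`𝔄⁺q = 0` on `E × (0,∞)` (the defining integral converging absolutely) with initial
condition `Q(0) = u`. -/
theorem ctrw_overshoot_existence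
    {E : Type*} [MetricSpace E] [TopologicalSpace.SeparableSpace E] [LocallyCompactSpace E]
    (P : ℝ → C₀(E, ℝ) →L[ℝ] C₀(E, ℝ))
    (hP0 : P 0 = ContinuousLinearMap.id ℝ C₀(E, ℝ))
    (hPsg : ∀ s t : ℝ, 0 ≤ s → 0 ≤ t → P (s + t) = (P s).comp (P t))
    (hPpos : ∀ t : ℝ, 0 ≤ t → ∀ f : C₀(E, ℝ), (∀ x, 0 ≤ f x) → ∀ x, 0 ≤ P t f x)
    (hPcon : ∀ t : ℝ, 0 ≤ t → ∀ f : C₀(E, ℝ), ‖P t f‖ ≤ ‖f‖)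
    (hPsc : ∀ f : C₀(E, ℝ), Tendsto (fun t => P t f) (𝓝[≥] (0 : ℝ)) (𝓝 f))
    (ν : Measure ℝ)
    (hν1 : ∫⁻ s in Set.Ioi (0 : ℝ), ENNReal.ofReal (min 1 s) ∂ν ≠ ⊤)
    (hνinf : ν (Set.Ioi (0 : ℝ)) = ⊤)
    (hνpos : ∀ t : ℝ, 0 < t → 0 < ν (Set.Ioi t))
    (uφ : ℝ → ℝ) (huφm : Measurable uφ)
    (huφ0 : ∀ t : ℝ, 0 < t → 0 ≤ uφ t)
    (huφmono : ∀ s t : ℝ, 0 < s → s ≤ t → uφ t ≤ uφ s)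
    (hrenew : ∀ t : ℝ, 0 < t →
      ∫⁻ h in Set.Ioo 0 t, ν (Set.Ioi (t - h)) * ENNReal.ofReal (uφ h) = 1)
    (hlog : ∫⁻ t in Set.Ioo (0 : ℝ) 1, ENNReal.ofReal (|Real.log t| * uφ t) ≠ ⊤)
    (u Gu : C₀(E, ℝ))
    (hu : Tendsto (fun h : ℝ => h⁻¹ • (P h u - u)) (𝓝[>] (0 : ℝ)) (𝓝 Gu)) :
    (∀ (x : E) (t : ℝ), 0 < t →
      IntegrableOn
        (fun s : ℝ => (P s (cand P ν uφ u (max (t - s) 0))) x - (cand P ν uφ u t) x)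
        (Set.Ioi 0) ν ∧
      ∫ s in Set.Ioi (0 : ℝ),
        ((P s (cand P ν uφ u (max (t - s) 0))) x - (cand P ν uφ u t) x) ∂ν = 0) ∧
    cand P ν uφ u 0 = u := by
  have hF := sg_cont P hPsg hPcon hPsc u
  have hF' := sg_cont P hPsg hPcon hPsc Gu
  refine ⟨?_, by simp [cand]⟩
  intro x t ht
  have hsf := nu_sigmaFinite ν hν1
  set ν₀ := ν.restrict (Ioi (0 : ℝ)) with hν₀
  set f : ℝ → ℝ := fun r => (P (max r 0) u) x with hf
  set f' : ℝ → ℝ := fun r => (P (max r 0) Gu) x with hf'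
  have hfc : Continuous f := (evalC x).continuous.comp hF
  have hfc' : Continuous f' := (evalC x).continuous.comp hF'
  have hfb : ∀ r, |f r| ≤ ‖u‖ := fun r =>
    (abs_apply_le x _).trans (hPcon _ (le_max_right _ _) u)
  have hfb' : ∀ r, |f' r| ≤ ‖Gu‖ := fun r =>
    (abs_apply_le x _).trans (hPcon _ (le_max_right _ _) Gu)
  have hftc : ∀ a b, 0 ≤ a → a ≤ b → f b - f a = ∫ y in a..b, f' y := by
    intro a b ha hab
    have := sg_ftc P hPsg hPcon hPsc u Gu hu (evalC x) a b ha hab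
    simp only [evalC_apply] at this
    simp only [hf, hf', max_eq_left ha, max_eq_left (ha.trans hab)]
    exact this
  set μ : Measure ℝ := (volume.restrict (Ioo 0 t)).withDensity (fun h => ENNReal.ofReal (uφ h))
    with hμdef
  set g : ℝ → ℝ := fun z => f (t + max z 0) - f t with hg
  set k : ℝ → ℝ := (Ioi 0).indicator (fun z => f' (t + z)) with hk
  set w : ℝ → ℝ := fun h => ∫ r, g (r + h - t) ∂ν₀ with hw
  have hofm : Measurable (fun h => ENNReal.ofReal (uφ h)) := by fun_prop
  have hμfin : IsFiniteMeasure μ := by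
    refine isFiniteMeasure_withDensity ?_
    intro htop
    have h1 : ν (Ioi t) * ∫⁻ h in Ioo 0 t, ENNReal.ofReal (uφ h) ≤ 1 := by
      rw [← hrenew t ht, ← lintegral_const_mul _ hofm]
      refine setLIntegral_mono' measurableSet_Ioo fun h hh => ?_
      gcongr
      linarith [hh.1]
    rw [htop, ENNReal.mul_top (hνpos t ht).ne'] at h1
    simp at h1
  have hrestr : ∀ s, 0 ≤ s → μ.restrict (Iio (t - s)) =
      (volume.restrict (Ioo 0 (t - s))).withDensity (fun h => ENNReal.ofReal (uφ h)) := by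
    intro s hs
    rw [hμdef, restrict_withDensity measurableSet_Iio,
      Measure.restrict_restrict measurableSet_Iio]
    congr 2
    ext y
    simp only [mem_inter_iff, mem_Iio, mem_Ioo]
    exact ⟨fun h => ⟨h.2.1, h.1⟩, fun h => ⟨h.2, h.1, by linarith⟩⟩
  have hμae : ∀ᵐ h ∂μ, h ∈ Ioo 0 t :=
    (withDensity_absolutelyContinuous _ _).ae_le (ae_restrict_mem measurableSet_Ioo)
  have hμint : ∀ s, 0 ≤ s → ∀ F : ℝ → ℝ, ∫ h in Iio (t - s), F h ∂μ =
      ∫ h in Ioo 0 (t - s), uφ h * F h := by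
    intro s hs F
    rw [hrestr s hs, integral_withDensity_eq_integral_toReal_smul hofm
      (Eventually.of_forall fun _ => ENNReal.ofReal_lt_top)]
    refine setIntegral_congr_fun measurableSet_Ioo fun h hh => ?_
    simp only [smul_eq_mul]
    rw [ENNReal.toReal_ofReal (huφ0 h hh.1)]
  have hren : ∀ h, 0 < h → h ≤ t → ∫⁻ h' in Iio h, ν₀ (Ioi (h - h')) ∂μ = 1 := by
    intro h h0 h1
    have hm : Measurable fun h' => ν₀ (Ioi (h - h')) := by
      apply Monotone.measurable
      intro a b hab
      exact measure_mono (Ioi_subset_Ioi (by linarith))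
    have := hrestr (t - h) (by linarith)
    rw [sub_sub_cancel] at this
    rw [this, lintegral_withDensity_eq_lintegral_mul _ hofm hm, ← hrenew h h0]
    refine setLIntegral_congr_fun measurableSet_Ioo fun h' hh => ?_
    simp only [Pi.mul_apply]
    rw [mul_comm, hν₀, Measure.restrict_apply measurableSet_Ioi,
      inter_eq_left.2 (Ioi_subset_Ioi (by linarith [hh.2]))]
  -- the representation of `P_s Q(t-s)`
  have hA : ∀ s, 0 ≤ s → s < t →
      (P s (cand P ν uφ u (t - s))) x = f t + ∫ h in Iio (t - s), w (h + s) ∂μ := by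
    intro s hs hst
    obtain ⟨i1, e1⟩ := cand_func P ν hν1 uφ huφm huφ0 (t - s) (by linarith)
      (hrenew _ (by linarith)) u hF hPcon ((evalC x).comp (P s))
    obtain ⟨i2, e2⟩ := renew_real ν hν1 uφ huφm huφ0 (t - s) (hrenew _ (by linarith))
    rw [hμint s hs]
    simp only [ContinuousLinearMap.comp_apply, evalC_apply] at e1 i1
    have e3 : ∫ h in Ioo 0 (t - s), uφ h * w (h + s) = ∫ h in Ioo 0 (t - s),
        ((uφ h * ∫ r in Ioi (t - s - h), (P s (P (max (r + h) 0) u)) x ∂ν) -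
          uφ h * ν.real (Ioi (t - s - h)) * f t) := by
      refine setIntegral_congr_fun measurableSet_Ioo fun h hh => ?_
      have hpos : 0 < t - s - h := by linarith [hh.2]
      have e4 : w (h + s) = ∫ r in Ioi (t - s - h), (f (r + (h + s)) - f t) ∂ν := by
        have : ∀ r, g (r + (h + s) - t) =
            (Ioi (t - s - h)).indicator (fun r => f (r + (h + s)) - f t) r := by
          intro r
          by_cases hr : t - s - h < r
          · rw [indicator_of_mem (mem_Ioi.2 hr)]
            simp only [hg]
            rw [max_eq_left (by linarith)]
            congr 2; ring
          · rw [indicator_of_notMem (by simpa using hr)]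
            simp only [hg]
            rw [max_eq_right (by linarith)]
            simp
        simp only [hw]
        simp_rw [this]
        rw [integral_indicator measurableSet_Ioi, hν₀,
          Measure.restrict_restrict measurableSet_Ioi,
          inter_eq_left.2 (Ioi_subset_Ioi hpos.le)]
      have hfinm : IsFiniteMeasure (ν.restrict (Ioi (t - s - h))) :=
        ⟨by rw [Measure.restrict_apply_univ]; exact nu_Ioi_lt_top ν hν1 _ hpos⟩
      have e5 : ∫ r in Ioi (t - s - h), (P s (P (max (r + h) 0) u)) x ∂ν =
          ∫ r in Ioi (t - s - h), f (r + (h + s)) ∂ν := by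
        refine setIntegral_congr_fun measurableSet_Ioi fun r hr => ?_
        have hr' : t - s - h < r := hr
        have hh1 := hh.1
        simp only [hf]
        rw [max_eq_left (by linarith), max_eq_left (by linarith),
          ← ContinuousLinearMap.comp_apply, ← hPsg s (r + h) hs (by linarith)]
        congr 3; ring
      rw [e4, e5, integral_sub (inner_int ν hν1 f hfc ‖u‖ hfb _ _ hpos) (integrable_const _)]
      simp
      ring
    rw [e3, integral_sub i1 (i2.mul_const _), integral_mul_const, e2, ← e1]
    ring
  have hA0 : (cand P ν uφ u t) x = f t + ∫ h, w h ∂μ := by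
    have := hA 0 le_rfl ht
    rw [hP0] at this
    simp only [sub_zero, add_zero, ContinuousLinearMap.id_apply] at this
    rw [this]
    congr 2
    refine Measure.restrict_eq_self_of_ae_mem ?_
    filter_upwards [hμae] with h hh using hh.2
  have hlip : ∀ z, 0 ≤ z → |f (t + z) - f t| ≤ ‖Gu‖ * z := by
    intro z hz
    rw [hftc t (t + z) ht.le (by linarith)]
    have := intervalIntegral.norm_integral_le_of_norm_le_const (a := t) (b := t + z)
      (f := f') (C := ‖Gu‖) (fun y _ => hfb' y)
    rwa [add_sub_cancel_left, abs_of_nonneg hz] at this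
  have hcore := core μ ν₀ t ht hμae (ae_restrict_mem measurableSet_Ioi) hν1 hren g k
    (by simp only [hg]; fun_prop)
    ((hfc'.comp (continuous_const.add continuous_id)).measurable.indicator measurableSet_Ioi)
    (2 * ‖u‖ + ‖Gu‖) (by positivity) ?_ ?_ ?_ w rfl
  · have hD : ∀ s ∈ Ioi (0 : ℝ),
        g (s - t) + ∫ h in Iio (t - s), w (h + s) ∂μ - ∫ h, w h ∂μ =
        (P s (cand P ν uφ u (max (t - s) 0))) x - (cand P ν uφ u t) x := by
      intro s hs
      have hs0 : 0 < s := hs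
      rcases lt_or_ge s t with h | h
      · rw [max_eq_left (by linarith), hA s hs0.le h, hA0]
        simp only [hg]
        rw [max_eq_right (by linarith : s - t ≤ 0), add_zero]
        ring
      · rw [max_eq_right (by linarith), hA0, hμint s hs0.le,
          Ioo_eq_empty (by simp; linarith)]
        have hc0 : cand P ν uφ u 0 = u := by simp [cand]
        rw [hc0]
        simp only [hg, hf]
        rw [max_eq_left (by linarith : 0 ≤ s - t), max_eq_left (by linarith : 0 ≤ t + (s - t)),
          add_sub_cancel]
        simp
        ring
    refine ⟨IntegrableOn.congr_fun hcore.1 hD measurableSet_Ioi, ?_⟩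
    rw [← setIntegral_congr_fun measurableSet_Ioi hD]
    exact hcore.2
  · intro z
    have hz : 0 ≤ max z 0 := le_max_right _ _
    have h1 := hlip _ hz
    have h2 : |f (t + max z 0) - f t| ≤ 2 * ‖u‖ := by
      refine (abs_sub _ _).trans ?_
      linarith [hfb (t + max z 0), hfb t]
    simp only [hg]
    rw [mul_min_of_nonneg _ _ (by positivity)]
    refine le_min ?_ ?_
    · linarith [norm_nonneg Gu]
    · nlinarith [mul_nonneg (norm_nonneg u) hz]
  · intro z
    by_cases hz : 0 < z
    · rw [if_pos hz]
      simp only [hk]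
      rw [indicator_of_mem (mem_Ioi.2 hz)]
      linarith [hfb' (t + z), norm_nonneg u]
    · rw [if_neg hz]
      simp only [hk]
      rw [indicator_of_notMem (by simpa using hz)]
      simp
  · intro a b hab
    simp only [hk]
    rw [setIntegral_indicator measurableSet_Ioi]
    have hset : Ioc a b ∩ Ioi 0 = Ioc (max a 0) (max b 0) := by
      ext y
      simp only [mem_inter_iff, mem_Ioc, mem_Ioi, max_lt_iff, le_max_iff]
      constructor
      · rintro ⟨⟨h1, h2⟩, h3⟩; exact ⟨⟨h1, h3⟩, Or.inl h2⟩
      · rintro ⟨⟨h1, h3⟩, h2 | h2⟩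
        · exact ⟨⟨h1, h2⟩, h3⟩
        · linarith
    have hm := max_le_max_right 0 hab
    rw [hset, ← intervalIntegral.integral_of_le hm]
    rw [intervalIntegral.integral_comp_add_left f' t,
      ← hftc _ _ (by positivity) (by linarith)]
    simp only [hg]
    ring
end

section
/- Regularity of the candidate solution: for every u in D(G), the map (x,t) ↦ Q(t)(x) is jointly continuous on E × [0,∞). -/
open MeasureTheory Set Filter Topology
open scoped ZeroAtInfty

section Aux

variable {X : Type*} [NormedAddCommGroup X] [NormedSpace ℝ X]

/-- inner integral -/
noncomputable def gIn (F : ℝ → X) (ν : Measure ℝ) (t s : ℝ) : X :=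
  ∫ r in Ioi s, F (r + (t - s)) ∂ν

noncomputable def hIn (F : ℝ → X) (ν : Measure ℝ) (w : ℝ → ℝ) (t s : ℝ) : X :=
  (Ioo 0 t).indicator (fun s => w (t - s) • gIn F ν t s) s

noncomputable def gW (ν : Measure ℝ) (w : ℝ → ℝ) (t s : ℝ) : ℝ :=
  (Ioo 0 t).indicator (fun s => w (t - s) * ν.real (Ioi s)) s

lemma indic_flip (t s : ℝ) (f : ℝ → X) :
    (Ioo 0 t).indicator f (t - s) = (Ioo 0 t).indicator (fun s => f (t - s)) s := by
  by_cases h : s ∈ Ioo 0 t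
  · rw [indicator_of_mem h, indicator_of_mem]
    exact ⟨by linarith [h.2], by linarith [h.1]⟩
  · rw [indicator_of_notMem h, indicator_of_notMem]
    intro h'
    exact h ⟨by linarith [h'.2], by linarith [h'.1]⟩

lemma nu_fin {ν : Measure ℝ}
    (hν1 : ∫⁻ s in Set.Ioi (0 : ℝ), ENNReal.ofReal (min 1 s) ∂ν ≠ ⊤) {s : ℝ} (hs : 0 < s) :
    ν (Ioi s) ≠ ⊤ := by
  intro htop
  apply hν1
  rw [eq_top_iff]
  have h0 : ENNReal.ofReal (min 1 s) ≠ 0 := by simp [hs]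
  calc (⊤ : ENNReal) = ENNReal.ofReal (min 1 s) * ν (Ioi s) := by
        rw [htop, ENNReal.mul_top h0]
    _ = ∫⁻ r in Ioi s, ENNReal.ofReal (min 1 s) ∂ν := by simp
    _ ≤ ∫⁻ r in Ioi s, ENNReal.ofReal (min 1 r) ∂ν := by
        apply setLIntegral_mono' measurableSet_Ioi
        intro r hr
        exact ENNReal.ofReal_le_ofReal (min_le_min le_rfl (le_of_lt hr))
    _ ≤ _ := lintegral_mono_set (Ioi_subset_Ioi hs.le)

lemma nu_sf {ν : Measure ℝ}
    (hν1 : ∫⁻ s in Set.Ioi (0 : ℝ), ENNReal.ofReal (min 1 s) ∂ν ≠ ⊤) :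
    SFinite (ν.restrict (Ioi 0)) := by
  have : ν.restrict (Ioi 0) = ((ν.restrict (Ioi 0)).withDensity
      (fun s => ENNReal.ofReal (min 1 s))).withDensity
      (fun s => (ENNReal.ofReal (min 1 s))⁻¹) := by
    rw [withDensity_inv_same]
    · fun_prop
    · filter_upwards [ae_restrict_mem measurableSet_Ioi] with s hs
      have : 0 < s := hs
      simp [this]
    · simp
  rw [this]
  have := isFiniteMeasure_withDensity hν1
  infer_instance

variable {F : ℝ → X} {C : ℝ} {ν : Measure ℝ} {w : ℝ → ℝ}

lemma gIn_bound (hFC : ∀ r, ‖F r‖ ≤ C)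
    (hfin : ∀ s : ℝ, 0 < s → ν (Ioi s) ≠ ⊤) {t s : ℝ} (hs : 0 < s) :
    ‖gIn F ν t s‖ ≤ C * ν.real (Ioi s) :=
  norm_setIntegral_le_of_norm_le_const (hfin s hs).lt_top (fun r _ => hFC _)

lemma hIn_bound (hFC : ∀ r, ‖F r‖ ≤ C)
    (hfin : ∀ s : ℝ, 0 < s → ν (Ioi s) ≠ ⊤) (hw0 : ∀ t, 0 < t → 0 ≤ w t) (t s : ℝ) :
    ‖hIn F ν w t s‖ ≤ C * gW ν w t s := by
  unfold hIn gW
  by_cases h : s ∈ Ioo 0 t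
  · rw [indicator_of_mem h, indicator_of_mem h, norm_smul]
    have h1 := hw0 (t - s) (by linarith [h.2])
    rw [Real.norm_of_nonneg h1]
    have := mul_le_mul_of_nonneg_left (gIn_bound hFC hfin (t := t) h.1) h1
    linarith
  · rw [indicator_of_notMem h, indicator_of_notMem h]; simp

lemma gW_nonneg (hw0 : ∀ t, 0 < t → 0 ≤ w t) (t s : ℝ) : 0 ≤ gW ν w t s := by
  unfold gW
  apply indicator_nonneg
  intro s h
  exact mul_nonneg (hw0 _ (by linarith [h.2])) (by positivity)

lemma nu_anti : Measurable (fun s => ν (Ioi s)) :=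
  Antitone.measurable (fun _ _ h => measure_mono (Ioi_subset_Ioi h))

lemma gW_meas (hwm : Measurable w) (t : ℝ) : Measurable (gW ν w t) := by
  unfold gW
  apply Measurable.indicator _ measurableSet_Ioo
  exact (hwm.comp (by fun_prop)).mul nu_anti.ennreal_toReal

lemma gW_lint (hfin : ∀ s : ℝ, 0 < s → ν (Ioi s) ≠ ⊤) (hw0 : ∀ t, 0 < t → 0 ≤ w t)
    (hrenew : ∀ t : ℝ, 0 < t →
      ∫⁻ h in Set.Ioo 0 t, ν (Set.Ioi (t - h)) * ENNReal.ofReal (w h) = 1) {t : ℝ} (ht : 0 < t) :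
    ∫⁻ s, ENNReal.ofReal (gW ν w t s) = 1 := by
  rw [← hrenew t ht, ← lintegral_indicator measurableSet_Ioo,
    ← lintegral_sub_left_eq_self (fun s => ENNReal.ofReal (gW ν w t s)) t]
  congr 1
  ext h
  unfold gW
  rw [indic_flip]
  by_cases hh : h ∈ Ioo 0 t
  · rw [indicator_of_mem hh, indicator_of_mem hh, sub_sub_cancel,
      ENNReal.ofReal_mul (hw0 _ hh.1), ofReal_measureReal (hfin _ (by linarith [hh.2])), mul_comm]
  · rw [indicator_of_notMem hh, indicator_of_notMem hh]; simp

lemma gW_int (hfin : ∀ s : ℝ, 0 < s → ν (Ioi s) ≠ ⊤) (hw0 : ∀ t, 0 < t → 0 ≤ w t)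
    (hwm : Measurable w)
    (hrenew : ∀ t : ℝ, 0 < t →
      ∫⁻ h in Set.Ioo 0 t, ν (Set.Ioi (t - h)) * ENNReal.ofReal (w h) = 1) {t : ℝ} (ht : 0 < t) :
    Integrable (gW ν w t) ∧ ∫ s, gW ν w t s = 1 := by
  have h := gW_lint hfin hw0 hrenew ht
  constructor
  · refine ⟨(gW_meas hwm t).aestronglyMeasurable, ?_⟩
    rw [hasFiniteIntegral_iff_ofReal (Eventually.of_forall (gW_nonneg hw0 t)), h]
    simp
  · rw [integral_eq_lintegral_of_nonneg_ae (Eventually.of_forall (gW_nonneg hw0 t))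
      (gW_meas hwm t).aestronglyMeasurable, h]; simp

lemma hIn_meas (hF : Continuous F) (hwm : Measurable w) [SFinite (ν.restrict (Ioi 0))] (t : ℝ) :
    StronglyMeasurable (hIn F ν w t) := by
  have h1 : StronglyMeasurable (fun s => ∫ r in Ioi 0, (if s < r then F (r + (t - s)) else 0) ∂ν) := by
    apply StronglyMeasurable.integral_prod_right
    apply StronglyMeasurable.ite
    · exact measurableSet_lt measurable_fst measurable_snd
    · exact (hF.comp (by fun_prop)).stronglyMeasurable
    · exact stronglyMeasurable_const
  have h2 : hIn F ν w t = (Ioo 0 t).indicator (fun s => w (t - s) •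
      ∫ r in Ioi 0, (if s < r then F (r + (t - s)) else 0) ∂ν) := by
    ext s
    unfold hIn
    by_cases h : s ∈ Ioo 0 t
    · rw [indicator_of_mem h, indicator_of_mem h]
      congr 1
      have : (fun r => if s < r then F (r + (t - s)) else 0) =
        (Ioi s).indicator (fun r => F (r + (t - s))) := by
        ext r; simp [indicator]
      rw [this, setIntegral_indicator measurableSet_Ioi, inter_eq_right.2 (Ioi_subset_Ioi h.1.le)]
      rfl
    · rw [indicator_of_notMem h, indicator_of_notMem h]
  rw [h2]
  exact ((hwm.comp (by fun_prop)).stronglyMeasurable.smul h1).indicator measurableSet_Ioo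

lemma hIn_int (hF : Continuous F) (hFC : ∀ r, ‖F r‖ ≤ C)
    [SFinite (ν.restrict (Ioi 0))]
    (hfin : ∀ s : ℝ, 0 < s → ν (Ioi s) ≠ ⊤) (hw0 : ∀ t, 0 < t → 0 ≤ w t)
    (hwm : Measurable w)
    (hrenew : ∀ t : ℝ, 0 < t →
      ∫⁻ h in Set.Ioo 0 t, ν (Set.Ioi (t - h)) * ENNReal.ofReal (w h) = 1) {t : ℝ} (ht : 0 < t) :
    Integrable (hIn F ν w t) :=
  ((gW_int hfin hw0 hwm hrenew ht).1.const_mul C).mono' (hIn_meas hF hwm t).aestronglyMeasurable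
    (Eventually.of_forall (hIn_bound hFC hfin hw0 t))

lemma gIn_tendsto (hF : Continuous F) (hFC : ∀ r, ‖F r‖ ≤ C)
    (hfin : ∀ s : ℝ, 0 < s → ν (Ioi s) ≠ ⊤) {s : ℝ} (hs : 0 < s) (t₀ : ℝ) :
    Tendsto (fun t => gIn F ν t s) (𝓝 t₀) (𝓝 (gIn F ν t₀ s)) := by
  have : IsFiniteMeasure (ν.restrict (Ioi s)) := ⟨by simpa using (hfin s hs).lt_top⟩
  apply tendsto_integral_filter_of_dominated_convergence (fun _ => C)
  · exact Eventually.of_forall fun t => (hF.comp (by fun_prop)).aestronglyMeasurable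
  · exact Eventually.of_forall fun t => Eventually.of_forall fun r => hFC _
  · exact integrable_const _
  · exact Eventually.of_forall fun r =>
      (hF.comp (by fun_prop : Continuous fun t : ℝ => r + (t - s))).tendsto _

lemma w_ae (hwa : ∀ s t : ℝ, 0 < s → s ≤ t → w t ≤ w s) (t₀ : ℝ) :
    ∀ᵐ s : ℝ, s < t₀ → ContinuousAt w (t₀ - s) := by
  have hc : Set.Countable {x ∈ Ioi (0:ℝ) | ¬ ContinuousWithinAt w (Ioi 0) x} :=
    AntitoneOn.countable_not_continuousWithinAt (fun s hs t _ hst => hwa s t hs hst)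
  have hc' := hc.preimage (f := fun s : ℝ => t₀ - s) (sub_right_injective)
  filter_upwards [hc'.ae_notMem volume] with s hs hst
  by_contra hcon
  apply hs
  refine ⟨by simpa using hst, fun h => hcon (h.continuousAt (Ioi_mem_nhds (by linarith)))⟩

lemma indic_tendsto {f : ℝ → ℝ → X} {t₀ s : ℝ} (hst : s ≠ t₀)
    (h : s ∈ Ioo 0 t₀ → Tendsto (fun t => f t s) (𝓝 t₀) (𝓝 (f t₀ s))) :
    Tendsto (fun t => (Ioo 0 t).indicator (f t) s) (𝓝 t₀) (𝓝 ((Ioo 0 t₀).indicator (f t₀) s)) := by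
  by_cases hs : s ∈ Ioo 0 t₀
  · rw [indicator_of_mem hs]
    apply (h hs).congr'
    filter_upwards [Ioi_mem_nhds hs.2] with t ht
    have hm : s ∈ Ioo 0 t := ⟨hs.1, ht⟩
    rw [indicator_of_mem hm]
  · rw [indicator_of_notMem hs]
    apply tendsto_const_nhds.congr'
    by_cases h0 : 0 < s
    · have : t₀ < s := by
        by_contra hh
        exact hs ⟨h0, lt_of_le_of_ne (not_lt.1 hh) hst⟩
      filter_upwards [Iio_mem_nhds this] with t ht
      rw [indicator_of_notMem]
      exact fun h => lt_asymm h.2 ht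
    · refine Eventually.of_forall fun t => ?_
      beta_reduce
      rw [indicator_of_notMem]
      exact fun h => h0 h.1

lemma cont_pos (hF : Continuous F) (hFC : ∀ r, ‖F r‖ ≤ C)
    [SFinite (ν.restrict (Ioi 0))]
    (hfin : ∀ s : ℝ, 0 < s → ν (Ioi s) ≠ ⊤) (hw0 : ∀ t, 0 < t → 0 ≤ w t)
    (hwm : Measurable w) (hwa : ∀ s t : ℝ, 0 < s → s ≤ t → w t ≤ w s)
    (hrenew : ∀ t : ℝ, 0 < t →
      ∫⁻ h in Set.Ioo 0 t, ν (Set.Ioi (t - h)) * ENNReal.ofReal (w h) = 1) {t₀ : ℝ} (ht : 0 < t₀) :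
    Tendsto (fun t => ∫ s, hIn F ν w t s) (𝓝 t₀) (𝓝 (∫ s, hIn F ν w t₀ s)) := by
  have hI := fun {t : ℝ} (ht : 0 < t) => hIn_int hF hFC hfin hw0 hwm hrenew ht
  have hG := fun {t : ℝ} (ht : 0 < t) => gW_int hfin hw0 hwm hrenew ht
  set D : ℝ → ℝ → ℝ := fun t s =>
    ‖hIn F ν w t s - hIn F ν w t₀ s‖ - C * (gW ν w t s - gW ν w t₀ s) with hD
  have hDm : ∀ t, 0 < t → Integrable (D t) := fun t ht' =>
    ((hI ht').sub (hI ht)).norm.sub (((hG ht').1.sub (hG ht).1).const_mul C)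
  have hne : ∀ᵐ s : ℝ, s ≠ t₀ := by
    simp [ae_iff]
  have key : Tendsto (fun t => ∫ s, max (D t s) 0) (𝓝 t₀) (𝓝 (∫ s : ℝ, (0:ℝ))) := by
    apply tendsto_integral_filter_of_dominated_convergence (fun s => 2 * C * gW ν w t₀ s)
    · filter_upwards [Ioi_mem_nhds ht] with t ht'
      exact ((hDm t ht').pos_part).aestronglyMeasurable
    · refine Eventually.of_forall fun t => Eventually.of_forall fun s => ?_
      have hC : 0 ≤ C := (norm_nonneg _).trans (hFC 0)
      rw [Real.norm_of_nonneg (le_max_right _ _)]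
      have h1 := norm_sub_le (hIn F ν w t s) (hIn F ν w t₀ s)
      have h2 := hIn_bound hFC hfin hw0 t s
      have h3 := hIn_bound hFC hfin hw0 t₀ s
      have h4 := mul_nonneg hC (gW_nonneg (ν := ν) hw0 t₀ s)
      apply max_le
      · simp only [hD]; linarith
      · linarith
    · exact (hG ht).1.const_mul _
    · filter_upwards [w_ae hwa t₀, hne] with s hs hst
      have hw' : s ∈ Ioo 0 t₀ → Tendsto (fun t => w (t - s)) (𝓝 t₀) (𝓝 (w (t₀ - s))) := fun h =>
        (hs h.2).tendsto.comp ((by fun_prop : Continuous fun t : ℝ => t - s).tendsto t₀)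
      have h1 : Tendsto (fun t => hIn F ν w t s) (𝓝 t₀) (𝓝 (hIn F ν w t₀ s)) :=
        indic_tendsto (f := fun t s => w (t - s) • gIn F ν t s) hst
          (fun h => (hw' h).smul (gIn_tendsto hF hFC hfin h.1 t₀))
      have h2 : Tendsto (fun t => gW ν w t s) (𝓝 t₀) (𝓝 (gW ν w t₀ s)) :=
        indic_tendsto (f := fun t s => w (t - s) * ν.real (Ioi s)) hst
          (fun h => (hw' h).mul_const _)
      have h3 := ((h1.sub_const (hIn F ν w t₀ s)).norm.sub
        ((h2.sub_const (gW ν w t₀ s)).const_mul C)).max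
        (tendsto_const_nhds (x := (0:ℝ)))
      simpa using h3
  rw [tendsto_iff_norm_sub_tendsto_zero]
  rw [integral_zero] at key
  apply squeeze_zero' (Eventually.of_forall fun _ => norm_nonneg _) _ key
  filter_upwards [Ioi_mem_nhds ht] with t ht'
  rw [← integral_sub (hI ht') (hI ht)]
  calc _ ≤ ∫ s, ‖hIn F ν w t s - hIn F ν w t₀ s‖ := norm_integral_le_integral_norm _
    _ = ∫ s, D t s := by
      have i1 : Integrable (fun s => ‖hIn F ν w t s - hIn F ν w t₀ s‖) :=
        ((hI ht').sub (hI ht)).norm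
      have i2 : Integrable (fun s => C * (gW ν w t s - gW ν w t₀ s)) :=
        ((hG ht').1.sub (hG ht).1).const_mul C
      simp only [hD]
      rw [integral_sub i1 i2, integral_const_mul,
        integral_sub (hG ht').1 (hG ht).1, (hG ht').2, (hG ht).2]
      simp
    _ ≤ _ := integral_mono (hDm t ht') (hDm t ht').pos_part (fun s => le_max_left _ _)

lemma w_int (hνpos : ∀ t : ℝ, 0 < t → 0 < ν (Set.Ioi t))
    (hwm : Measurable w)
    (hrenew : ∀ t : ℝ, 0 < t →
      ∫⁻ h in Set.Ioo 0 t, ν (Set.Ioi (t - h)) * ENNReal.ofReal (w h) = 1)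
    (hw0 : ∀ t, 0 < t → 0 ≤ w t) :
    Integrable ((Ioo (0:ℝ) 1).indicator w) := by
  rw [integrable_indicator_iff measurableSet_Ioo]
  refine ⟨hwm.aestronglyMeasurable, ?_⟩
  rw [hasFiniteIntegral_iff_ofReal (by
    filter_upwards [ae_restrict_mem measurableSet_Ioo] with s hs using hw0 s hs.1)]
  have h1 : ν (Ioi 1) * ∫⁻ h in Ioo (0:ℝ) 1, ENNReal.ofReal (w h) ≤ 1 := by
    rw [← hrenew 1 one_pos, ← lintegral_const_mul _ hwm.ennreal_ofReal]
    apply setLIntegral_mono' measurableSet_Ioo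
    intro h hh
    gcongr
    linarith [hh.1]
  by_contra hcon
  rw [not_lt, top_le_iff] at hcon
  rw [hcon, ENNReal.mul_top (hνpos 1 one_pos).ne'] at h1
  simp at h1

lemma w_tendsto (hνpos : ∀ t : ℝ, 0 < t → 0 < ν (Set.Ioi t))
    (hwm : Measurable w)
    (hrenew : ∀ t : ℝ, 0 < t →
      ∫⁻ h in Set.Ioo 0 t, ν (Set.Ioi (t - h)) * ENNReal.ofReal (w h) = 1)
    (hw0 : ∀ t, 0 < t → 0 ≤ w t) :
    Tendsto (fun t => ∫ s, (Ioo 0 t).indicator (fun s => w (t - s)) s) (𝓝[>] 0) (𝓝 0) := by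
  have : ∀ t, ∫ s, (Ioo 0 t).indicator (fun s => w (t - s)) s = ∫ s, (Ioo 0 t).indicator w s := by
    intro t
    rw [← integral_sub_left_eq_self ((Ioo 0 t).indicator w) volume t]
    simp_rw [indic_flip]
  simp_rw [this]
  have hz : (0 : ℝ) = ∫ _ : ℝ, (0 : ℝ) := by simp
  suffices h : Tendsto (fun t => ∫ s, (Ioo 0 t).indicator w s) (𝓝[>] 0) (𝓝 (∫ _ : ℝ, (0 : ℝ))) by
    rwa [← hz] at h
  apply tendsto_integral_filter_of_dominated_convergence ((Ioo (0:ℝ) 1).indicator w)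
  · exact Eventually.of_forall fun t => (hwm.indicator measurableSet_Ioo).aestronglyMeasurable
  · filter_upwards [mem_nhdsWithin_of_mem_nhds (Iio_mem_nhds one_pos)] with t ht
    refine Eventually.of_forall fun s => ?_
    have hn : ∀ t, 0 ≤ (Ioo 0 t).indicator w s := fun t => indicator_nonneg (fun s h => hw0 s h.1) s
    rw [Real.norm_of_nonneg (hn t)]
    by_cases h : s ∈ Ioo 0 t
    · have hm : s ∈ Ioo (0:ℝ) 1 := ⟨h.1, h.2.trans ht⟩
      rw [indicator_of_mem h, indicator_of_mem hm]
    · rw [indicator_of_notMem h]; exact hn 1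
  · exact w_int hνpos hwm hrenew hw0
  · refine Eventually.of_forall fun s => ?_
    apply tendsto_const_nhds.congr'
    by_cases h0 : 0 < s
    · filter_upwards [mem_nhdsWithin_of_mem_nhds (Iio_mem_nhds h0)] with t ht
      rw [indicator_of_notMem]
      exact fun h => lt_asymm h.2 ht
    · refine Eventually.of_forall fun t => ?_
      beta_reduce
      rw [indicator_of_notMem]
      exact fun h => h0 h.1

lemma w_int' (hνpos : ∀ t : ℝ, 0 < t → 0 < ν (Set.Ioi t))
    (hwm : Measurable w)
    (hrenew : ∀ t : ℝ, 0 < t →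
      ∫⁻ h in Set.Ioo 0 t, ν (Set.Ioi (t - h)) * ENNReal.ofReal (w h) = 1)
    (hw0 : ∀ t, 0 < t → 0 ≤ w t) {t : ℝ} (ht : t < 1) :
    Integrable (fun s => (Ioo 0 t).indicator (fun s => w (t - s)) s) := by
  have h := (w_int hνpos hwm hrenew hw0).indicator (measurableSet_Ioo (a := (0:ℝ)) (b := t))
  rw [indicator_indicator, inter_eq_left.2 (Ioo_subset_Ioo_right ht.le)] at h
  simpa only [indic_flip] using h.comp_sub_left t

lemma cont_zero [CompleteSpace X] (hF : Continuous F) (hFC : ∀ r, ‖F r‖ ≤ C)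
    [SFinite (ν.restrict (Ioi 0))] (hνpos : ∀ t : ℝ, 0 < t → 0 < ν (Set.Ioi t))
    (hfin : ∀ s : ℝ, 0 < s → ν (Ioi s) ≠ ⊤) (hw0 : ∀ t, 0 < t → 0 ≤ w t)
    (hwm : Measurable w)
    (hrenew : ∀ t : ℝ, 0 < t →
      ∫⁻ h in Set.Ioo 0 t, ν (Set.Ioi (t - h)) * ENNReal.ofReal (w h) = 1) :
    Tendsto (fun t => ∫ s, hIn F ν w t s) (𝓝[>] 0) (𝓝 (F 0)) := by
  have hC : 0 ≤ C := (norm_nonneg _).trans (hFC 0)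
  rw [Metric.tendsto_nhds]
  intro ε hε
  obtain ⟨δ, hδ, hFδ⟩ := Metric.continuous_iff.1 hF 0 (ε / 2) (by positivity)
  have hw := (w_tendsto hνpos hwm hrenew hw0).const_mul (2 * C * ν.real (Ioi (δ / 2)))
  rw [mul_zero] at hw
  filter_upwards [hw.eventually (gt_mem_nhds (half_pos hε)), self_mem_nhdsWithin,
    mem_nhdsWithin_of_mem_nhds (Iio_mem_nhds one_pos),
    mem_nhdsWithin_of_mem_nhds (Iio_mem_nhds (half_pos hδ))] with t h1 ht ht1 htδ
  have ht : 0 < t := ht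
  have ht1 : t < 1 := ht1
  have htδ : t < δ / 2 := htδ
  have hI := hIn_int hF hFC hfin hw0 hwm hrenew ht
  obtain ⟨hGi, hG1⟩ := gW_int hfin hw0 hwm hrenew ht
  have hW := w_int' hνpos hwm hrenew hw0 ht1
  have e : F 0 = ∫ s, gW ν w t s • F 0 := by
    rw [integral_smul_const, hG1, one_smul]
  rw [dist_eq_norm]
  nth_rw 1 [e]
  rw [← integral_sub hI (hGi.smul_const _)]
  set b : ℝ → ℝ := fun s => ε / 2 * gW ν w t s + 2 * C * ν.real (Ioi (δ / 2)) *
    (Ioo 0 t).indicator (fun s => w (t - s)) s with hb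
  have hpt : ∀ s, ‖hIn F ν w t s - gW ν w t s • F 0‖ ≤ b s := by
    intro s
    simp only [hb, hIn, gW]
    by_cases h : s ∈ Ioo 0 t
    · simp only [indicator_of_mem h]
      have hw' := hw0 (t - s) (by linarith [h.2])
      have : IsFiniteMeasure (ν.restrict (Ioi s)) := ⟨by simpa using (hfin s h.1).lt_top⟩
      have hFi : Integrable (fun r => F (r + (t - s))) (ν.restrict (Ioi s)) :=
        (integrable_const C).mono' (hF.comp (by fun_prop)).aestronglyMeasurable
          (Eventually.of_forall fun r => hFC _)
      have e2 : ν.real (Ioi s) • F 0 = ∫ r in Ioi s, F 0 ∂ν := by simp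
      rw [mul_smul, ← smul_sub, norm_smul, Real.norm_of_nonneg hw', e2, gIn,
        ← integral_sub hFi (integrable_const _)]
      have h5 : ‖∫ r in Ioi s, (F (r + (t - s)) - F 0) ∂ν‖ ≤
          ε / 2 * ν.real (Ioi s) + 2 * C * ν.real (Ioi (δ / 2)) := by
        have hi2 : Integrable ((Ioi (δ / 2)).indicator (fun _ => 2 * C)) (ν.restrict (Ioi s)) :=
          (integrable_const _).indicator measurableSet_Ioi
        calc _ ≤ ∫ r in Ioi s, (ε / 2 + (Ioi (δ / 2)).indicator (fun _ => 2 * C) r) ∂ν := by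
              apply norm_integral_le_of_norm_le ((integrable_const _).add hi2)
              filter_upwards [ae_restrict_mem measurableSet_Ioi] with r hr
              have hr : s < r := hr
              rw [Pi.add_apply]
              by_cases hrd : r ∈ Ioi (δ / 2)
              · rw [indicator_of_mem hrd]
                have := norm_sub_le (F (r + (t - s))) (F 0)
                linarith [hFC (r + (t - s)), hFC 0]
              · rw [indicator_of_notMem hrd, add_zero, ← dist_eq_norm]
                apply (hFδ _ _).le
                have : r ≤ δ / 2 := not_lt.1 hrd
                rw [Real.dist_0_eq_abs, abs_of_pos (by linarith [h.2])]
                linarith [h.1]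
          _ = ε / 2 * ν.real (Ioi s) + 2 * C * (ν.restrict (Ioi s)).real (Ioi (δ / 2)) := by
              rw [integral_add (integrable_const _) hi2, integral_indicator measurableSet_Ioi]
              simp [mul_comm]
          _ ≤ _ := by
              gcongr
              refine ENNReal.toReal_mono (hfin _ (by positivity)) (Measure.restrict_apply_le _ _)
      have := mul_le_mul_of_nonneg_left h5 hw'
      linarith
    · simp [indicator_of_notMem h]
  calc _ ≤ ∫ s, b s := norm_integral_le_of_norm_le
        ((hGi.const_mul _).add (hW.const_mul _)) (Eventually.of_forall hpt)
    _ = ε / 2 * 1 + 2 * C * ν.real (Ioi (δ / 2)) *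
          ∫ s, (Ioo 0 t).indicator (fun s => w (t - s)) s := by
        simp only [hb]
        rw [integral_add (hGi.const_mul _) (hW.const_mul _), integral_const_mul,
          integral_const_mul, hG1]
    _ < ε := by linarith

end Aux

/-- Regularity of the candidate solution: for every `u ∈ D(G)` the map
`(x,t) ↦ Q(t)(x)` is jointly continuous on `E × [0,∞)`. -/
theorem ctrw_overshoot_joint_continuity
    {E : Type*} [MetricSpace E] [TopologicalSpace.SeparableSpace E] [LocallyCompactSpace E]
    (P : ℝ → C₀(E, ℝ) →L[ℝ] C₀(E, ℝ))
    (hP0 : P 0 = ContinuousLinearMap.id ℝ C₀(E, ℝ))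
    (hPsg : ∀ s t : ℝ, 0 ≤ s → 0 ≤ t → P (s + t) = (P s).comp (P t))
    (hPpos : ∀ t : ℝ, 0 ≤ t → ∀ f : C₀(E, ℝ), (∀ x, 0 ≤ f x) → ∀ x, 0 ≤ P t f x)
    (hPcon : ∀ t : ℝ, 0 ≤ t → ∀ f : C₀(E, ℝ), ‖P t f‖ ≤ ‖f‖)
    (hPsc : ∀ f : C₀(E, ℝ), Tendsto (fun t => P t f) (𝓝[≥] (0 : ℝ)) (𝓝 f))
    (ν : Measure ℝ)
    (hν1 : ∫⁻ s in Set.Ioi (0 : ℝ), ENNReal.ofReal (min 1 s) ∂ν ≠ ⊤)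
    (hνinf : ν (Set.Ioi (0 : ℝ)) = ⊤)
    (hνpos : ∀ t : ℝ, 0 < t → 0 < ν (Set.Ioi t))
    (uφ : ℝ → ℝ) (huφm : Measurable uφ)
    (huφ0 : ∀ t : ℝ, 0 < t → 0 ≤ uφ t)
    (huφmono : ∀ s t : ℝ, 0 < s → s ≤ t → uφ t ≤ uφ s)
    (hrenew : ∀ t : ℝ, 0 < t →
      ∫⁻ h in Set.Ioo 0 t, ν (Set.Ioi (t - h)) * ENNReal.ofReal (uφ h) = 1)
    (hlog : ∫⁻ t in Set.Ioo (0 : ℝ) 1, ENNReal.ofReal (|Real.log t| * uφ t) ≠ ⊤)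
    (u Gu : C₀(E, ℝ))
    (hu : Tendsto (fun h : ℝ => h⁻¹ • (P h u - u)) (𝓝[>] (0 : ℝ)) (𝓝 Gu)) :
    ContinuousOn (fun q : E × ℝ => (cand P ν uφ u q.2) q.1) {q : E × ℝ | 0 ≤ q.2} := by
  have hsf := nu_sf hν1
  have hfin := fun s (hs : 0 < s) => nu_fin hν1 hs
  set F : ℝ → C₀(E, ℝ) := fun r => P (max r 0) u with hFdef
  have hFC : ∀ r, ‖F r‖ ≤ ‖u‖ := fun r => hPcon _ (le_max_right _ _) u
  have hF : Continuous F := by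
    have hdiff : ∀ a b : ℝ, ‖F a - F b‖ ≤ ‖P |max a 0 - max b 0| u - u‖ := by
      have main : ∀ a b : ℝ, 0 ≤ b → b ≤ a → ‖P a u - P b u‖ ≤ ‖P |a - b| u - u‖ := by
        intro a b hb hab
        rw [abs_of_nonneg (sub_nonneg.2 hab)]
        have : P a u = P b (P (a - b) u) := by
          have := hPsg b (a - b) hb (sub_nonneg.2 hab)
          rw [add_sub_cancel] at this
          rw [this]; rfl
        rw [this, ← map_sub]
        exact hPcon b hb _
      intro a b
      rcases le_total (max b 0) (max a 0) with h | h
      · exact main _ _ (le_max_right _ _) h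
      · rw [norm_sub_rev, abs_sub_comm]
        exact main _ _ (le_max_right _ _) h
    rw [continuous_iff_continuousAt]
    intro b
    rw [ContinuousAt, tendsto_iff_norm_sub_tendsto_zero]
    apply squeeze_zero (fun _ => norm_nonneg _) (fun a => hdiff a b)
    have h1 : Tendsto (fun a : ℝ => |max a 0 - max b 0|) (𝓝 b) (𝓝[≥] 0) := by
      rw [tendsto_nhdsWithin_iff]
      refine ⟨?_, Eventually.of_forall fun a => mem_Ici.2 (abs_nonneg _)⟩
      have : Continuous (fun a : ℝ => |max a 0 - max b 0|) := by fun_prop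
      simpa using this.tendsto b
    have h2 := ((hPsc u).comp h1).sub_const u |>.norm
    simpa using h2
  have hcand : ∀ t, 0 < t → cand P ν uφ u t = ∫ s, hIn F ν uφ t s := by
    intro t ht
    rw [cand, if_neg ht.ne', ← integral_indicator measurableSet_Ioo,
      ← integral_sub_left_eq_self _ volume t]
    congr 1
    ext1 s
    rw [indic_flip, hIn]
    by_cases h : s ∈ Ioo 0 t
    · rw [indicator_of_mem h, indicator_of_mem h, sub_sub_cancel, gIn]
      congr 1
      apply setIntegral_congr_fun measurableSet_Ioi
      intro r hr
      have hr : s < r := hr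
      simp only [hFdef]
      rw [max_eq_left (by linarith [h.1, h.2])]
    · rw [indicator_of_notMem h, indicator_of_notMem h]
  have hc : ContinuousOn (cand P ν uφ u) (Ici 0) := by
    intro t ht
    rcases (show (0:ℝ) ≤ t from ht).eq_or_lt with rfl | ht
    · rw [← continuousWithinAt_Ioi_iff_Ici, ContinuousWithinAt]
      have h0 : cand P ν uφ u 0 = F 0 := by simp [cand, hFdef, hP0]
      rw [h0]
      apply (cont_zero hF hFC hνpos hfin huφ0 huφm hrenew).congr'
      filter_upwards [self_mem_nhdsWithin] with t ht using (hcand t ht).symm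
    · apply ContinuousAt.continuousWithinAt
      rw [ContinuousAt, hcand t ht]
      apply (cont_pos hF hFC hfin huφ0 huφm huφmono hrenew ht).congr'
      filter_upwards [Ioi_mem_nhds ht] with t ht using (hcand t ht).symm
  have hb : ContinuousOn (fun q : E × ℝ => (cand P ν uφ u q.2).toBCF) {q : E × ℝ | 0 ≤ q.2} :=
    ZeroAtInftyContinuousMap.isometry_toBCF.continuous.comp_continuousOn
      (hc.comp continuous_snd.continuousOn (fun q hq => hq))
  exact (continuous_eval (F := BoundedContinuousFunction E ℝ)).comp_continuousOn
    (hb.prodMk continuous_fst.continuousOn)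
end

section
/- Auxiliary lemma, part (c): for every u in D(G) and every x in E, the function t ↦ Q(t)(x) is absolutely continuous on every compact subinterval of [0,∞), and there exists a constant C > 0, depending only on ν and u^φ, such that for almost every t > 0, sup_{x∈E} |∂_t Q(t)(x)| ≤ C (‖u‖∞ + ‖Gu‖∞) u^φ(t). -/
open MeasureTheory Set Filter Topology
open scoped ZeroAtInfty

lemma aux_swap_inner (m : Measure ℝ) [SFinite m] (hm0 : ∀ᵐ r ∂m, 0 < r)
    (hmi : Integrable (fun r : ℝ => min 1 r) m) (hmf : ∀ a : ℝ, 0 < a → m (Ioi a) ≠ ⊤)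
    (q k : ℝ → ℝ) (hk : Continuous k) (B : ℝ) (hB : ∀ s, |k s| ≤ B)
    (hqk : ∀ a b : ℝ, 0 ≤ a → a ≤ b → q b - q a = ∫ s in a..b, k s)
    (t h : ℝ) (hh : 0 < h) (hht : h < t) :
    Integrable (fun r => q (min (h + r) t) - q h) m ∧
    ∫ r, (q (min (h + r) t) - q h) ∂m = ∫ s in Ioo h t, k s * m.real (Ioi (s - h)) := by
  have hB0 : 0 ≤ B := (abs_nonneg _).trans (hB 0)
  set S : Set (ℝ × ℝ) := {p | p.2 < h + p.1} with hS
  have hSm : MeasurableSet S := measurableSet_lt (by fun_prop) (by fun_prop)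
  set f : ℝ × ℝ → ℝ := S.indicator (fun p => k p.2) with hf
  have hfm : Measurable f := (by fun_prop : Measurable (fun p : ℝ × ℝ => k p.2)).indicator hSm
  have e1 : ∀ r, 0 < r → ∀ φ : ℝ → ℝ, ∫ s in Ioo h t, S.indicator (fun p => φ p.2) (r, s)
      = ∫ s in h..(min (h + r) t), φ s := by
    intro r hr φ
    have hle : h ≤ min (h + r) t := le_min (by linarith) hht.le
    rw [intervalIntegral.integral_of_le hle, integral_Ioc_eq_integral_Ioo]
    have : (fun s => S.indicator (fun p => φ p.2) (r, s)) = (Iio (h + r)).indicator φ := by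
      funext s
      simp only [Set.indicator, hS, mem_ofPred_eq, mem_Iio]
    rw [this, setIntegral_indicator measurableSet_Iio]
    congr 2
    ext s; simp [and_assoc, and_comm]
  have hint : Integrable f (m.prod (volume.restrict (Ioo h t))) := by
    rw [integrable_prod_iff hfm.aestronglyMeasurable]
    constructor
    · refine Eventually.of_forall fun r => ?_
      refine Integrable.mono' (g := fun _ => B) (integrable_const B) ?_ ?_
      · exact (hfm.comp (by fun_prop : Measurable fun s : ℝ => (r, s))).aestronglyMeasurable
      · refine Eventually.of_forall fun s => ?_
        simp only [hf]
        refine (norm_indicator_le_norm_self _ _).trans ?_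
        exact hB s
    · refine Integrable.mono' (g := fun r => (B * (1 + (t - h))) * min 1 r) (hmi.const_mul _) ?_ ?_
      · exact (hfm.norm.stronglyMeasurable.integral_prod_right
          (ν := volume.restrict (Ioo h t))).aestronglyMeasurable
      · filter_upwards [hm0] with r hr
        have : ∀ s, ‖f (r, s)‖ = S.indicator (fun p => ‖k p.2‖) (r, s) := by
          intro s; simp only [hf]; rw [norm_indicator_eq_indicator_norm]
        simp_rw [this]
        rw [e1 r hr (fun s => ‖k s‖)]
        have hle : h ≤ min (h + r) t := le_min (by linarith) hht.le
        have := intervalIntegral.norm_integral_le_of_norm_le_const (a := h) (b := min (h + r) t)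
          (f := fun s => ‖k s‖) (C := B) (fun s _ => by simpa using hB s)
        refine this.trans ?_
        rw [abs_of_nonneg (by linarith), mul_assoc]
        refine mul_le_mul_of_nonneg_left ?_ hB0
        rcases le_total 1 r with h1 | h1
        · rw [min_eq_left h1]; have := min_le_right (h + r) t; linarith
        · rw [min_eq_right h1]; have := min_le_left (h + r) t; nlinarith
  have e2 : (fun r => q (min (h + r) t) - q h) =ᵐ[m]
      fun r => ∫ s in Ioo h t, f (r, s) := by
    filter_upwards [hm0] with r hr
    rw [hqk h _ hh.le (le_min (by linarith) hht.le), ← e1 r hr k]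
  refine ⟨hint.integral_prod_left.congr e2.symm, ?_⟩
  rw [integral_congr_ae e2]
  rw [integral_integral_swap (f := fun r s => f (r, s)) hint]
  refine setIntegral_congr_fun measurableSet_Ioo fun s hs => ?_
  have : (fun r => f (r, s)) = (Ioi (s - h)).indicator (fun _ => k s) := by
    funext r
    simp only [hf, Set.indicator, hS, mem_ofPred_eq, mem_Ioi, sub_lt_iff_lt_add']
  simp only [this]
  rw [integral_indicator measurableSet_Ioi, setIntegral_const, smul_eq_mul, mul_comm]

lemma aux_renew_real (m : Measure ℝ) (hmf : ∀ a : ℝ, 0 < a → m (Ioi a) ≠ ⊤)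
    (w : ℝ → ℝ) (hw : Measurable w) (hw0 : ∀ t : ℝ, 0 < t → 0 ≤ w t)
    (hren : ∀ t : ℝ, 0 < t →
      ∫⁻ h in Set.Ioo 0 t, m (Set.Ioi (t - h)) * ENNReal.ofReal (w h) = 1)
    (t : ℝ) (ht : 0 < t) :
    IntegrableOn (fun h => m.real (Ioi (t - h)) * w h) (Ioo 0 t) ∧
    ∫ h in Ioo 0 t, m.real (Ioi (t - h)) * w h = 1 := by
  have hNm : Measurable (fun s => m (Ioi s)) :=
    (show Antitone (fun s => m (Ioi s)) from
      fun a b hab => measure_mono (Ioi_subset_Ioi hab)).measurable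
  have hmeas : Measurable (fun h => m.real (Ioi (t - h)) * w h) := by
    have : Measurable (fun s => m.real (Ioi s)) := hNm.ennreal_toReal
    exact (this.comp (by fun_prop : Measurable fun h => t - h)).mul hw
  have hnn : 0 ≤ᵐ[volume.restrict (Ioo 0 t)] (fun h => m.real (Ioi (t - h)) * w h) := by
    filter_upwards [ae_restrict_mem measurableSet_Ioo] with h hh
    exact mul_nonneg measureReal_nonneg (hw0 h hh.1)
  have hl : ∫⁻ h in Ioo 0 t, ENNReal.ofReal (m.real (Ioi (t - h)) * w h) = 1 := by
    rw [← hren t ht]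
    refine setLIntegral_congr_fun measurableSet_Ioo fun h hh => ?_
    rw [ENNReal.ofReal_mul measureReal_nonneg, ofReal_measureReal (hmf _ (by linarith [hh.2]))]
  constructor
  · refine (lintegral_ofReal_ne_top_iff_integrable hmeas.aestronglyMeasurable hnn).1 ?_
    rw [hl]; simp
  · rw [integral_eq_lintegral_of_nonneg_ae hnn hmeas.aestronglyMeasurable, hl]; simp

lemma aux_scalar (m : Measure ℝ) [SFinite m] (hm0 : ∀ᵐ r ∂m, 0 < r)
    (hmi : Integrable (fun r : ℝ => min 1 r) m) (hmf : ∀ a : ℝ, 0 < a → m (Ioi a) ≠ ⊤)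
    (w : ℝ → ℝ) (hw : Measurable w) (hw0 : ∀ t : ℝ, 0 < t → 0 ≤ w t)
    (hren : ∀ t : ℝ, 0 < t →
      ∫⁻ h in Set.Ioo 0 t, m (Set.Ioi (t - h)) * ENNReal.ofReal (w h) = 1)
    (q k : ℝ → ℝ) (hk : Continuous k) (B : ℝ) (hB : ∀ s, |k s| ≤ B)
    (hqk : ∀ a b : ℝ, 0 ≤ a → a ≤ b → q b - q a = ∫ s in a..b, k s)
    (t : ℝ) (ht : 0 < t)
    (hqi : ∀ h ∈ Ioo 0 t, IntegrableOn (fun r => q (r + h)) (Ioi (t - h)) m)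
    (hQi : IntegrableOn (fun h => w h * ∫ r in Ioi (t - h), q (r + h) ∂m) (Ioo 0 t)) :
    IntegrableOn (fun h => w h * ∫ r, (q (h + r) - q h) ∂m) (Ioc 0 t) ∧
    ∫ h in Ioo 0 t, w h * ∫ r in Ioi (t - h), q (r + h) ∂m
      = q 0 + ∫ h in Ioc 0 t, w h * ∫ r, (q (h + r) - q h) ∂m := by
  have hB0 : 0 ≤ B := (abs_nonneg _).trans (hB 0)
  have hNm : Measurable (fun s => m.real (Ioi s)) :=
    (show Antitone (fun s => m (Ioi s)) from
      fun a b hab => measure_mono (Ioi_subset_Ioi hab)).measurable.ennreal_toReal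
  -- second swap
  set S : Set (ℝ × ℝ) := {p | 0 < p.2 ∧ p.2 < p.1} with hS
  have hSm : MeasurableSet S :=
    (measurableSet_lt measurable_const measurable_snd).inter
      (measurableSet_lt measurable_snd measurable_fst)
  -- p = (s, h)
  set f : ℝ × ℝ → ℝ := S.indicator (fun p => k p.1 * (m.real (Ioi (p.1 - p.2)) * w p.2)) with hf
  have hfm : Measurable f := by
    refine Measurable.indicator ?_ hSm
    exact (by fun_prop : Measurable (fun p : ℝ × ℝ => k p.1)).mul
      ((hNm.comp (by fun_prop : Measurable (fun p : ℝ × ℝ => p.1 - p.2))).mul (by fun_prop))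
  have hfs : ∀ s ∈ Ioo 0 t, (fun h => f (s, h)) =
      (Ioo 0 s).indicator (fun h => k s * (m.real (Ioi (s - h)) * w h)) := by
    intro s hs
    funext h
    simp only [hf, Set.indicator, hS, mem_ofPred_eq, mem_Ioo]
  have hsub : ∀ s ∈ Ioo 0 t, Ioo 0 t ∩ Ioo 0 s = Ioo 0 s := by
    intro s hs
    exact inter_eq_right.2 (Ioo_subset_Ioo_right hs.2.le)
  have hint : Integrable f ((volume.restrict (Ioo 0 t)).prod (volume.restrict (Ioo 0 t))) := by
    rw [integrable_prod_iff hfm.aestronglyMeasurable]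
    constructor
    · filter_upwards [ae_restrict_mem measurableSet_Ioo] with s hs
      rw [hfs s hs, integrable_indicator_iff measurableSet_Ioo, IntegrableOn,
        Measure.restrict_restrict measurableSet_Ioo, inter_comm, hsub s hs]
      exact (aux_renew_real m hmf w hw hw0 hren s hs.1).1.const_mul _
    · refine Integrable.mono' (g := fun _ => B) (integrable_const B) ?_ ?_
      · exact (hfm.norm.stronglyMeasurable.integral_prod_right
          (ν := volume.restrict (Ioo 0 t))).aestronglyMeasurable
      · filter_upwards [ae_restrict_mem measurableSet_Ioo] with s hs
        have : (fun h => ‖f (s, h)‖) =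
            (Ioo 0 s).indicator (fun h => |k s| * (m.real (Ioi (s - h)) * w h)) := by
          funext h
          have := congrFun (hfs s hs) h
          rw [this, norm_indicator_eq_indicator_norm]
          by_cases hh : h ∈ Ioo 0 s
          · simp only [indicator_of_mem hh]
            rw [norm_mul, Real.norm_eq_abs, Real.norm_of_nonneg
              (mul_nonneg measureReal_nonneg (hw0 h hh.1))]
          · simp only [indicator_of_notMem hh]
        rw [this, setIntegral_indicator measurableSet_Ioo, hsub s hs, integral_const_mul,
          (aux_renew_real m hmf w hw hw0 hren s hs.1).2]
        simpa using hB s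
  have hF2 : ∀ h ∈ Ioo 0 t, ∫ s in Ioo 0 t, f (s, h)
      = w h * ∫ r, (q (min (h + r) t) - q h) ∂m := by
    intro h hh
    rw [(aux_swap_inner m hm0 hmi hmf q k hk B hB hqk t h hh.1 hh.2).2]
    have : (fun s => f (s, h)) =
      (Ioi h).indicator (fun s => w h * (k s * m.real (Ioi (s - h)))) := by
      funext s
      simp only [hf, Set.indicator, hS, mem_ofPred_eq, mem_Ioi, hh.1, true_and]
      split_ifs <;> ring
    rw [this, setIntegral_indicator measurableSet_Ioi, ← integral_const_mul]
    congr 2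
    ext s; simp only [mem_inter_iff, mem_Ioo, mem_Ioi]
    constructor
    · rintro ⟨⟨_, b⟩, c⟩; exact ⟨c, b⟩
    · rintro ⟨a, b⟩; exact ⟨⟨hh.1.trans a, b⟩, a⟩
  have hF2i : IntegrableOn (fun h => w h * ∫ r, (q (min (h + r) t) - q h) ∂m) (Ioo 0 t) := by
    refine hint.integral_prod_right.congr ?_
    filter_upwards [ae_restrict_mem measurableSet_Ioo] with h hh using hF2 h hh
  have hF2v : ∫ h in Ioo 0 t, w h * ∫ r, (q (min (h + r) t) - q h) ∂m = q t - q 0 := by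
    rw [← setIntegral_congr_fun measurableSet_Ioo hF2]
    rw [← integral_integral_swap (f := fun s h => f (s, h)) hint]
    rw [hqk 0 t le_rfl ht.le, intervalIntegral.integral_of_le ht.le, integral_Ioc_eq_integral_Ioo]
    refine setIntegral_congr_fun measurableSet_Ioo fun s hs => ?_
    simp only [hfs s hs]
    rw [setIntegral_indicator measurableSet_Ioo, hsub s hs, integral_const_mul,
          (aux_renew_real m hmf w hw hw0 hren s hs.1).2, mul_one]
  have hdec : ∀ h ∈ Ioo 0 t, w h * ∫ r, (q (h + r) - q h) ∂m =
      (w h * ∫ r in Ioi (t - h), q (r + h) ∂m) - q t * (m.real (Ioi (t - h)) * w h)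
      + w h * ∫ r, (q (min (h + r) t) - q h) ∂m := by
    intro h hh
    have hfin := hmf (t - h) (by linarith [hh.2])
    have hc : IntegrableOn (fun _ : ℝ => q t) (Ioi (t - h)) m :=
      integrableOn_const hfin
    have hd : IntegrableOn (fun r => q (r + h) - q t) (Ioi (t - h)) m := (hqi h hh).sub hc
    have e : (fun r => q (h + r) - q h) = fun r =>
      (Ioi (t - h)).indicator (fun r => q (r + h) - q t) r + (q (min (h + r) t) - q h) := by
      funext r
      by_cases hr : r ∈ Ioi (t - h)
      · rw [indicator_of_mem hr, min_eq_right (by have := mem_Ioi.1 hr; linarith), add_comm h r]; ring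
      · rw [indicator_of_notMem hr, min_eq_left (by have := not_lt.1 (fun hc => hr (mem_Ioi.2 hc)); linarith)]; ring
    rw [e, integral_add ((integrable_indicator_iff measurableSet_Ioi).2 hd)
      (aux_swap_inner m hm0 hmi hmf q k hk B hB hqk t h hh.1 hh.2).1,
      integral_indicator measurableSet_Ioi, integral_sub (hqi h hh) hc, setIntegral_const,
      smul_eq_mul]
    ring
  obtain ⟨hr1, hr2⟩ := aux_renew_real m hmf w hw hw0 hren t ht
  have hA : IntegrableOn (fun h => (w h * ∫ r in Ioi (t - h), q (r + h) ∂m)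
      - q t * (m.real (Ioi (t - h)) * w h)) (Ioo 0 t) := hQi.sub (hr1.const_mul _)
  constructor
  · rw [integrableOn_Ioc_iff_integrableOn_Ioo]
    refine (hA.add hF2i).congr ?_
    filter_upwards [ae_restrict_mem measurableSet_Ioo] with h hh using (hdec h hh).symm
  · rw [integral_Ioc_eq_integral_Ioo, setIntegral_congr_fun measurableSet_Ioo hdec,
      integral_add hA hF2i, integral_sub hQi (hr1.const_mul _), integral_const_mul, hr2, hF2v]
    ring

lemma aux_sfinite (m : Measure ℝ) (hm0 : ∀ᵐ r ∂m, 0 < r)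
    (hl : ∫⁻ s, ENNReal.ofReal (min 1 s) ∂m ≠ ⊤) : SFinite m := by
  have hmeas : Measurable (fun s : ℝ => ENNReal.ofReal (min 1 s)) := by fun_prop
  have := isFiniteMeasure_withDensity hl
  have e := withDensity_inv_same (μ := m) hmeas
    (by filter_upwards [hm0] with r hr; simpa using hr) (by simp)
  rw [← e]
  infer_instance

noncomputable def evalC0 {E : Type*} [TopologicalSpace E] (x : E) : C₀(E, ℝ) →L[ℝ] ℝ :=
  LinearMap.mkContinuous
    { toFun := fun f => f x
      map_add' := fun _ _ => rfl
      map_smul' := fun _ _ => rfl } 1 (fun f => by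
        rw [one_mul]
        exact (BoundedContinuousFunction.norm_coe_le_norm f.toBCF x))

lemma evalC0_apply {E : Type*} [TopologicalSpace E] (x : E) (f : C₀(E, ℝ)) : evalC0 x f = f x := rfl

lemma aux_sg_cont {X : Type*} [NormedAddCommGroup X] [NormedSpace ℝ X]
    (P : ℝ → X →L[ℝ] X)
    (hPsg : ∀ s t : ℝ, 0 ≤ s → 0 ≤ t → P (s + t) = (P s).comp (P t))
    (hPcon : ∀ t : ℝ, 0 ≤ t → ∀ f : X, ‖P t f‖ ≤ ‖f‖)
    (hPsc : ∀ f : X, Tendsto (fun t => P t f) (𝓝[≥] (0 : ℝ)) (𝓝 f)) (f : X) :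
    Continuous (fun s : ℝ => P (max s 0) f) := by
  have key : ∀ a b : ℝ, 0 ≤ a → 0 ≤ b → ‖P a f - P b f‖ ≤ ‖P |a - b| f - f‖ := by
    have aux : ∀ a b : ℝ, 0 ≤ a → a ≤ b → ‖P b f - P a f‖ ≤ ‖P (b - a) f - f‖ := by
      intro a b ha hab
      have : P b f = P a (P (b - a) f) := by
        have := hPsg a (b - a) ha (by linarith)
        rw [add_sub_cancel] at this
        rw [this]; rfl
      rw [this, ← map_sub]
      exact hPcon a ha _
    intro a b ha hb
    rcases le_total a b with h | h
    · rw [norm_sub_rev, abs_sub_comm, abs_of_nonneg (by linarith)]; exact aux a b ha h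
    · rw [abs_of_nonneg (by linarith)]; exact aux b a hb h
  rw [continuous_iff_continuousAt]
  intro s
  rw [ContinuousAt, tendsto_iff_norm_sub_tendsto_zero]
  have h1 : Tendsto (fun r : ℝ => |max r 0 - max s 0|) (𝓝 s) (𝓝[≥] 0) := by
    refine tendsto_nhdsWithin_iff.2 ⟨?_, Eventually.of_forall fun r => mem_Ici.2 (abs_nonneg _)⟩
    have : Continuous (fun r : ℝ => |max r 0 - max s 0|) := by fun_prop
    simpa using this.tendsto s
  have h2 := (tendsto_iff_norm_sub_tendsto_zero.1 (hPsc f)).comp h1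
  exact squeeze_zero (fun _ => norm_nonneg _)
    (fun r => key _ _ (le_max_right _ _) (le_max_right _ _)) h2

lemma aux_sg_ftc {X : Type*} [NormedAddCommGroup X] [NormedSpace ℝ X] [CompleteSpace X]
    (P : ℝ → X →L[ℝ] X)
    (hPsg : ∀ s t : ℝ, 0 ≤ s → 0 ≤ t → P (s + t) = (P s).comp (P t))
    (hPcon : ∀ t : ℝ, 0 ≤ t → ∀ f : X, ‖P t f‖ ≤ ‖f‖)
    (hPsc : ∀ f : X, Tendsto (fun t => P t f) (𝓝[≥] (0 : ℝ)) (𝓝 f)) (u Gu : X)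
    (hG : Tendsto (fun h : ℝ => h⁻¹ • (P h u - u)) (𝓝[>] (0 : ℝ)) (𝓝 Gu))
    (a b : ℝ) (ha : 0 ≤ a) (hab : a ≤ b) :
    P (max b 0) u - P (max a 0) u = ∫ s in a..b, P (max s 0) Gu := by
  symm
  have hc := aux_sg_cont P hPsg hPcon hPsc
  refine intervalIntegral.integral_eq_sub_of_hasDeriv_right (f := fun s => P (max s 0) u)
    (hc u).continuousOn ?_ ((hc Gu).intervalIntegrable _ _)
  intro s hs
  rw [min_eq_left hab] at hs
  have hs0 : 0 ≤ s := ha.trans hs.1.le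
  rw [hasDerivWithinAt_iff_tendsto_slope' (by simp)]
  have h1 : Tendsto (fun r : ℝ => r - s) (𝓝[>] s) (𝓝[>] 0) := by
    refine tendsto_nhdsWithin_iff.2 ⟨?_, ?_⟩
    · have : Continuous (fun r : ℝ => r - s) := by fun_prop
      simpa using (this.tendsto s).mono_left nhdsWithin_le_nhds
    · filter_upwards [self_mem_nhdsWithin] with r hr
      simpa using hr
  have h2 := ((P (max s 0)).continuous.tendsto Gu).comp (hG.comp h1)
  refine h2.congr' ?_
  filter_upwards [self_mem_nhdsWithin] with r hr
  have hr' : s < r := hr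
  have := hPsg s (r - s) hs0 (by linarith)
  rw [add_sub_cancel] at this
  simp only [Function.comp, slope, vsub_eq_sub]
  rw [max_eq_left hs0, max_eq_left (hs0.trans hr'.le), this]
  simp

theorem ctrw_overshoot_aux_c
    {E : Type*} [MetricSpace E] [TopologicalSpace.SeparableSpace E] [LocallyCompactSpace E]
    (P : ℝ → C₀(E, ℝ) →L[ℝ] C₀(E, ℝ))
    (hP0 : P 0 = ContinuousLinearMap.id ℝ C₀(E, ℝ))
    (hPsg : ∀ s t : ℝ, 0 ≤ s → 0 ≤ t → P (s + t) = (P s).comp (P t))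
    (hPpos : ∀ t : ℝ, 0 ≤ t → ∀ f : C₀(E, ℝ), (∀ x, 0 ≤ f x) → ∀ x, 0 ≤ P t f x)
    (hPcon : ∀ t : ℝ, 0 ≤ t → ∀ f : C₀(E, ℝ), ‖P t f‖ ≤ ‖f‖)
    (hPsc : ∀ f : C₀(E, ℝ), Tendsto (fun t => P t f) (𝓝[≥] (0 : ℝ)) (𝓝 f))
    (ν : Measure ℝ)
    (hν1 : ∫⁻ s in Set.Ioi (0 : ℝ), ENNReal.ofReal (min 1 s) ∂ν ≠ ⊤)
    (hνinf : ν (Set.Ioi (0 : ℝ)) = ⊤)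
    (hνpos : ∀ t : ℝ, 0 < t → 0 < ν (Set.Ioi t))
    (uφ : ℝ → ℝ) (huφm : Measurable uφ)
    (huφ0 : ∀ t : ℝ, 0 < t → 0 ≤ uφ t)
    (huφmono : ∀ s t : ℝ, 0 < s → s ≤ t → uφ t ≤ uφ s)
    (hrenew : ∀ t : ℝ, 0 < t →
      ∫⁻ h in Set.Ioo 0 t, ν (Set.Ioi (t - h)) * ENNReal.ofReal (uφ h) = 1)
    (hlog : ∫⁻ t in Set.Ioo (0 : ℝ) 1, ENNReal.ofReal (|Real.log t| * uφ t) ≠ ⊤) :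
    ∃ C : ℝ, 0 < C ∧
      ∀ u Gu : C₀(E, ℝ),
        Tendsto (fun h : ℝ => h⁻¹ • (P h u - u)) (𝓝[>] (0 : ℝ)) (𝓝 Gu) →
        ∃ g : ℝ → E → ℝ,
          (∀ (x : E) (T : ℝ), 0 < T →
            IntegrableOn (fun s : ℝ => g s x) (Set.Ioc 0 T) volume) ∧
          (∀ (x : E) (t : ℝ), 0 ≤ t →
            (cand P ν uφ u t) x = u x + ∫ s in Set.Ioc (0 : ℝ) t, g s x) ∧
          (∀ᵐ t ∂(volume.restrict (Set.Ioi (0 : ℝ))),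
            ∀ x : E, |g t x| ≤ C * (‖u‖ + ‖Gu‖) * uφ t) := by
  classical
  set m : Measure ℝ := ν.restrict (Ioi 0) with hm
  have hm0 : ∀ᵐ r ∂m, 0 < r := ae_restrict_mem measurableSet_Ioi
  have hsf : SFinite m := aux_sfinite m hm0 hν1
  have hmi : Integrable (fun r : ℝ => min 1 r) m := by
    refine (lintegral_ofReal_ne_top_iff_integrable (by fun_prop) ?_).1 hν1
    filter_upwards [hm0] with r hr
    exact le_min zero_le_one hr.le
  have hmr : ∀ a : ℝ, 0 < a → m.restrict (Ioi a) = ν.restrict (Ioi a) := by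
    intro a ha
    rw [hm, Measure.restrict_restrict measurableSet_Ioi,
      inter_eq_left.2 (Ioi_subset_Ioi ha.le)]
  have hma : ∀ a : ℝ, 0 < a → m (Ioi a) = ν (Ioi a) := by
    intro a ha
    rw [hm, Measure.restrict_apply measurableSet_Ioi, inter_eq_left.2 (Ioi_subset_Ioi ha.le)]
  have hmf : ∀ a : ℝ, 0 < a → m (Ioi a) ≠ ⊤ := by
    intro a ha
    have h0 : 0 < min 1 a := lt_min one_pos ha
    have := hmi.measure_ge_lt_top h0
    refine ((measure_mono ?_).trans_lt this).ne
    intro r hr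
    exact mem_ofPred_eq ▸ min_le_min le_rfl (le_of_lt (mem_Ioi.1 hr))
  have hren : ∀ t : ℝ, 0 < t →
      ∫⁻ h in Set.Ioo 0 t, m (Set.Ioi (t - h)) * ENNReal.ofReal (uφ h) = 1 := by
    intro t ht
    rw [← hrenew t ht]
    refine setLIntegral_congr_fun measurableSet_Ioo fun h hh => ?_
    rw [hma _ (by linarith [hh.2])]
  have hI0 : 0 ≤ ∫ r, min 1 r ∂m := integral_nonneg_of_ae (by
    filter_upwards [hm0] with r hr
    exact le_min zero_le_one hr.le)
  refine ⟨2 * (∫ r, min 1 r ∂m) + 1, by linarith, ?_⟩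
  intro u Gu hG
  have hc := aux_sg_cont P hPsg hPcon hPsc
  set q : ℝ → C₀(E, ℝ) := fun s => P (max s 0) u with hq
  set k : ℝ → C₀(E, ℝ) := fun s => P (max s 0) Gu with hk
  have hqc : Continuous q := hc u
  have hkc : Continuous k := hc Gu
  have hqb : ∀ s, ‖q s‖ ≤ ‖u‖ := fun s => hPcon _ (le_max_right _ _) _
  have hkb : ∀ s, ‖k s‖ ≤ ‖Gu‖ := fun s => hPcon _ (le_max_right _ _) _
  have hqk : ∀ a b : ℝ, 0 ≤ a → a ≤ b → q b - q a = ∫ s in a..b, k s :=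
    aux_sg_ftc P hPsg hPcon hPsc u Gu hG
  have hqi : ∀ t h : ℝ, h < t → IntegrableOn (fun r => q (r + h)) (Ioi (t - h)) m := by
    intro t h hht
    have : IsFiniteMeasure (m.restrict (Ioi (t - h))) :=
      ⟨by rw [Measure.restrict_apply_univ]; exact (hmf _ (by linarith)).lt_top⟩
    refine Integrable.mono' (integrable_const ‖u‖) ?_ (Eventually.of_forall fun r => hqb _)
    exact (hqc.comp (by fun_prop : Continuous fun r : ℝ => r + h)).aestronglyMeasurable
  have hQi : ∀ t : ℝ, 0 < t →
      IntegrableOn (fun h => uφ h • ∫ r in Ioi (t - h), q (r + h) ∂m) (Ioo 0 t) := by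
    intro t ht
    have hmeas : StronglyMeasurable (fun h => ∫ r in Ioi (t - h), q (r + h) ∂m) := by
      have hS : MeasurableSet {p : ℝ × ℝ | t - p.1 < p.2} :=
        measurableSet_lt (by fun_prop) (by fun_prop)
      have h1 : StronglyMeasurable ({p : ℝ × ℝ | t - p.1 < p.2}.indicator
          (fun p => q (p.2 + p.1))) :=
        (hqc.comp (by fun_prop : Continuous fun p : ℝ × ℝ => p.2 + p.1)).stronglyMeasurable.indicator hS
      have h2 := h1.integral_prod_right' (ν := m)
      convert h2 using 2 with h
      rw [← integral_indicator measurableSet_Ioi]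
      rfl
    have hr1 := (aux_renew_real m hmf uφ huφm huφ0 hren t ht).1
    refine Integrable.mono' (hr1.const_mul ‖u‖)
      (huφm.aestronglyMeasurable.smul hmeas.aestronglyMeasurable) ?_
    filter_upwards [ae_restrict_mem measurableSet_Ioo] with h hh
    rw [norm_smul, Real.norm_of_nonneg (huφ0 h hh.1)]
    have hfin := hmf (t - h) (by linarith [hh.2])
    have := norm_setIntegral_le_of_norm_le_const (f := fun r => q (r + h)) (C := ‖u‖)
      hfin.lt_top (fun r _ => hqb _)
    calc _ ≤ uφ h * (‖u‖ * m.real (Ioi (t - h))) :=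
          mul_le_mul_of_nonneg_left this (huφ0 h hh.1)
      _ = _ := by ring
  have hcand : ∀ t : ℝ, 0 < t → cand P ν uφ u t =
      ∫ h in Ioo 0 t, uφ h • ∫ r in Ioi (t - h), q (r + h) ∂m := by
    intro t ht
    rw [cand, if_neg ht.ne']
    refine setIntegral_congr_fun measurableSet_Ioo fun h hh => ?_
    rw [hmr _ (by linarith [hh.2])]
    congr 1
    refine setIntegral_congr_fun measurableSet_Ioi fun r hr => ?_
    have : t - h < r := hr
    simp only [hq]
    rw [max_eq_left (by linarith [hh.1, hh.2])]
  have main : ∀ (x : E) (t : ℝ), 0 < t →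
      IntegrableOn (fun h => uφ h * ∫ r, (q (h + r) x - q h x) ∂m) (Ioc 0 t) ∧
      ∫ h in Ioo 0 t, uφ h * ∫ r in Ioi (t - h), q (r + h) x ∂m
        = q 0 x + ∫ h in Ioc 0 t, uφ h * ∫ r, (q (h + r) x - q h x) ∂m := by
    intro x t ht
    refine aux_scalar m hm0 hmi hmf uφ huφm huφ0 hren (fun s => q s x) (fun s => k s x)
      ((evalC0 x).continuous.comp hkc) ‖Gu‖ (fun s => (abs_apply_le x _).trans (hkb s)) ?_ t ht ?_ ?_
    · intro a b ha hab
      have := congrArg (evalC0 x) (hqk a b ha hab)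
      rw [← ContinuousLinearMap.intervalIntegral_comp_comm _ (hkc.intervalIntegrable _ _)] at this
      exact this
    · intro h hh
      exact (evalC0 x).integrable_comp (hqi t h hh.2)
    · refine ((evalC0 x).integrable_comp (hQi t ht)).congr ?_
      filter_upwards [ae_restrict_mem measurableSet_Ioo] with h hh
      rw [map_smul, ← ContinuousLinearMap.integral_comp_comm _ (hqi t h hh.2)]
      rfl
  refine ⟨fun h x => uφ h * ∫ r, (q (h + r) x - q h x) ∂m, fun x T hT => (main x T hT).1, ?_, ?_⟩
  · intro x t ht
    rcases ht.eq_or_lt with rfl | ht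
    · simp [cand]
    · have e : q 0 x = u x := by simp [hq, hP0]
      rw [← e, ← (main x t ht).2, hcand t ht, ← evalC0_apply,
        ← ContinuousLinearMap.integral_comp_comm _ (hQi t ht)]
      refine setIntegral_congr_fun measurableSet_Ioo fun h hh => ?_
      rw [map_smul, ← ContinuousLinearMap.integral_comp_comm _ (hqi t h hh.2)]
      rfl
  · filter_upwards [ae_restrict_mem measurableSet_Ioi] with t ht x
    have ht0 : 0 < t := ht
    have hun := norm_nonneg u
    have hGn := norm_nonneg Gu
    have hb : ∀ᵐ r ∂m, ‖q (t + r) x - q t x‖ ≤ 2 * (‖u‖ + ‖Gu‖) * min 1 r := by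
      filter_upwards [hm0] with r hr
      have h0 : ‖q (t + r) x - q t x‖ ≤ ‖q (t + r) - q t‖ := abs_apply_le x (q (t + r) - q t)
      rcases le_total 1 r with h1 | h1
      · rw [min_eq_left h1]
        have := norm_sub_le (q (t + r)) (q t)
        linarith [hqb (t + r), hqb t]
      · rw [min_eq_right h1]
        have h2 : ‖q (t + r) - q t‖ ≤ ‖Gu‖ * r := by
          rw [hqk t (t + r) ht0.le (by linarith)]
          have := intervalIntegral.norm_integral_le_of_norm_le_const (a := t) (b := t + r)
            (f := k) (C := ‖Gu‖) (fun s _ => hkb s)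
          rwa [add_sub_cancel_left, abs_of_pos hr] at this
        nlinarith [mul_nonneg hun hr.le, mul_nonneg hGn hr.le]
    have hF : |∫ r, (q (t + r) x - q t x) ∂m| ≤ 2 * (‖u‖ + ‖Gu‖) * ∫ r, min 1 r ∂m := by
      rw [← integral_const_mul]
      exact norm_integral_le_of_norm_le (hmi.const_mul _) hb
    have hu := huφ0 t ht0
    rw [abs_mul, abs_of_nonneg hu, mul_comm]
    refine mul_le_mul_of_nonneg_right (hF.trans ?_) hu
    nlinarith
end
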